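/- arXiv:1201.1139 — 2 statements merged into one kernel-verified Lean document; each statement's English description precedes it below -/
import Mathlib

section
/- Let p be a prime number and let H be a symmetric subset of SL₂(𝔽_p) containing the identity and generating SL₂(𝔽_p). Then either the triple product set H^(3) = H·H·H equals SL₂(𝔽_p), or |H^(3)|^3024 ≥ |H|^3025 (i.e. |H^(3)| ≥ |H|^(1+δ) with δ = 1/3024). -/
open Pointwise

instance {n : Type*} [DecidableEq n] [Fintype n] {R : Type*} [CommRing R] [DecidableEq R] :
    DecidableEq (Matrix.SpecialLinearGroup n R) := Subtype.instDecidableEq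

/-!
Suppose `H ^ 3` is not the whole group and let `α = |H ^ 3| / |H|`, which is at least `2`; then `α`
controls the growth of all powers of `H`. A trace identity shows that `H ^ 5` contains a regular
semisimple element `g` of nonzero trace. By a Larsen-Pink inequality, `H ^ 7` has at most about
`α ^ 14 * |H| ^ (2 / 3)` elements with the trace of `g`, so that the torus centralizing `g` contains
about `α ^ (-14) * |H| ^ (1 / 3)` elements of `H ^ 2`. This rich torus is then rich in regular
elements, and the property propagates to all its conjugates: these are about `|F| ^ 2` tori, almost
disjoint, so that `|F| ^ 2 * |H| ^ (1 / 3)` is bounded by `|H ^ 2|` up to powers of `α`. In other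
words `|H|` is at least `|F| ^ 3` up to powers of `α`. On the other hand, nontrivial representations
of `SL(2, F)` have dimension at least `(|F| - 1) / 2`, and Gowers' argument then shows that `|H|` is
at most about `|F| ^ (8 / 3)`. Comparing both estimates bounds `|F|`, hence `|H|`, by a power
of `α`.
-/

/-! ### Growth in groups -/

section Growth

variable {Γ : Type*} [Group Γ] [DecidableEq Γ] {H : Finset Γ}

lemma inv_eq_self_of_forall_inv_mem (hsym : ∀ h ∈ H, h⁻¹ ∈ H) : H⁻¹ = H :=
  Finset.ext fun x ↦ Finset.mem_inv'.trans ⟨fun hx ↦ inv_inv x ▸ hsym _ hx, hsym x⟩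

lemma inv_mem_pow_of_forall_inv_mem (hsym : ∀ h ∈ H, h⁻¹ ∈ H) {n : ℕ} {x : Γ} (hx : x ∈ H ^ n) :
    x⁻¹ ∈ H ^ n := by
  rw [← inv_eq_self_of_forall_inv_mem hsym, inv_pow]
  exact Finset.inv_mem_inv hx

lemma coe_pow_eq_univ_of_pow_succ_subset_pow {n : ℕ} (hsym : ∀ h ∈ H, h⁻¹ ∈ H) (hone : 1 ∈ H)
    (hgen : Subgroup.closure (H : Set Γ) = ⊤) (hsub : H ^ (n + 1) ⊆ H ^ n) :
    (↑(H ^ n) : Set Γ) = Set.univ := by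
  have mul_mem {x y : Γ} (hx : x ∈ H) (hy : y ∈ H ^ n) : x * y ∈ H ^ n :=
    hsub (pow_succ' H n ▸ Finset.mul_mem_mul hx hy)
  refine Set.eq_univ_of_forall fun x ↦ ?_
  have hx : x ∈ Subgroup.closure (H : Set Γ) := hgen ▸ Subgroup.mem_top x
  induction hx using Subgroup.closure_induction_left with
  | one => exact Finset.one_mem_pow hone
  | mul_left x hx y _ ih => exact mul_mem hx ih
  | inv_mul_cancel x hx y _ ih => exact mul_mem (hsym x hx) ih

lemma two_mul_card_le_card_pow_three_of_not_subset (hsym : ∀ h ∈ H, h⁻¹ ∈ H) (hone : 1 ∈ H)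
    (hsub : ¬ H ^ 3 ⊆ H ^ 2) : 2 * H.card ≤ (H ^ 3).card := by
  obtain ⟨g, hg3, hg2⟩ := Finset.not_subset.1 hsub
  obtain ⟨a, ha, k, hk, rfl⟩ := Finset.mem_mul.1 (pow_succ' H 2 ▸ hg3)
  have hdisj : Disjoint (k • H) (a⁻¹ • H) := by
    refine Finset.disjoint_left.2 fun z hz hz' ↦ hg2 ?_
    obtain ⟨y, hy, rfl⟩ := Finset.mem_smul_finset.1 hz
    obtain ⟨y', hy', h⟩ := Finset.mem_smul_finset.1 hz'
    have : a * k = y' * y⁻¹ := by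
      rw [eq_mul_inv_iff_mul_eq, mul_assoc, ← smul_eq_mul (a := k), ← h, smul_eq_mul,
        mul_inv_cancel_left]
    rw [this, pow_two]
    exact Finset.mul_mem_mul hy' (hsym y hy)
  have hsub3 : k • H ∪ a⁻¹ • H ⊆ H ^ 3 := by
    refine Finset.union_subset ?_ ?_
    · exact (Finset.smul_finset_subset_mul hk).trans (pow_succ H 2).ge
    · calc a⁻¹ • H ⊆ H * H := Finset.smul_finset_subset_mul (hsym a ha)
        _ = H ^ 2 := (pow_two H).symm
        _ ⊆ H ^ 3 := Finset.pow_subset_pow_right hone (by norm_num)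
  calc 2 * H.card = (k • H ∪ a⁻¹ • H).card := by
        rw [Finset.card_union_of_disjoint hdisj, Finset.card_smul_finset, Finset.card_smul_finset,
          two_mul]
    _ ≤ (H ^ 3).card := Finset.card_le_card hsub3

lemma two_mul_card_le_card_pow_three (hsym : ∀ h ∈ H, h⁻¹ ∈ H) (hone : 1 ∈ H)
    (hgen : Subgroup.closure (H : Set Γ) = ⊤) (hne : (↑(H ^ 3) : Set Γ) ≠ Set.univ) :
    2 * H.card ≤ (H ^ 3).card := by
  refine two_mul_card_le_card_pow_three_of_not_subset hsym hone fun hsub ↦ hne ?_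
  have huniv := coe_pow_eq_univ_of_pow_succ_subset_pow hsym hone hgen hsub
  exact Set.eq_univ_of_univ_subset (huniv ▸ Finset.coe_subset.2
    (Finset.pow_subset_pow_right hone (by norm_num)))

end Growth

section Commutator

open scoped commutatorElement

lemma commutatorElement_mem_center_of_closure_eq_top {Γ : Type*} [Group Γ] {S : Set Γ}
    (hgen : Subgroup.closure S = ⊤) (hcomm : ∀ x ∈ S, ∀ y ∈ S, ⁅x, y⁆ ∈ Subgroup.center Γ)
    (x y : Γ) : ⁅x, y⁆ ∈ Subgroup.center Γ := by
  let π := QuotientGroup.mk' (Subgroup.center Γ)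
  have commute_iff (x y : Γ) : Commute (π x) (π y) ↔ ⁅x, y⁆ ∈ Subgroup.center Γ := by
    rw [← commutatorElement_eq_one_iff_commute, ← map_commutatorElement]
    exact QuotientGroup.eq_one_iff _
  have commute_of_mem {x : Γ} (hx : ∀ y ∈ S, Commute (π x) (π y)) (y : Γ) :
      Commute (π x) (π y) := by
    have hle : Subgroup.closure S ≤ (Subgroup.centralizer {π x}).comap π :=
      (Subgroup.closure_le _).2 fun y hy ↦ Subgroup.mem_centralizer_singleton_iff.2 (hx y hy).symm
    exact (Subgroup.mem_centralizer_singleton_iff.1 (hle (hgen ▸ Subgroup.mem_top y))).symm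
  exact (commute_iff x y).1 <| commute_of_mem
    (fun y hy ↦ (commute_of_mem (fun z hz ↦ (commute_iff y z).2 (hcomm y hy z hz)) x).symm) y

end Commutator

lemma card_le_card_of_inv_mul_mem {Γ : Type*} [Group Γ] {X S : Finset Γ}
    (h : ∀ x ∈ X, ∀ y ∈ X, x⁻¹ * y ∈ S) :
    X.card ≤ S.card := by
  obtain rfl | ⟨x, hx⟩ := X.eq_empty_or_nonempty
  · exact Nat.zero_le _
  · exact Finset.card_le_card_of_injOn (x⁻¹ * ·) (h x hx) (mul_right_injective x⁻¹).injOn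

/-! ### The natural action of `SL(2, R)` -/

namespace SL2

open Matrix MatrixGroups

section Basic

variable {R : Type*} [CommRing R]

lemma mul_apply (x y : SL(2, R)) (i j : Fin 2) : (x * y) i j = x i 0 * y 0 j + x i 1 * y 1 j := by
  simp [Matrix.mul_apply, Fin.sum_univ_two]

lemma smul_apply (x : SL(2, R)) (v : Fin 2 → R) (i : Fin 2) :
    (x • v) i = x i 0 * v 0 + x i 1 * v 1 := by
  simp [Matrix.SpecialLinearGroup.smul_def, Matrix.mulVec, dotProduct, Fin.sum_univ_two]

lemma det_eq_one (x : SL(2, R)) : x 0 0 * x 1 1 - x 0 1 * x 1 0 = 1 := by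
  rw [← Matrix.det_fin_two, x.2]

lemma coe_inv_eq (x : SL(2, R)) : (x⁻¹).1 = !![x 1 1, -x 0 1; -x 1 0, x 0 0] := by
  rw [Matrix.SpecialLinearGroup.coe_inv, adjugate_fin_two]

lemma trace_conj (x y : SL(2, R)) : (x * y * x⁻¹).1.trace = y.1.trace := by
  rw [Matrix.SpecialLinearGroup.coe_mul, Matrix.trace_mul_comm, ← Matrix.SpecialLinearGroup.coe_mul,
    inv_mul_cancel_left]

lemma coe_transvection_zero_one (b : R) :
    (Matrix.SpecialLinearGroup.transvection (zero_ne_one' (Fin 2)) b).1 = !![1, b; 0, 1] := by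
  ext i j
  fin_cases i <;> fin_cases j <;> simp [Matrix.SpecialLinearGroup.transvection_coe]

lemma coe_transvection_one_zero (b : R) :
    (Matrix.SpecialLinearGroup.transvection (zero_ne_one' (Fin 2)).symm b).1 = !![1, 0; b, 1] := by
  ext i j
  fin_cases i <;> fin_cases j <;> simp [Matrix.SpecialLinearGroup.transvection_coe]

/-- The symplectic form on the plane, preserved by `SL(2, R)`; it vanishes exactly on pairs of
dependent vectors. -/
def cross (v w : Fin 2 → R) : R := v 0 * w 1 - v 1 * w 0

@[simp]
lemma cross_self (v : Fin 2 → R) : cross v v = 0 := by simp only [cross]; ring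

lemma cross_swap (v w : Fin 2 → R) : cross v w = -cross w v := by simp only [cross]; ring

@[simp]
lemma cross_smul_right (c : R) (v w : Fin 2 → R) : cross v (c • w) = c * cross v w := by
  simp only [cross, Pi.smul_apply, smul_eq_mul]; ring

lemma cross_smul_smul (x : SL(2, R)) (v w : Fin 2 → R) : cross (x • v) (x • w) = cross v w := by
  simp only [cross, smul_apply]
  linear_combination (v 0 * w 1 - v 1 * w 0) * det_eq_one x

lemma eq_zero_of_forall_cross_smul_eq_zero [IsReduced R] {v : Fin 2 → R}
    (h : ∀ x : SL(2, R), cross v (x • v) = 0) : v = 0 := by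
  have hupper := h (.transvection (zero_ne_one' (Fin 2)) 1)
  have hlower := h (.transvection (zero_ne_one' (Fin 2)).symm 1)
  simp only [cross, smul_apply, coe_transvection_zero_one, coe_transvection_one_zero, of_apply,
    cons_val_zero, cons_val_one, cons_val', cons_val_fin_one] at hupper hlower
  have h0 : v 0 ^ 2 = 0 := by linear_combination hlower
  have h1 : v 1 ^ 2 = 0 := by linear_combination -hupper
  exact funext (Fin.forall_fin_two.2 ⟨eq_zero_of_pow_eq_zero h0, eq_zero_of_pow_eq_zero h1⟩)

/-- The rank one nilpotent endomorphism `w ↦ cross v w • v` of the plane. -/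
def nilpotentMatrix (v : Fin 2 → R) : Matrix (Fin 2) (Fin 2) R := vecMulVec v ![-v 1, v 0]

lemma nilpotentMatrix_mulVec (v w : Fin 2 → R) : nilpotentMatrix v *ᵥ w = cross v w • v := by
  ext i
  simp only [nilpotentMatrix, vecMulVec_mulVec, dotProduct, Fin.sum_univ_two, cons_val_zero,
    cons_val_one, Pi.smul_apply, MulOpposite.smul_eq_mul_unop, MulOpposite.unop_op, cross,
    smul_eq_mul]
  ring

lemma trace_nilpotentMatrix_mul (v : Fin 2 → R) (x : SL(2, R)) :
    (nilpotentMatrix v * x.1).trace = cross v (x • v) := by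
  simp only [nilpotentMatrix, trace_fin_two, Matrix.mul_apply, vecMulVec_apply, Fin.sum_univ_two,
    cons_val_zero, cons_val_one, cross, smul_apply]
  ring

lemma smul_eq_add_of_coe_eq {u : SL(2, R)} {v : Fin 2 → R} {a : R}
    (hu : u.1 = 1 + a • nilpotentMatrix v) (w : Fin 2 → R) : u • w = w + (a * cross v w) • v := by
  rw [Matrix.SpecialLinearGroup.smul_def, hu, smul_eq_mulVec, add_mulVec, one_mulVec, smul_mulVec,
    nilpotentMatrix_mulVec, smul_smul]

end Basic

section Field

variable {F : Type*} [Field F] {v w : Fin 2 → F}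

lemma exists_eq_smul_of_cross_eq_zero (hv : v ≠ 0) (h : cross v w = 0) : ∃ c : F, w = c • v := by
  simp only [cross] at h
  obtain ⟨i, hi⟩ := Function.ne_iff.1 hv
  refine ⟨w i / v i, funext fun j ↦ ?_⟩
  rw [Pi.zero_apply] at hi
  rw [Pi.smul_apply, smul_eq_mul, div_mul_eq_mul_div, eq_div_iff hi]
  fin_cases i <;> fin_cases j <;> grind

lemma eq_smul_nilpotentMatrix {M : Matrix (Fin 2) (Fin 2) F} (hv : v ≠ 0) (htr : M.trace = 0)
    (hM : M *ᵥ v = 0) : ∃ a : F, M = a • nilpotentMatrix v := by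
  have hperp : ![-v 1, v 0] ≠ 0 := fun h ↦ hv <| by
    ext i
    fin_cases i
    · simpa using congrFun h 1
    · simpa using congrFun h 0
  have hrow (i : Fin 2) : ∃ c : F, M i = c • ![-v 1, v 0] := by
    refine exists_eq_smul_of_cross_eq_zero hperp ?_
    have := congrFun hM i
    simp only [mulVec, dotProduct, Fin.sum_univ_two, Pi.zero_apply] at this
    simp only [cross, cons_val_zero, cons_val_one]
    linear_combination -this
  choose r hr using hrow
  obtain ⟨a, ha⟩ : ∃ a : F, r = a • v := by
    refine exists_eq_smul_of_cross_eq_zero hv ?_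
    rw [trace_fin_two, hr 0, hr 1] at htr
    simp only [Pi.smul_apply, cons_val_zero, cons_val_one, smul_eq_mul] at htr
    simp only [cross]
    linear_combination htr
  refine ⟨a, ?_⟩
  ext i j
  rw [hr i, ha, nilpotentMatrix, Matrix.smul_apply, vecMulVec_apply]
  simp only [Pi.smul_apply, smul_eq_mul]
  ring

lemma exists_eq_smul_nilpotentMatrix {M : Matrix (Fin 2) (Fin 2) F} (htr : M.trace = 0)
    (hdet : M.det = 0) : ∃ v : Fin 2 → F, v ≠ 0 ∧ ∃ a : F, M = a • nilpotentMatrix v := by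
  obtain ⟨v, hv, hM⟩ := exists_mulVec_eq_zero_iff.2 hdet
  exact ⟨v, hv, eq_smul_nilpotentMatrix hv htr hM⟩

lemma det_sub_one (u : SL(2, F)) : (u.1 - 1).det = 2 - u.1.trace := by
  rw [det_fin_two, trace_fin_two]
  simp only [Matrix.sub_apply, one_apply_eq, ne_eq, zero_ne_one, one_ne_zero, not_false_eq_true,
    one_apply_ne, sub_zero]
  linear_combination det_eq_one u

lemma trace_eq_two_of_smul_eq {u : SL(2, F)} (hv : v ≠ 0) (hu : u • v = v) : u.1.trace = 2 := by
  have hdet : (u.1 - 1).det = 0 := exists_mulVec_eq_zero_iff.1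
    ⟨v, hv, by rw [sub_mulVec, one_mulVec]; exact sub_eq_zero.2 hu⟩
  linear_combination -hdet + det_sub_one u

lemma exists_coe_eq_one_add_smul_nilpotentMatrix {u : SL(2, F)} (hv : v ≠ 0) (hu : u • v = v) :
    ∃ a : F, u.1 = 1 + a • nilpotentMatrix v := by
  have htr : (u.1 - 1).trace = 0 := by
    rw [trace_sub, trace_eq_two_of_smul_eq hv hu, trace_one, Fintype.card_fin]
    norm_num
  obtain ⟨a, ha⟩ := eq_smul_nilpotentMatrix hv htr
    (by rw [sub_mulVec, one_mulVec]; exact sub_eq_zero.2 hu)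
  exact ⟨a, by rw [← ha, add_sub_cancel]⟩

lemma exists_mem_cross_smul_ne_zero {H : Set SL(2, F)} (hgen : Subgroup.closure H = ⊤)
    (hv : v ≠ 0) : ∃ h ∈ H, cross v (h • v) ≠ 0 := by
  by_contra! hcon
  have hline (x : SL(2, F)) : ∃ c : F, x • v = c • v := by
    have hx : x ∈ Subgroup.closure H := hgen ▸ Subgroup.mem_top x
    induction hx using Subgroup.closure_induction with
    | mem x hx => exact exists_eq_smul_of_cross_eq_zero hv (hcon x hx)
    | one => exact ⟨1, by rw [one_smul, one_smul]⟩
    | mul x y _ _ hx hy =>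
      obtain ⟨a, ha⟩ := hx
      obtain ⟨b, hb⟩ := hy
      exact ⟨b * a, by rw [SemigroupAction.mul_smul, hb, smul_comm x b v, ha, smul_smul]⟩
    | inv x _ hx =>
      obtain ⟨a, ha⟩ := hx
      have h1 : v = a • x⁻¹ • v := by rw [← smul_comm x⁻¹, ← ha, inv_smul_smul]
      have ha0 : a ≠ 0 := by rintro rfl; rw [zero_smul] at h1; exact hv h1
      exact ⟨a⁻¹, by rw [eq_inv_smul_iff₀ ha0, ← h1]⟩
  refine hv (eq_zero_of_forall_cross_smul_eq_zero fun x ↦ ?_)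
  obtain ⟨c, hc⟩ := hline x
  rw [hc, cross_smul_right, cross_self, mul_zero]

end Field

section Unipotent

variable {F : Type*} [Field F] {v w : Fin 2 → F}

lemma eq_one_of_smul_eq_of_smul_eq {a : SL(2, F)} (hvw : cross v w ≠ 0) (hv : a • v = v)
    (hw : a • w = w) : a = 1 := by
  have hv0 : v ≠ 0 := by rintro rfl; simp [cross] at hvw
  obtain ⟨α, hα⟩ := exists_coe_eq_one_add_smul_nilpotentMatrix hv0 hv
  have hαv : (α * cross v w) • v = 0 := by
    simpa only [smul_eq_add_of_coe_eq hα, add_eq_left] using hw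
  have hα0 : α = 0 := by simpa only [smul_eq_zero, mul_eq_zero, hvw, hv0, or_false] using hαv
  exact Subtype.ext (by rw [hα, hα0, zero_smul, add_zero]; rfl)

/-- The big Bruhat cell: with `U` and `U'` the fixators of `v` and `w`, an element of `U U' U` is
determined by its factors as soon as the middle one is nontrivial. -/
lemma eq_one_and_eq_of_smul_smul_eq {a b b' : SL(2, F)} (hwv : cross w v ≠ 0) (ha : a • v = v)
    (hb : b • w = w) (hb' : b' • w = w) (hb1 : b ≠ 1) (h : a • b • v = b' • v) :
    a = 1 ∧ b = b' := by
  have hw0 : w ≠ 0 := by rintro rfl; simp [cross] at hwv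
  obtain ⟨β, hβ⟩ := exists_coe_eq_one_add_smul_nilpotentMatrix hw0 hb
  obtain ⟨β', hβ'⟩ := exists_coe_eq_one_add_smul_nilpotentMatrix hw0 hb'
  have hβ0 : β ≠ 0 := by
    rintro rfl
    exact hb1 (Subtype.ext (by rw [hβ, zero_smul, add_zero]; rfl))
  rw [smul_eq_add_of_coe_eq hβ, smul_eq_add_of_coe_eq hβ', smul_add, ha, add_right_inj,
    smul_comm] at h
  have hββ' : β = β' := by
    have hcross := congrArg (cross v) h
    have haw : cross v (a • w) = cross v w := by rw [← cross_smul_smul a v w, ha]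
    rw [cross_smul_right, cross_smul_right, haw, cross_swap v w] at hcross
    exact mul_right_cancel₀ hwv (mul_right_cancel₀ (neg_ne_zero.2 hwv) hcross)
  subst hββ'
  have haw : a • w = w := smul_right_injective _ (mul_ne_zero hβ0 hwv) h
  exact ⟨eq_one_of_smul_eq_of_smul_eq hwv haw ha, Subtype.ext (hβ.trans hβ'.symm)⟩

lemma card_sq_mul_card_sub_one_le [DecidableEq F] {A : Finset SL(2, F)} (hone : 1 ∈ A)
    {h : SL(2, F)} (hh : cross v (h • v) ≠ 0) :
    (A.filter (· • v = v)).card ^ 2 * ((A.filter (· • v = v)).card - 1) ≤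
      (A * {h} * A * {h⁻¹} * A).card := by
  set S := A.filter (· • v = v) with hS
  have hS1 : 1 ∈ S := Finset.mem_filter.2 ⟨hone, one_smul _ v⟩
  calc S.card ^ 2 * (S.card - 1) = (S ×ˢ S.erase 1 ×ˢ S).card := by
        rw [Finset.card_product, Finset.card_product, Finset.card_erase_of_mem hS1]; ring
    _ ≤ _ := Finset.card_le_card_of_injOn (fun q ↦ q.1 * h * q.2.1 * h⁻¹ * q.2.2) ?_ ?_
  · rintro ⟨a, b, c⟩ hq
    simp only [Finset.coe_product, Set.mem_prod, Finset.mem_coe, Finset.mem_erase] at hq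
    have hSA := Finset.filter_subset (· • v = v) A
    exact Finset.mul_mem_mul (Finset.mul_mem_mul (Finset.mul_mem_mul (Finset.mul_mem_mul
      (hSA hq.1) (Finset.mem_singleton_self h)) (hSA hq.2.1.2)) (Finset.mem_singleton_self h⁻¹))
      (hSA hq.2.2)
  · rintro ⟨a, b, c⟩ hq ⟨a', b', c'⟩ hq' heq
    simp only [Finset.coe_product, Set.mem_prod, Finset.mem_coe, Finset.mem_erase, hS,
      Finset.mem_filter] at hq hq' heq
    obtain ⟨⟨-, ha⟩, ⟨hb1, -, hb⟩, -, hc⟩ := hq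
    obtain ⟨⟨-, ha'⟩, ⟨-, -, hb'⟩, -, hc'⟩ := hq'
    have hcell : (a'⁻¹ * a) • (h * b * h⁻¹) • v = (h * b' * h⁻¹) • v := by
      have := congrArg (fun x : SL(2, F) ↦ a'⁻¹ • x • v) heq
      simpa only [SemigroupAction.mul_smul, hc, hc', inv_smul_smul] using this
    obtain ⟨haa', hbb'⟩ := eq_one_and_eq_of_smul_smul_eq (w := h • v)
      (by rwa [cross_swap, neg_ne_zero])
      (by rw [SemigroupAction.mul_smul, ha, inv_smul_eq_iff, ha'])
      (by rw [SemigroupAction.mul_smul, SemigroupAction.mul_smul, inv_smul_smul, hb])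
      (by rw [SemigroupAction.mul_smul, SemigroupAction.mul_smul, inv_smul_smul, hb'])
      (by rwa [Ne, conj_eq_one_iff]) hcell
    obtain rfl : a' = a := inv_mul_eq_one.1 haa'
    obtain rfl : b = b' := conj_injective hbb'
    obtain rfl : c = c' := mul_left_cancel heq
    rfl

end Unipotent

end SL2

/-! ### Escape to a regular trace -/

namespace SL2

open Matrix MatrixGroups
open scoped commutatorElement

section RegularTrace

lemma coe_inv_eq_sub {R : Type*} [CommRing R] (x : SL(2, R)) :
    (x⁻¹).1 = x.1.trace • 1 - x.1 := by
  rw [coe_inv_eq, trace_fin_two]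
  ext i j
  fin_cases i <;> fin_cases j <;> simp

lemma trace_inv_mul {R : Type*} [CommRing R] (x y : SL(2, R)) :
    (x⁻¹ * y).1.trace = x.1.trace * y.1.trace - (x * y).1.trace := by
  rw [Matrix.SpecialLinearGroup.coe_mul, coe_inv_eq_sub, sub_mul, smul_mul, one_mul, trace_sub,
    trace_smul, smul_eq_mul, ← Matrix.SpecialLinearGroup.coe_mul]

lemma trace_mul_mul {R : Type*} [CommRing R] (x y : SL(2, R)) :
    (x * (x * y)).1.trace = x.1.trace * (x * y).1.trace - y.1.trace := by
  have := trace_inv_mul x (x * y)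
  rw [inv_mul_cancel_left] at this
  linear_combination this

variable {F : Type*} [Field F]

/-- A trace `t` is regular if it is the trace of regular semisimple elements of `SL(2, F)`
(`t ^ 2 ≠ 4`) which moreover are not traceless. -/
def IsRegularTrace (t : F) : Prop := t ≠ 0 ∧ t ^ 2 ≠ 4

lemma pow_three_eq_of_not_isRegularTrace {t : F} (ht : ¬ IsRegularTrace t) : t ^ 3 = 4 * t := by
  by_cases h0 : t = 0
  · simp [h0]
  · have h4 : t ^ 2 = 4 := by_contra fun h4 ↦ ht ⟨h0, h4⟩
    rw [pow_succ, h4]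

lemma exists_isRegularTrace (h3 : (3 : F) ≠ 0) {ε c : F} (hε : ε ^ 2 = 1) (hc : c ≠ 0) (t : F) :
    IsRegularTrace t ∨ IsRegularTrace (ε * t + c) ∨ IsRegularTrace (ε * t - c) ∨
      IsRegularTrace (t + 2 * ε * c) := by
  by_contra! hcon
  obtain ⟨h0, h1, h2, h3'⟩ := hcon
  replace h0 := pow_three_eq_of_not_isRegularTrace h0
  replace h1 := pow_three_eq_of_not_isRegularTrace h1
  replace h2 := pow_three_eq_of_not_isRegularTrace h2
  replace h3' := pow_three_eq_of_not_isRegularTrace h3'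
  by_cases htwo : (2 : F) = 0
  · have ht : t ^ 3 = 0 := by linear_combination h0 + 2 * t * htwo
    rw [eq_zero_of_pow_eq_zero ht, mul_zero, zero_add] at h1
    have hc3 : c ^ 3 = 0 := by linear_combination h1 + 2 * c * htwo
    exact hc (eq_zero_of_pow_eq_zero hc3)
  · have hsix : (2 * 3) * c ^ 3 = 0 := by
      grind
    exact mul_ne_zero (mul_ne_zero htwo h3) (pow_ne_zero 3 hc) hsix

lemma exists_isRegularTrace_of_trace_eq (h3 : (3 : F) ≠ 0) {ε : F} {u : SL(2, F)}
    (hε : ε ^ 2 = 1) (htr : u.1.trace = 2 * ε) (hu : u.1 ≠ ε • 1) {H : Set SL(2, F)}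
    (hgen : Subgroup.closure H = ⊤) :
    ∃ x ∈ H, IsRegularTrace x.1.trace ∨ IsRegularTrace (u * x).1.trace ∨
      IsRegularTrace (u⁻¹ * x).1.trace ∨ IsRegularTrace (u * (u * x)).1.trace := by
  obtain ⟨v, hv, k, hk⟩ := exists_eq_smul_nilpotentMatrix (M := u.1 - ε • 1)
    (by rw [trace_sub, htr, trace_smul, trace_one, Fintype.card_fin, smul_eq_mul]; push_cast; ring)
    (by
      have hdet := det_eq_one u
      rw [trace_fin_two] at htr
      simp only [det_fin_two, Matrix.sub_apply, Matrix.smul_apply, one_apply_eq, smul_eq_mul,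
        mul_one, one_apply_ne (zero_ne_one' (Fin 2)), one_apply_ne (zero_ne_one' (Fin 2)).symm,
        mul_zero]
      linear_combination hdet - ε * htr - hε)
  have hk0 : k ≠ 0 := by rintro rfl; exact hu (by rwa [zero_smul, sub_eq_zero] at hk)
  obtain ⟨x, hx, hxv⟩ := exists_mem_cross_smul_ne_zero hgen hv
  have hux : (u * x).1.trace = ε * x.1.trace + k * cross v (x • v) := by
    rw [Matrix.SpecialLinearGroup.coe_mul, ← trace_nilpotentMatrix_mul, ← smul_eq_mul k,
      ← trace_smul, ← smul_mul, ← hk, sub_mul, smul_mul, one_mul, trace_sub, trace_smul,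
      smul_eq_mul]
    ring
  refine ⟨x, hx, ?_⟩
  have hiux : (u⁻¹ * x).1.trace = ε * x.1.trace - k * cross v (x • v) := by
    rw [trace_inv_mul, hux, htr]; ring
  have huux : (u * (u * x)).1.trace = x.1.trace + 2 * ε * (k * cross v (x • v)) := by
    rw [trace_mul_mul, hux, htr]; linear_combination 2 * x.1.trace * hε
  rw [hux, hiux, huux]
  exact exists_isRegularTrace h3 hε (mul_ne_zero hk0 hxv) x.1.trace

lemma inv_eq_neg_of_trace_eq_zero {x : SL(2, F)} (hx : x.1.trace = 0) : x⁻¹ = -x :=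
  Subtype.ext (by rw [coe_inv_eq_sub, hx, zero_smul, zero_sub]; rfl)

lemma neg_one_mem_center : (-1 : SL(2, F)) ∈ Subgroup.center SL(2, F) :=
  Subgroup.mem_center_iff.2 fun x ↦ by rw [mul_neg, neg_mul, mul_one, one_mul]

lemma commutatorElement_mem_center_of_trace_eq_zero {x y : SL(2, F)} (hx : x.1.trace = 0)
    (hy : y.1.trace = 0) (hxy : (x * y).1.trace = 0) : ⁅x, y⁆ ∈ Subgroup.center SL(2, F) := by
  have hneg : ⁅x, y⁆ = -1 :=
    calc ⁅x, y⁆ = x * y * -x * -y := by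
          rw [commutatorElement_def, inv_eq_neg_of_trace_eq_zero hx, inv_eq_neg_of_trace_eq_zero hy]
      _ = -(x * y * -(x * y)) := by simp only [mul_neg, neg_mul, neg_neg, mul_assoc]
      _ = -1 := by rw [← inv_eq_neg_of_trace_eq_zero hxy, mul_inv_cancel]
  exact hneg ▸ neg_one_mem_center

lemma exists_commutatorElement_notMem_center :
    ∃ x y : SL(2, F), ⁅x, y⁆ ∉ Subgroup.center SL(2, F) := by
  refine ⟨.transvection (zero_ne_one' (Fin 2)) 1, .transvection (zero_ne_one' (Fin 2)).symm 1,
    fun h ↦ ?_⟩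
  obtain ⟨ε, -, hε⟩ := Matrix.SpecialLinearGroup.mem_center_iff.1 h
  set u := Matrix.SpecialLinearGroup.transvection (zero_ne_one' (Fin 2)) (1 : F) with hu
  set l := Matrix.SpecialLinearGroup.transvection (zero_ne_one' (Fin 2)).symm (1 : F) with hl
  have hul : u.1 * l.1 = ε • (l.1 * u.1) := by
    rw [scalar_apply, ← smul_one_eq_diagonal] at hε
    rw [← one_mul (l.1 * u.1), ← smul_mul, hε, ← Matrix.SpecialLinearGroup.coe_mul,
      ← Matrix.SpecialLinearGroup.coe_mul, ← Matrix.SpecialLinearGroup.coe_mul,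
      commutatorElement_def]
    group
  rw [hu, hl, coe_transvection_zero_one, coe_transvection_one_zero] at hul
  have h00 := congrFun₂ hul 0 0
  have h01 := congrFun₂ hul 0 1
  simp only [Matrix.mul_apply, Matrix.smul_apply, smul_eq_mul, Fin.sum_univ_two, of_apply,
    cons_val', cons_val_zero, cons_val_one, cons_val_fin_one, mul_one, mul_zero, add_zero,
    zero_add] at h00 h01
  rw [← h01, add_eq_left] at h00
  exact one_ne_zero h00

lemma trace_eq_zero_or_mem_center {x : SL(2, F)} (hx : ¬ IsRegularTrace x.1.trace)
    (hscalar : ∀ ε : F, ε ^ 2 = 1 → x.1.trace = 2 * ε → x.1 = ε • 1) :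
    x.1.trace = 0 ∨ x ∈ Subgroup.center SL(2, F) := by
  refine or_iff_not_imp_left.2 fun h0 ↦ Matrix.SpecialLinearGroup.mem_center_iff.2 ?_
  have h4 : x.1.trace ^ 2 = 4 := by_contra fun h4 ↦ hx ⟨h0, h4⟩
  have htwo : (2 : F) ≠ 0 := fun h2 ↦ h0
    (eq_zero_of_pow_eq_zero (n := 2) (by linear_combination h4 + 2 * h2))
  have hε : (x.1.trace / 2) ^ 2 = 1 := by rw [div_pow, h4]; field_simp; norm_num
  refine ⟨x.1.trace / 2, hε, ?_⟩
  exact (smul_one_eq_diagonal _).symm.trans (hscalar _ hε (by field_simp)).symm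

lemma exists_mem_pow_five_isRegularTrace [DecidableEq F] (h3 : (3 : F) ≠ 0) {H : Finset SL(2, F)}
    (hsym : ∀ h ∈ H, h⁻¹ ∈ H) (hone : 1 ∈ H)
    (hgen : Subgroup.closure (H : Set SL(2, F)) = ⊤) :
    ∃ g ∈ H ^ 5, IsRegularTrace g.1.trace := by
  by_contra! hcon
  have hsub {m : ℕ} (hm : m ≤ 5) : H ^ m ⊆ H ^ 5 := Finset.pow_subset_pow_right hone hm
  have hscalar (u : SL(2, F)) (hu : u ∈ H ^ 2) (ε : F) (hε : ε ^ 2 = 1)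
      (htr : u.1.trace = 2 * ε) : u.1 = ε • 1 := by
    by_contra hne
    obtain ⟨x, hx, hreg⟩ := exists_isRegularTrace_of_trace_eq h3 hε htr hne hgen
    have hxH : x ∈ H ^ 1 := (pow_one H).symm ▸ hx
    have hux : u * x ∈ H ^ 3 := Finset.mul_mem_mul hu hx
    have hiux : u⁻¹ * x ∈ H ^ 3 := Finset.mul_mem_mul (inv_mem_pow_of_forall_inv_mem hsym hu) hx
    have huux : u * (u * x) ∈ H ^ 5 := pow_add H 2 3 ▸ Finset.mul_mem_mul hu hux
    rcases hreg with hreg | hreg | hreg | hreg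
    · exact hcon x (hsub (by norm_num) hxH) hreg
    · exact hcon _ (hsub (by norm_num) hux) hreg
    · exact hcon _ (hsub (by norm_num) hiux) hreg
    · exact hcon _ huux hreg
  have hdich (x : SL(2, F)) (hx : x ∈ H ^ 2) := trace_eq_zero_or_mem_center
    (hcon x (hsub (by norm_num) hx)) (hscalar x hx)
  have hmem (x : SL(2, F)) (hx : x ∈ H) : x ∈ H ^ 2 :=
    Finset.pow_subset_pow_right hone one_le_two ((pow_one H).symm ▸ hx)
  obtain ⟨x, y, hxy⟩ := exists_commutatorElement_notMem_center (F := F)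
  refine hxy (commutatorElement_mem_center_of_closure_eq_top hgen (fun x hx y hy ↦ ?_) x y)
  have of_commute (h : x * y = y * x) : ⁅x, y⁆ ∈ Subgroup.center SL(2, F) := by
    rw [commutatorElement_eq_one_iff_mul_comm.2 h]
    exact one_mem _
  rcases hdich x (hmem x hx) with htx | hcx
  · rcases hdich y (hmem y hy) with hty | hcy
    · rcases hdich (x * y) (pow_two H ▸ Finset.mul_mem_mul hx hy) with htxy | hcxy
      · exact commutatorElement_mem_center_of_trace_eq_zero htx hty htxy
      · refine of_commute ?_
        have := Subgroup.mem_center_iff.1 hcxy x⁻¹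
        rwa [inv_mul_cancel_left, eq_mul_inv_iff_mul_eq, eq_comm] at this
    · exact of_commute (Subgroup.mem_center_iff.1 hcy x)
  · exact of_commute (Subgroup.mem_center_iff.1 hcx y).symm

end RegularTrace

end SL2

/-! ### The Larsen-Pink inequality -/

lemma card_filter_product_le {α β : Type*} {s : Finset α} {t : Finset β} {p : α → β → Prop}
    [∀ a, DecidablePred (p a)] {m : ℕ} (h : ∀ a ∈ s, (t.filter (p a)).card ≤ m) :
    ((s ×ˢ t).filter fun q ↦ p q.1 q.2).card ≤ s.card * m := by
  rw [Finset.card_filter, Finset.sum_product]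
  exact Finset.sum_le_card_nsmul _ _ _ fun a ha ↦ by
    simpa only [← Finset.card_filter] using h a ha

section LinearAlgebra

variable {k V ι : Type*} [Field k] [AddCommGroup V] [Module k V]

lemma linearIndependent_of_affineIndependent {p : ι → V} (hp : AffineIndependent k p)
    {f : V →ₗ[k] k} {c : k} (hc : c ≠ 0) (hf : ∀ i, f (p i) = c) : LinearIndependent k p := by
  rw [linearIndependent_iff']
  intro s a ha
  have hsum : (∑ i ∈ s, a i) * c = 0 := by
    simpa only [map_sum, map_smul, hf, smul_eq_mul, ← Finset.sum_mul, map_zero]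
      using congrArg f ha
  exact affineIndependent_iff.1 hp s a ((mul_eq_zero_iff_right hc).1 hsum) ha

lemma exists_dual_eq_smul {n : ℕ} [FiniteDimensional k V] (hV : Module.finrank k V = n + 1)
    {p : Fin n → V} (hp : LinearIndependent k p) {φ ψ : Module.Dual k V} (hφ : φ ≠ 0)
    (hφp : ∀ i, φ (p i) = 0) (hψp : ∀ i, ψ (p i) = 0) : ∃ s : k, ψ = s • φ := by
  have span_le {χ : Module.Dual k V} (hχ : ∀ i, χ (p i) = 0) :
      Submodule.span k (Set.range p) ≤ χ.ker :=
    Submodule.span_le.2 (Set.range_subset_iff.2 hχ)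
  have hker : φ.ker = Submodule.span k (Set.range p) := by
    refine (Submodule.eq_of_le_of_finrank_eq (span_le hφp) ?_).symm
    have := Module.Dual.finrank_ker_add_one_of_ne_zero hφ
    rw [finrank_span_eq_card hp, Fintype.card_fin]
    omega
  have hmem : ψ ∈ Submodule.span k {φ} := by
    rw [← Set.range_const (ι := Unit) (c := φ)]
    exact mem_span_of_iInf_ker_le_ker ((iInf_const.trans hker).le.trans (span_le hψp))
  obtain ⟨s, hs⟩ := Submodule.mem_span_singleton.1 hmem
  exact ⟨s, hs.symm⟩

end LinearAlgebra

namespace SL2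

open Matrix MatrixGroups

section LarsenPink

variable {F : Type*} [Field F]

lemma exists_eq_smul_of_trace_mul_eq_zero {p : Fin 3 → Matrix (Fin 2) (Fin 2) F}
    (hp : LinearIndependent F p) {N N' : Matrix (Fin 2) (Fin 2) F} (hN : N ≠ 0)
    (hNp : ∀ i, (N * p i).trace = 0) (hNp' : ∀ i, (N' * p i).trace = 0) :
    ∃ s : F, N' = s • N := by
  let τ (K : Matrix (Fin 2) (Fin 2) F) : Module.Dual F (Matrix (Fin 2) (Fin 2) F) :=
    traceLinearMap (Fin 2) F F ∘ₗ LinearMap.mulLeft F K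
  have hτ : τ N ≠ 0 := fun h ↦ hN <| ext_iff_trace_mul_right.2 fun x ↦ by
    rw [zero_mul, trace_zero]; exact LinearMap.congr_fun h x
  obtain ⟨s, hs⟩ := exists_dual_eq_smul (φ := τ N) (ψ := τ N')
    (by rw [Module.finrank_matrix]; simp) hp hτ hNp hNp'
  refine ⟨s, ext_iff_trace_mul_right.2 fun x ↦ ?_⟩
  rw [smul_mul, trace_smul]
  exact LinearMap.congr_fun hs x

lemma trace_sub_one (g : SL(2, F)) : (g.1 - 1).trace = -(g.1 - 1).det := by
  rw [det_sub_one, trace_sub, trace_one, Fintype.card_fin]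
  push_cast
  ring

lemma exists_coe_sub_one_eq_smul_nilpotentMatrix {g g' : SL(2, F)} {s : F} (hs0 : s ≠ 0)
    (hs1 : s ≠ 1) (h : g'.1 - 1 = s • (g.1 - 1)) :
    ∃ v : Fin 2 → F, v ≠ 0 ∧ ∃ a : F, g.1 - 1 = a • nilpotentMatrix v := by
  have htr := trace_sub_one g
  have htr' := trace_sub_one g'
  rw [h, trace_smul, det_smul, Fintype.card_fin, smul_eq_mul, htr] at htr'
  have hdet : (g.1 - 1).det = 0 := by
    refine (mul_eq_zero_iff_left (mul_ne_zero hs0 (sub_ne_zero.2 hs1))).1 ?_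
    linear_combination htr'
  exact exists_eq_smul_nilpotentMatrix (by rw [htr, hdet, neg_zero]) hdet

/-- `x` and `y` have a common eigenvector in the plane, the condition of being an eigenvector being
expressed by the symplectic form. -/
def HasCommonEigenvector (x y : SL(2, F)) : Prop :=
  ∃ v : Fin 2 → F, v ≠ 0 ∧ cross v (x • v) = 0 ∧ cross v (y • v) = 0

/-- The conditions `tr (g x i) = t` say that `g - 1` is orthogonal to three independent matrices,
which determines it up to a scalar. Two distinct nonzero solutions make it nilpotent. -/
lemma hasCommonEigenvector_of_trace_mul_eq {t : F} (ht : t ≠ 0) {x : Fin 3 → SL(2, F)}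
    (hx : ∀ i, (x i).1.trace = t) (haff : AffineIndependent F fun i ↦ (x i).1) {g g' : SL(2, F)}
    (hg1 : g ≠ 1) (hg1' : g' ≠ 1) (hgg' : g ≠ g') (hg : ∀ i, (g * x i).1.trace = t)
    (hg' : ∀ i, (g' * x i).1.trace = t) (i j : Fin 3) : HasCommonEigenvector (x i) (x j) := by
  have sub_one_ne_zero {y : SL(2, F)} (hy : y ≠ 1) : y.1 - 1 ≠ 0 :=
    fun h ↦ hy (Subtype.ext (sub_eq_zero.1 h))
  have trace_sub_one_mul {y : SL(2, F)} (hy : ∀ i, (y * x i).1.trace = t) (i : Fin 3) :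
      ((y.1 - 1) * (x i).1).trace = 0 := by
    rw [sub_mul, one_mul, trace_sub, ← Matrix.SpecialLinearGroup.coe_mul, hy, hx, sub_self]
  have hind := linearIndependent_of_affineIndependent (f := traceLinearMap (Fin 2) F F) haff ht hx
  obtain ⟨s, hs⟩ := exists_eq_smul_of_trace_mul_eq_zero hind (sub_one_ne_zero hg1)
    (trace_sub_one_mul hg) (trace_sub_one_mul hg')
  have hs0 : s ≠ 0 := by
    rintro rfl
    exact sub_one_ne_zero hg1' (by rw [hs, zero_smul])
  have hs1 : s ≠ 1 := by
    rintro rfl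
    rw [one_smul, sub_left_inj] at hs
    exact hgg' (Subtype.ext hs.symm)
  obtain ⟨v, hv, a, ha⟩ := exists_coe_sub_one_eq_smul_nilpotentMatrix hs0 hs1 hs
  have ha0 : a ≠ 0 := by
    rintro rfl
    exact sub_one_ne_zero hg1 (by rw [ha, zero_smul])
  have eigen (i : Fin 3) : cross v (x i • v) = 0 := by
    have := trace_sub_one_mul hg i
    rw [ha, smul_mul, trace_smul, trace_nilpotentMatrix_mul] at this
    exact (smul_eq_zero_iff_right ha0).1 this
  exact ⟨v, hv, eigen i, eigen j⟩

end LarsenPink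

section Eigenvectors

variable {F : Type*} [Field F] {v w : Fin 2 → F}

lemma sq_sub_trace_mul_add_one_eq_zero {x : SL(2, F)} {l : F} (hv : v ≠ 0) (hl : x • v = l • v) :
    l ^ 2 - x.1.trace * l + 1 = 0 := by
  have hinv : v = l • x⁻¹ • v := by rw [← smul_comm x⁻¹, ← hl, inv_smul_smul]
  have hsum : x⁻¹ • v = x.1.trace • v - l • v := by
    rw [← hl, Matrix.SpecialLinearGroup.smul_def, coe_inv_eq_sub, smul_eq_mulVec, sub_mulVec,
      smul_mulVec, one_mulVec]
    rfl
  refine (smul_eq_zero_iff_left hv).1 ?_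
  nth_rw 1 [hsum, smul_sub, smul_smul, smul_smul] at hinv
  rw [add_smul, sub_smul, one_smul, pow_two, mul_comm x.1.trace l]
  nth_rw 3 [hinv]
  abel

lemma exists_smul_eq_smul_of_cross_eq_zero {x : SL(2, F)} (hv : v ≠ 0) (h : cross v (x • v) = 0) :
    ∃ l : F, x • v = l • v ∧ l ^ 2 - x.1.trace * l + 1 = 0 := by
  obtain ⟨l, hl⟩ := exists_eq_smul_of_cross_eq_zero hv h
  exact ⟨l, hl, sq_sub_trace_mul_add_one_eq_zero hv hl⟩

lemma exists_card_le_two_and_forall_root_mem (t : F) :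
    ∃ R : Finset F, R.card ≤ 2 ∧ ∀ l, l ^ 2 - t * l + 1 = 0 → l ∈ R := by
  classical
  by_cases h : ∃ a : F, a ^ 2 - t * a + 1 = 0
  · obtain ⟨a, ha⟩ := h
    refine ⟨{a, t - a}, Finset.card_le_two, fun b hb ↦ ?_⟩
    have hprod : (b - a) * (b - (t - a)) = 0 := by linear_combination hb - ha
    rw [Finset.mem_insert, Finset.mem_singleton, ← sub_eq_zero, ← sub_eq_zero (a := b) (b := t - a)]
    exact mul_eq_zero.1 hprod
  · exact ⟨∅, Nat.zero_le 2, fun l hl ↦ absurd ⟨l, hl⟩ h⟩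

lemma cross_eq_zero_of_smul_eq_smul {x : SL(2, F)} {l : F} (ht : x.1.trace ^ 2 ≠ 4)
    (hl : l ^ 2 - x.1.trace * l + 1 = 0) (hv : x • v = l • v) (hw : x • w = l • w) :
    cross v w = 0 := by
  by_contra hvw
  have hcross := cross_smul_smul x v w
  rw [hv, hw, cross_smul_right, cross_swap, cross_smul_right, cross_swap w v] at hcross
  have hl1 : l ^ 2 = 1 := mul_right_cancel₀ hvw (by linear_combination hcross)
  have htl : x.1.trace * l = 2 := by linear_combination hl1 - hl
  exact ht (by linear_combination (x.1.trace * l + 2) * htl - x.1.trace ^ 2 * hl1)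

end Eigenvectors

section LarsenPinkCount

variable {F : Type*} [Field F] [DecidableEq F] {X S : Finset SL(2, F)} {M : ℕ} {t : F}

lemma card_filter_smul_eq_le (hXS : ∀ x ∈ X, ∀ y ∈ X, x⁻¹ * y ∈ S) (v w : Fin 2 → F) :
    (X.filter (· • v = w)).card ≤ (S.filter (· • v = v)).card := by
  refine card_le_card_of_inv_mul_mem fun x hx y hy ↦ ?_
  rw [Finset.mem_filter] at hx hy ⊢
  exact ⟨hXS x hx.1 y hy.1, by rw [SemigroupAction.mul_smul, hy.2, inv_smul_eq_iff, hx.2]⟩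

open Classical in
lemma card_filter_eigenvalue_le (hXS : ∀ x ∈ X, ∀ y ∈ X, x⁻¹ * y ∈ S)
    (hM : ∀ v : Fin 2 → F, v ≠ 0 → (S.filter (· • v = v)).card ≤ M) {x : SL(2, F)}
    (ht : x.1.trace ^ 2 ≠ 4) (l m : F) :
    (X.filter fun y ↦ ∃ v : Fin 2 → F, v ≠ 0 ∧ x • v = l • v ∧ y • v = m • v).card ≤ M := by
  by_cases h : ∃ v : Fin 2 → F, v ≠ 0 ∧ x • v = l • v
  · obtain ⟨v, hv, hxv⟩ := h
    have hl := sq_sub_trace_mul_add_one_eq_zero hv hxv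
    refine (Finset.card_le_card (Finset.monotone_filter_right X ?_)).trans
      ((card_filter_smul_eq_le hXS v (m • v)).trans (hM v hv))
    rintro y - ⟨w, hw, hxw, hyw⟩
    obtain ⟨c, rfl⟩ := exists_eq_smul_of_cross_eq_zero hw
      (cross_eq_zero_of_smul_eq_smul ht hl hxw hxv)
    rw [smul_comm, hyw, smul_comm]
  · rw [Finset.filter_false_of_mem fun y _ ⟨v, hv, hxv, _⟩ ↦ h ⟨v, hv, hxv⟩]
    exact Nat.zero_le M

open Classical in
lemma card_filter_hasCommonEigenvector_le (hXS : ∀ x ∈ X, ∀ y ∈ X, x⁻¹ * y ∈ S)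
    (hM : ∀ v : Fin 2 → F, v ≠ 0 → (S.filter (· • v = v)).card ≤ M)
    (hX : ∀ x ∈ X, x.1.trace = t) (ht : t ^ 2 ≠ 4) {x : SL(2, F)} (hx : x ∈ X) :
    (X.filter (HasCommonEigenvector x)).card ≤ 4 * M := by
  obtain ⟨R, hR, mem_R⟩ := exists_card_le_two_and_forall_root_mem t
  let E (q : F × F) := X.filter fun y ↦ ∃ v : Fin 2 → F, v ≠ 0 ∧ x • v = q.1 • v ∧ y • v = q.2 • v
  have hcover : X.filter (HasCommonEigenvector x) ⊆ (R ×ˢ R).biUnion E := by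
    intro y hy
    obtain ⟨hyX, v, hv, hxv, hyv⟩ := Finset.mem_filter.1 hy
    obtain ⟨l, hxl, hl⟩ := exists_smul_eq_smul_of_cross_eq_zero hv hxv
    obtain ⟨m, hym, hm⟩ := exists_smul_eq_smul_of_cross_eq_zero hv hyv
    rw [hX x hx] at hl
    rw [hX y hyX] at hm
    exact Finset.mem_biUnion.2 ⟨(l, m), Finset.mk_mem_product (mem_R l hl) (mem_R m hm),
      Finset.mem_filter.2 ⟨hyX, v, hv, hxl, hym⟩⟩
  have hE (q : F × F) : (E q).card ≤ M := by
    rw [← hX x hx] at ht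
    convert card_filter_eigenvalue_le hXS hM ht q.1 q.2
  calc (X.filter (HasCommonEigenvector x)).card
      ≤ ((R ×ˢ R).biUnion E).card := Finset.card_le_card hcover
    _ ≤ (R ×ˢ R).card * M := Finset.card_biUnion_le_card_mul _ _ _ fun q _ ↦ hE q
    _ ≤ 2 * 2 * M := by rw [Finset.card_product]; gcongr
    _ = 4 * M := by norm_num

end LarsenPinkCount

section LarsenPinkInequality

lemma det_lineMap {R : Type*} [CommRing R] (M N : Matrix (Fin 2) (Fin 2) R) (β : R) :
    (AffineMap.lineMap M N β).det =
      (1 - β) * M.det + β * N.det - β * (1 - β) * (N - M).det := by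
  simp only [AffineMap.lineMap_apply_module, det_fin_two, Matrix.add_apply, Matrix.sub_apply,
    Matrix.smul_apply, smul_eq_mul]
  ring

variable {F : Type*} [Field F] {X S : Finset SL(2, F)} {M : ℕ} {t : F}

lemma eq_or_eq_of_mem_line {x y z : SL(2, F)} (hdet : (y.1 - x.1).det ≠ 0)
    (hz : z.1 ∈ line[F, x.1, y.1]) : z = x ∨ z = y := by
  obtain ⟨β, hβ⟩ := mem_affineSpan_pair_iff_exists_lineMap_eq.1 hz
  have hprod : β * (1 - β) * (y.1 - x.1).det = 0 := by
    have := det_lineMap x.1 y.1 β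
    rw [hβ, x.2, y.2, z.2] at this
    linear_combination this
  rcases mul_eq_zero.1 ((mul_eq_zero_iff_right hdet).1 hprod) with h | h
  · exact .inl (Subtype.ext (by rw [← hβ, h, AffineMap.lineMap_apply_zero]))
  · exact .inr (Subtype.ext (by rw [← hβ, ← sub_eq_zero.1 h, AffineMap.lineMap_apply_one]))

lemma smul_eq_of_mem_line {x y z : SL(2, F)} {v : Fin 2 → F} {a : F}
    (hxy : y.1 - x.1 = a • nilpotentMatrix v) (hz : z.1 ∈ line[F, x.1, y.1]) : z • v = x • v := by
  obtain ⟨β, hβ⟩ := mem_affineSpan_pair_iff_exists_lineMap_eq.1 hz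
  rw [AffineMap.lineMap_apply, vsub_eq_sub, hxy, vadd_eq_add] at hβ
  rw [Matrix.SpecialLinearGroup.smul_def, ← hβ, smul_eq_mulVec, add_mulVec, smul_mulVec,
    smul_mulVec, nilpotentMatrix_mulVec, cross_self, zero_smul, smul_zero, smul_zero, zero_add]
  rfl

/-- A triple of matrices is generic if the first two are distinct without common eigenvector, and
the third one does not lie on the affine line through them. -/
def IsGenericTriple (q : (SL(2, F) × SL(2, F)) × SL(2, F)) : Prop :=
  q.1.1 ≠ q.1.2 ∧ ¬ HasCommonEigenvector q.1.1 q.1.2 ∧ q.2.1 ∉ line[F, q.1.1.1, q.1.2.1]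

lemma IsGenericTriple.affineIndependent {x y z : SL(2, F)} (h : IsGenericTriple ((x, y), z)) :
    AffineIndependent F fun i ↦ (![x, y, z] i).1 := by
  have hfun : (fun i ↦ (![x, y, z] i).1) = ![x.1, y.1, z.1] := by
    ext i : 1
    fin_cases i <;> rfl
  rw [hfun]
  exact affineIndependent_of_ne_of_mem_of_mem_of_notMem (Subtype.coe_ne_coe.2 h.1)
    (left_mem_affineSpan_pair F _ _) (right_mem_affineSpan_pair F _ _) h.2.2

variable [DecidableEq F]

open Classical in
lemma card_filter_mem_line_le (hXS : ∀ x ∈ X, ∀ y ∈ X, x⁻¹ * y ∈ S) (hM1 : 1 ≤ M)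
    (hM : ∀ v : Fin 2 → F, v ≠ 0 → (S.filter (· • v = v)).card ≤ M) {x y : SL(2, F)}
    (hxy : x.1.trace = y.1.trace) : (X.filter fun z ↦ z.1 ∈ line[F, x.1, y.1]).card ≤ 2 * M := by
  by_cases hdet : (y.1 - x.1).det = 0
  · obtain ⟨v, hv, a, ha⟩ := exists_eq_smul_nilpotentMatrix
      (by rw [trace_sub, hxy, sub_self]) hdet
    calc _ ≤ (X.filter (· • v = x • v)).card :=
          Finset.card_le_card (Finset.monotone_filter_right X fun z _ ↦ smul_eq_of_mem_line ha)
      _ ≤ M := (card_filter_smul_eq_le hXS v (x • v)).trans (hM v hv)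
      _ ≤ 2 * M := Nat.le_mul_of_pos_left M two_pos
  · calc _ ≤ ({x, y} : Finset SL(2, F)).card := Finset.card_le_card fun z hz ↦ by
          rw [Finset.mem_insert, Finset.mem_singleton]
          exact eq_or_eq_of_mem_line hdet (Finset.mem_filter.1 hz).2
      _ ≤ 2 * 1 := Finset.card_le_two
      _ ≤ 2 * M := Nat.mul_le_mul_left 2 hM1

omit [DecidableEq F] in
open Classical in
lemma card_filter_isGenericTriple_le (hXS : ∀ x ∈ X, ∀ y ∈ X, x⁻¹ * y ∈ S)
    (hX : ∀ x ∈ X, x.1.trace = t) (ht : t ≠ 0) :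
    (((X ×ˢ X) ×ˢ X).filter IsGenericTriple).card ≤ 2 * S.card ^ 2 := by
  rw [pow_two, ← Finset.card_product]
  refine Finset.card_le_mul_card_image_of_maps_to
    (f := fun q ↦ (q.1.1⁻¹ * q.1.2, q.1.1⁻¹ * q.2)) ?_ 2 ?_
  · rintro ⟨⟨x, y⟩, z⟩ hq
    simp only [Finset.mem_filter, Finset.mem_product] at hq
    exact Finset.mk_mem_product (hXS x hq.1.1.1 y hq.1.1.2) (hXS x hq.1.1.1 z hq.1.2)
  · rintro ⟨y, z⟩ -
    by_contra! hlt
    obtain ⟨⟨⟨a, ay⟩, az⟩, ha, ⟨⟨b, b_y⟩, bz⟩, hb, ⟨⟨c, cy⟩, cz⟩, hc, hab, hac, hbc⟩ :=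
      Finset.two_lt_card.1 hlt
    simp only [Finset.mem_filter, Finset.mem_product, Prod.mk.injEq, inv_mul_eq_iff_eq_mul]
      at ha hb hc
    obtain ⟨⟨⟨⟨haX, hayX⟩, hazX⟩, hgen⟩, rfl, rfl⟩ := ha
    obtain ⟨⟨⟨⟨hbX, hbyX⟩, hbzX⟩, -⟩, rfl, rfl⟩ := hb
    obtain ⟨⟨⟨⟨hcX, hcyX⟩, hczX⟩, -⟩, rfl, rfl⟩ := hc
    have htr {d : SL(2, F)} (hd : d ∈ X) (hdy : d * y ∈ X) (hdz : d * z ∈ X) (i : Fin 3) :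
        (d * a⁻¹ * ![a, a * y, a * z] i).1.trace = t := by
      refine hX _ ?_
      fin_cases i <;> simpa [mul_assoc]
    refine hgen.2.1 (hasCommonEigenvector_of_trace_mul_eq ht (fun i ↦ ?_) hgen.affineIndependent
      (g := b * a⁻¹) (g' := c * a⁻¹) ?_ ?_ ?_ (htr hbX hbyX hbzX) (htr hcX hcyX hczX) 0 1)
    · simpa [mul_assoc] using htr haX hayX hazX i
    · rw [Ne, mul_inv_eq_one]; rintro rfl; exact hab rfl
    · rw [Ne, mul_inv_eq_one]; rintro rfl; exact hac rfl
    · rw [Ne, mul_left_inj]; rintro rfl; exact hbc rfl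

open Classical in
lemma card_filter_collinear_le (hXS : ∀ x ∈ X, ∀ y ∈ X, x⁻¹ * y ∈ S) (hM1 : 1 ≤ M)
    (hM : ∀ v : Fin 2 → F, v ≠ 0 → (S.filter (· • v = v)).card ≤ M)
    (hX : ∀ x ∈ X, x.1.trace = t) :
    (((X ×ˢ X) ×ˢ X).filter fun q ↦ q.2.1 ∈ line[F, q.1.1.1, q.1.2.1]).card ≤
      X.card ^ 2 * (2 * M) := by
  rw [pow_two, ← Finset.card_product]
  refine card_filter_product_le
    (p := fun (q : SL(2, F) × SL(2, F)) (z : SL(2, F)) ↦ z.1 ∈ line[F, q.1.1, q.2.1]) fun q hq ↦ ?_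
  obtain ⟨hx, hy⟩ := Finset.mem_product.1 hq
  exact card_filter_mem_line_le hXS hM1 hM ((hX _ hx).trans (hX _ hy).symm)

open Classical in
lemma card_pow_three_le_of_trace_eq (hXS : ∀ x ∈ X, ∀ y ∈ X, x⁻¹ * y ∈ S)
    (hM1 : 1 ≤ M) (hM : ∀ v : Fin 2 → F, v ≠ 0 → (S.filter (· • v = v)).card ≤ M)
    (hX : ∀ x ∈ X, x.1.trace = t) (ht : IsRegularTrace t) :
    X.card ^ 3 ≤ 7 * M * X.card ^ 2 + 2 * S.card ^ 2 := by
  set P₀ := (X ×ˢ X).filter fun q ↦ q.2 = q.1 ∨ HasCommonEigenvector q.1 q.2 with hP₀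
  set T₀ := ((X ×ˢ X) ×ˢ X).filter fun q ↦ q.2.1 ∈ line[F, q.1.1.1, q.1.2.1] with hT₀
  set T := ((X ×ˢ X) ×ˢ X).filter IsGenericTriple with hT
  have hcover : (X ×ˢ X) ×ˢ X ⊆ P₀ ×ˢ X ∪ T₀ ∪ T := by
    intro q hq
    have hq' := hq
    simp only [Finset.mem_product] at hq'
    simp only [hP₀, hT₀, hT, Finset.mem_union, Finset.mem_product, Finset.mem_filter, hq',
      IsGenericTriple, ne_eq, eq_comm (a := q.1.2)]
    tauto
  have hP₀card : P₀.card ≤ X.card * (M + 4 * M) := card_filter_product_le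
      (p := fun x y ↦ y = x ∨ HasCommonEigenvector x y) fun x hx ↦ by
    rw [Finset.filter_or, Finset.filter_eq' X x, if_pos hx]
    exact (Finset.card_union_le _ _).trans (Nat.add_le_add hM1
      (card_filter_hasCommonEigenvector_le hXS hM hX ht.2 hx))
  have hT₀card := card_filter_collinear_le hXS hM1 hM hX
  calc X.card ^ 3 = ((X ×ˢ X) ×ˢ X).card := by rw [Finset.card_product, Finset.card_product]; ring
    _ ≤ P₀.card * X.card + T₀.card + T.card := by
        rw [← Finset.card_product]
        exact (Finset.card_le_card hcover).trans ((Finset.card_union_le _ _).trans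
          (Nat.add_le_add_right (Finset.card_union_le _ _) _))
    _ ≤ X.card * (M + 4 * M) * X.card + X.card ^ 2 * (2 * M) + 2 * S.card ^ 2 := by
        gcongr
        exact card_filter_isGenericTriple_le hXS hX ht.1
    _ = 7 * M * X.card ^ 2 + 2 * S.card ^ 2 := by ring

end LarsenPinkInequality

end SL2

/-! ### Tori -/

section Centralizer

variable {Γ : Type*} [Group Γ] [DecidableEq Γ] {A S : Finset Γ}

/-- The elements of the finite set `A` which commute with `g`. -/
def centralizerIn (A : Finset Γ) (g : Γ) : Finset Γ := A.filter fun y ↦ y * g = g * y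

lemma mem_centralizerIn {g y : Γ} : y ∈ centralizerIn A g ↔ y ∈ A ∧ Commute y g :=
  Finset.mem_filter

lemma card_filter_conj_eq_le (hAS : ∀ x ∈ A, ∀ y ∈ A, x⁻¹ * y ∈ S) (g z : Γ) :
    (A.filter fun x ↦ x * g * x⁻¹ = z).card ≤ (centralizerIn S g).card := by
  refine card_le_card_of_inv_mul_mem fun x hx y hy ↦ ?_
  rw [Finset.mem_filter] at hx hy
  refine mem_centralizerIn.2 ⟨hAS x hx.1 y hy.1, ?_⟩
  have hxy : y * g * y⁻¹ = x * g * x⁻¹ := hy.2.trans hx.2.symm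
  rw [mul_inv_eq_iff_eq_mul] at hxy
  rw [commute_iff_eq, mul_assoc, hxy]
  group

end Centralizer

namespace SL2

open Matrix MatrixGroups

section Torus

variable {F : Type*} [Field F]

lemma exists_cross_smul_ne_zero {y : SL(2, F)} (hy : y ∉ Subgroup.center SL(2, F)) :
    ∃ v : Fin 2 → F, cross v (y • v) ≠ 0 := by
  by_contra! h
  have h10 := h ![1, 0]
  have h01 := h ![0, 1]
  have h11 := h ![1, 1]
  simp only [cross, smul_apply, cons_val_zero, cons_val_one, cons_val_fin_one, mul_one, mul_zero,
    one_mul, zero_mul, add_zero, zero_add, sub_zero, zero_sub, neg_eq_zero] at h10 h01 h11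
  have hdiag : y 0 0 = y 1 1 := by linear_combination -h11 + h10 - h01
  refine hy (Matrix.SpecialLinearGroup.mem_center_iff.2 ⟨y 0 0, ?_, ?_⟩)
  · rw [Fintype.card_fin]
    linear_combination det_eq_one y + y 0 0 * hdiag + y 0 1 * h10
  · ext i j
    fin_cases i <;> fin_cases j <;> simp [h10, h01, hdiag]

lemma eq_zero_of_mulVec_eq_zero {M : Matrix (Fin 2) (Fin 2) F} {v w : Fin 2 → F}
    (hvw : cross v w ≠ 0) (hv : M *ᵥ v = 0) (hw : M *ᵥ w = 0) : M = 0 := by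
  have hv0 := congrFun hv
  have hw0 := congrFun hw
  simp only [mulVec, dotProduct, Fin.sum_univ_two, Pi.zero_apply] at hv0 hw0
  ext i j
  refine (mul_eq_zero_iff_right hvw).1 ?_
  simp only [cross]
  match j with
  | 0 => linear_combination w 1 * hv0 i - v 1 * hw0 i
  | 1 => linear_combination v 0 * hw0 i - w 0 * hv0 i

lemma cross_smul_eq_add (u v w : Fin 2 → F) : cross v w • u = cross u w • v + cross v u • w := by
  ext i
  fin_cases i <;> simp [cross] <;> ring

/-- A noncentral `y` has a cyclic vector `v`, and `z` is determined by `z • v`. -/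
lemma exists_coe_eq_smul_one_add_smul {y z : SL(2, F)} (hy : y ∉ Subgroup.center SL(2, F))
    (hz : Commute z y) : ∃ a b : F, z.1 = a • 1 + b • y.1 := by
  obtain ⟨v, hv⟩ := exists_cross_smul_ne_zero hy
  set a := cross (z • v) (y • v) / cross v (y • v)
  set b := cross v (z • v) / cross v (y • v)
  have hzv : z • v = a • v + b • y • v := by
    rw [← smul_right_inj hv, cross_smul_eq_add, smul_add, smul_smul, smul_smul,
      mul_div_cancel₀ _ hv, mul_div_cancel₀ _ hv]
  have hzyv : z • y • v = a • y • v + b • y • y • v := by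
    rw [← SemigroupAction.mul_smul, hz.eq, SemigroupAction.mul_smul, hzv, smul_add, smul_comm y a,
      smul_comm y b]
  refine ⟨a, b, sub_eq_zero.1 (eq_zero_of_mulVec_eq_zero hv ?_ ?_)⟩
  · rw [sub_mulVec, add_mulVec, smul_mulVec, smul_mulVec, one_mulVec]
    exact sub_eq_zero.2 hzv
  · rw [sub_mulVec, add_mulVec, smul_mulVec, smul_mulVec, one_mulVec]
    exact sub_eq_zero.2 hzyv

lemma commute_of_commute {y z w : SL(2, F)} (hy : y ∉ Subgroup.center SL(2, F))
    (hz : Commute z y) (hw : Commute w y) : Commute z w := by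
  obtain ⟨a, b, h⟩ := exists_coe_eq_smul_one_add_smul hy hz
  have hyw : y.1 * w.1 = w.1 * y.1 := congrArg Subtype.val hw.eq.symm
  refine Subtype.ext ?_
  rw [Matrix.SpecialLinearGroup.coe_mul, Matrix.SpecialLinearGroup.coe_mul, h, add_mul, mul_add,
    smul_mul, smul_mul, Matrix.mul_smul, Matrix.mul_smul, one_mul, mul_one, hyw]

lemma notMem_center_of_trace_sq_ne {y : SL(2, F)} (hy : y.1.trace ^ 2 ≠ 4) :
    y ∉ Subgroup.center SL(2, F) := by
  intro h
  obtain ⟨r, hr, hry⟩ := Matrix.SpecialLinearGroup.mem_center_iff.1 h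
  rw [Fintype.card_fin] at hr
  refine hy ?_
  rw [← hry, scalar_apply, trace_diagonal, Fin.sum_univ_two]
  linear_combination 4 * hr

lemma eq_one_of_trace_eq_two {y w : SL(2, F)} (hy : y.1.trace ^ 2 ≠ 4) (hw : Commute w y)
    (htr : w.1.trace = 2) : w = 1 := by
  obtain ⟨a, b, hwy⟩ := exists_coe_eq_smul_one_add_smul (notMem_center_of_trace_sq_ne hy) hw
  have hdet := w.2
  rw [hwy, trace_add, trace_smul, trace_smul, trace_one, Fintype.card_fin, smul_eq_mul,
    smul_eq_mul, Nat.cast_ofNat] at htr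
  rw [hwy, det_fin_two] at hdet
  simp only [Matrix.add_apply, Matrix.smul_apply, smul_eq_mul, one_apply_eq, mul_one, mul_zero,
    one_apply_ne (zero_ne_one' (Fin 2)), one_apply_ne (zero_ne_one' (Fin 2)).symm, zero_add]
    at hdet
  replace hdet : a ^ 2 + a * b * y.1.trace + b ^ 2 = 1 := by
    rw [trace_fin_two]
    linear_combination hdet - b ^ 2 * det_eq_one y
  have hb : b ^ 2 * (y.1.trace ^ 2 - 4) = 0 := by
    linear_combination (b * y.1.trace + 2 * a + 2) * htr - 4 * hdet
  replace hb : b = 0 := pow_eq_zero_iff two_ne_zero |>.1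
    ((mul_eq_zero_iff_right (sub_ne_zero.2 hy)).1 hb)
  have ha : (a - 1) ^ 2 = 0 := by
    linear_combination a * htr - hdet + b * hb
  refine Subtype.ext ?_
  rw [hwy, hb, sub_eq_zero.1 (pow_eq_zero_iff two_ne_zero |>.1 ha), one_smul, zero_smul, add_zero]
  rfl

lemma det_sub_eq (x y : SL(2, F)) : (y.1 - x.1).det = 2 - (x⁻¹ * y).1.trace := by
  have hfactor : y.1 - x.1 = x.1 * ((x⁻¹ * y).1 - 1) := by
    rw [mul_sub, mul_one, ← Matrix.SpecialLinearGroup.coe_mul, mul_inv_cancel_left]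
  rw [hfactor, det_mul, x.2, one_mul, det_sub_one]

/-- Two commuting elements with the same trace are roots of the same quadratic polynomial. -/
lemma eq_or_eq_inv_or_trace_eq_two {z w : SL(2, F)} (hzw : Commute z w)
    (htr : z.1.trace = w.1.trace) :
    z = w ∨ z = w⁻¹ ∨ ((w⁻¹ * z).1.trace = 2 ∧ (w * z).1.trace = 2) := by
  have hzz : z.1.trace • z.1 - z.1 * z.1 = 1 := by
    have := congrArg Subtype.val (mul_inv_cancel z)
    rwa [Matrix.SpecialLinearGroup.coe_mul, coe_inv_eq_sub, mul_sub, Matrix.mul_smul, mul_one]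
      at this
  have hzero : (z.1 - w.1) * (z.1 - (w⁻¹).1) = 0 := by
    have hww : w.1 * (w⁻¹).1 = 1 := congrArg Subtype.val (mul_inv_cancel w)
    have hwz : z.1 * w.1 = w.1 * z.1 := congrArg Subtype.val hzw.eq
    rw [sub_mul, mul_sub, mul_sub, hww, ← hzz, coe_inv_eq_sub, ← htr, mul_sub, Matrix.mul_smul,
      mul_one, hwz]
    abel
  have isUnit_of_trace_ne {x : SL(2, F)} (hx : (x⁻¹ * z).1.trace ≠ 2) : IsUnit (z.1 - x.1) := by
    rw [isUnit_iff_isUnit_det, det_sub_eq]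
    exact (sub_ne_zero.2 hx.symm).isUnit
  refine or_iff_not_imp_left.2 fun hne ↦ or_iff_not_imp_left.2 fun hne' ↦ ⟨?_, ?_⟩
  · by_contra htr2
    exact hne' (Subtype.ext (sub_eq_zero.1 ((isUnit_of_trace_ne htr2).mul_right_eq_zero.1 hzero)))
  · by_contra htr2
    rw [← inv_inv w] at htr2
    exact hne (Subtype.ext (sub_eq_zero.1 ((isUnit_of_trace_ne htr2).mul_left_eq_zero.1 hzero)))

lemma eq_or_eq_inv_of_commute {y z w : SL(2, F)} (hy : y ∉ Subgroup.center SL(2, F))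
    (h4 : y.1.trace ^ 2 ≠ 4 ∨ z.1.trace ^ 2 ≠ 4) (hz : Commute z y) (hw : Commute w y)
    (htr : z.1.trace = w.1.trace) : z = w ∨ z = w⁻¹ := by
  rcases eq_or_eq_inv_or_trace_eq_two (commute_of_commute hy hz hw) htr with h | h | ⟨h, h'⟩
  · exact .inl h
  · exact .inr h
  rcases h4 with h4 | h4
  · have := eq_one_of_trace_eq_two h4 (hw.inv_left.mul_left hz) h
    exact .inl (inv_mul_eq_one.1 this).symm
  · refine absurd ?_ h4
    have := trace_inv_mul w z
    rw [h, h', ← htr] at this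
    linear_combination -this

lemma card_le_card_centralizerIn_mul [DecidableEq F] {H : Finset SL(2, F)} (hsym : ∀ h ∈ H, h⁻¹ ∈ H)
    {g : SL(2, F)} {k : ℕ} (hg : g ∈ H ^ k) :
    H.card ≤ (centralizerIn (H ^ 2) g).card *
      ((H ^ (k + 2)).filter fun x ↦ x.1.trace = g.1.trace).card := by
  refine Finset.card_le_mul_card_image_of_maps_to (f := fun x ↦ x * g * x⁻¹) (fun x hx ↦ ?_) _
    fun z _ ↦ card_filter_conj_eq_le (fun x hx y hy ↦ ?_) g z
  · refine Finset.mem_filter.2 ⟨?_, trace_conj x g⟩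
    rw [pow_succ, pow_succ']
    exact Finset.mul_mem_mul (Finset.mul_mem_mul hx hg) (hsym x hx)
  · exact pow_two H ▸ Finset.mul_mem_mul (hsym x hx) hy

lemma natCard_center_le_two : Nat.card (Subgroup.center SL(2, F)) ≤ 2 := by
  have : NeZero (max (Fintype.card (Fin 2)) 1) := ⟨two_ne_zero⟩
  rw [Nat.card_congr Matrix.SpecialLinearGroup.center_equiv_rootsOfUnity.toEquiv]
  exact card_rootsOfUnity F _

lemma card_filter_mem_center_le [DecidablePred (· ∈ Subgroup.center SL(2, F))]
    (A : Finset SL(2, F)) : (A.filter (· ∈ Subgroup.center SL(2, F))).card ≤ 2 := by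
  refine le_trans ?_ (natCard_center_le_two (F := F))
  have : NeZero (max (Fintype.card (Fin 2)) 1) := ⟨two_ne_zero⟩
  have := Finite.of_equiv _
    (Matrix.SpecialLinearGroup.center_equiv_rootsOfUnity (n := Fin 2) (R := F)).symm.toEquiv
  rw [← SetLike.coe_sort_coe, Nat.card_coe_set_eq, ← Set.ncard_coe_finset]
  exact Set.ncard_le_ncard fun x hx ↦ (Finset.mem_filter.1 hx).2

variable [DecidableEq F]

lemma card_filter_commute_trace_eq_le (A : Finset SL(2, F)) {y : SL(2, F)} {t : F}
    (hy : y ∉ Subgroup.center SL(2, F)) (h4 : y.1.trace ^ 2 ≠ 4 ∨ t ^ 2 ≠ 4) :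
    ((centralizerIn A y).filter fun z ↦ z.1.trace = t).card ≤ 2 := by
  obtain h | ⟨w, hw⟩ :=
    ((centralizerIn A y).filter fun z ↦ z.1.trace = t).eq_empty_or_nonempty
  · rw [h]
    exact Nat.zero_le 2
  obtain ⟨hwc, hwt⟩ := Finset.mem_filter.1 hw
  refine (Finset.card_le_card (t := {w, w⁻¹}) fun z hz ↦ ?_).trans Finset.card_le_two
  obtain ⟨hzc, hzt⟩ := Finset.mem_filter.1 hz
  rw [Finset.mem_insert, Finset.mem_singleton]
  exact eq_or_eq_inv_of_commute hy (hzt.symm ▸ h4) (mem_centralizerIn.1 hzc).2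
    (mem_centralizerIn.1 hwc).2 (hzt.trans hwt.symm)

variable [Fintype F]

lemma card_centralizerIn_univ_le {g : SL(2, F)} (hg : g.1.trace ^ 2 ≠ 4) :
    (centralizerIn Finset.univ g).card ≤ 2 * Fintype.card F :=
  Finset.card_le_mul_card_image_of_maps_to (f := fun z ↦ z.1.trace) (fun _ _ ↦ Finset.mem_univ _) 2
    fun _ _ ↦ card_filter_commute_trace_eq_le _ (notMem_center_of_trace_sq_ne hg) (.inl hg)

lemma card_filter_commute_conj_le {g y : SL(2, F)} (hg : g.1.trace ^ 2 ≠ 4)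
    (hy : y ∉ Subgroup.center SL(2, F)) :
    (Finset.univ.filter fun x ↦ y * (x * g * x⁻¹) = x * g * x⁻¹ * y).card ≤
      4 * Fintype.card F := by
  have := Finset.card_le_mul_card_image_of_maps_to (f := fun x ↦ x * g * x⁻¹)
    (s := Finset.univ.filter fun x ↦ y * (x * g * x⁻¹) = x * g * x⁻¹ * y)
    (t := (centralizerIn Finset.univ y).filter fun z ↦ z.1.trace = g.1.trace)
    (fun x hx ↦ Finset.mem_filter.2 ⟨mem_centralizerIn.2 ⟨Finset.mem_univ _,
      (Finset.mem_filter.1 hx).2.symm⟩, trace_conj x g⟩) (2 * Fintype.card F) fun z _ ↦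
      (Finset.card_le_card (Finset.filter_subset_filter _ (Finset.subset_univ _))).trans
        ((card_filter_conj_eq_le (fun _ _ _ _ ↦ Finset.mem_univ _) g z).trans
          (card_centralizerIn_univ_le hg))
  calc _ ≤ 2 * Fintype.card F * 2 :=
        this.trans (Nat.mul_le_mul_left _ (card_filter_commute_trace_eq_le _ hy (.inr hg)))
    _ = 4 * Fintype.card F := by ring

end Torus

end SL2

section Arithmetic

lemma pow_three_le_two_mul {M N : ℕ} (hN : 1 ≤ N) (h : M ^ 2 * (M - 1) ≤ N) : M ^ 3 ≤ 2 * N := by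
  obtain hM | hM := Nat.lt_or_ge M 2
  · calc M ^ 3 ≤ 1 ^ 3 := Nat.pow_le_pow_left (Nat.le_of_lt_succ hM) 3
      _ ≤ 2 * N := by omega
  · calc M ^ 3 = M ^ 2 * M := rfl
      _ ≤ M ^ 2 * (2 * (M - 1)) := Nat.mul_le_mul_left _ (by omega)
      _ ≤ 2 * N := by linarith

lemma pow_three_le_add {M N X : ℕ} (h : X ^ 3 ≤ 7 * M * X ^ 2 + 2 * N ^ 2) :
    X ^ 3 ≤ (14 * M) ^ 3 + 4 * N ^ 2 := by
  obtain hX | hX := Nat.lt_or_ge (14 * M) X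
  · have : 14 * M * X ^ 2 ≤ X * X ^ 2 := Nat.mul_le_mul_right _ hX.le
    have : X ^ 3 ≤ 4 * N ^ 2 := by linarith
    omega
  · exact (Nat.pow_le_pow_left hX 3).trans (Nat.le_add_right _ _)

end Arithmetic

namespace SL2

open Matrix MatrixGroups

section TorusGrowth

variable {F : Type*} [Field F] [DecidableEq F] {H : Finset SL(2, F)}

lemma exists_card_filter_smul_eq_le (hsym : ∀ h ∈ H, h⁻¹ ∈ H) (hone : 1 ∈ H)
    (hgen : Subgroup.closure (H : Set SL(2, F)) = ⊤) (m : ℕ) :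
    ∃ M : ℕ, 1 ≤ M ∧ M ^ 2 * (M - 1) ≤ (H ^ (3 * m + 2)).card ∧
      ∀ v : Fin 2 → F, v ≠ 0 → ((H ^ m).filter (· • v = v)).card ≤ M := by
  let fixators : Set ℕ := (fun v : Fin 2 → F ↦ ((H ^ m).filter (· • v = v)).card) '' {0}ᶜ
  have hbdd : BddAbove fixators := by
    refine ⟨(H ^ m).card, ?_⟩
    rintro - ⟨v, -, rfl⟩
    exact Finset.card_filter_le _ _
  obtain ⟨v, hv, hmax⟩ := Nat.sSup_mem (s := fixators)
    ((Set.nonempty_compl_of_nontrivial 0).image _) hbdd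
  have hone' : 1 ∈ H ^ m := Finset.one_mem_pow hone
  refine ⟨_, Finset.card_pos.2 ⟨1, Finset.mem_filter.2 ⟨hone', one_smul _ v⟩⟩, ?_,
    fun w hw ↦ (le_csSup hbdd ⟨w, hw, rfl⟩).trans hmax.ge⟩
  obtain ⟨h, hh, hcross⟩ := exists_mem_cross_smul_ne_zero hgen hv
  refine (card_sq_mul_card_sub_one_le hone' hcross).trans (Finset.card_le_card ?_)
  have hpow : H ^ (3 * m + 2) = H ^ m * H * H ^ m * H * H ^ m := by
    simp only [← pow_succ, ← pow_add]
    congr 1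
    omega
  rw [hpow]
  gcongr
  · exact Finset.singleton_subset_iff.2 hh
  · exact Finset.singleton_subset_iff.2 (hsym h hh)

lemma card_filter_trace_eq_pow_three_le (hsym : ∀ h ∈ H, h⁻¹ ∈ H) (hone : 1 ∈ H)
    (hgen : Subgroup.closure (H : Set SL(2, F)) = ⊤) {t : F} (ht : IsRegularTrace t) (m : ℕ) :
    ((H ^ m).filter fun x ↦ x.1.trace = t).card ^ 3 ≤
      14 ^ 3 * (2 * (H ^ (6 * m + 2)).card) + 4 * (H ^ (2 * m)).card ^ 2 := by
  obtain ⟨M, hM1, hMcard, hM⟩ := exists_card_filter_smul_eq_le hsym hone hgen (2 * m)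
  have hMcard' : M ^ 2 * (M - 1) ≤ (H ^ (6 * m + 2)).card := by
    rwa [← mul_assoc] at hMcard
  have h := pow_three_le_add <| card_pow_three_le_of_trace_eq
    (X := (H ^ m).filter fun x ↦ x.1.trace = t) (fun x hx y hy ↦ ?_) hM1 hM
    (fun x hx ↦ (Finset.mem_filter.1 hx).2) ht
  · refine h.trans ?_
    rw [mul_pow]
    gcongr
    exact pow_three_le_two_mul (Finset.card_pos.2 ⟨1, Finset.one_mem_pow hone⟩) hMcard'
  · rw [two_mul, pow_add]
    exact Finset.mul_mem_mul (inv_mem_pow_of_forall_inv_mem hsym (Finset.mem_filter.1 hx).1)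
      (Finset.mem_filter.1 hy).1

lemma card_filter_trace_eq_pow_seven_pow_three_le (hsym : ∀ h ∈ H, h⁻¹ ∈ H) (hone : 1 ∈ H)
    (hgen : Subgroup.closure (H : Set SL(2, F)) = ⊤) {α : ℝ} (hα1 : 1 ≤ α)
    (hα : ((H ^ 3).card : ℝ) ≤ α * H.card) {t : F} (ht : IsRegularTrace t) :
    (((H ^ 7).filter fun x ↦ x.1.trace = t).card : ℝ) ^ 3 ≤
      2 ^ 13 * α ^ 42 * (H.card : ℝ) ^ 2 := by
  have hinv : H⁻¹ = H := inv_eq_self_of_forall_inv_mem hsym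
  have hn : (1 : ℝ) ≤ H.card := by exact_mod_cast Finset.card_pos.2 ⟨1, hone⟩
  have h44 : ((H ^ 44).card : ℝ) ≤ α ^ 42 * H.card :=
    Finset.small_pow_of_small_tripling (by norm_num) hα hinv
  have h14 : ((H ^ 14).card : ℝ) ≤ α ^ 12 * H.card :=
    Finset.small_pow_of_small_tripling (by norm_num) hα hinv
  calc (((H ^ 7).filter fun x ↦ x.1.trace = t).card : ℝ) ^ 3
      ≤ 14 ^ 3 * (2 * (H ^ 44).card) + 4 * ((H ^ 14).card : ℝ) ^ 2 := by
        exact_mod_cast card_filter_trace_eq_pow_three_le hsym hone hgen ht 7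
    _ ≤ 14 ^ 3 * (2 * (α ^ 42 * H.card)) + 4 * (α ^ 12 * H.card) ^ 2 := by gcongr
    _ = 5488 * α ^ 42 * H.card ^ 1 + 4 * α ^ 24 * (H.card : ℝ) ^ 2 := by ring
    _ ≤ 5488 * α ^ 42 * (H.card : ℝ) ^ 2 + 4 * α ^ 42 * (H.card : ℝ) ^ 2 := by
        gcongr <;> norm_num [hα1, hn]
    _ ≤ 2 ^ 13 * α ^ 42 * (H.card : ℝ) ^ 2 := by
        rw [← add_mul, ← add_mul]
        gcongr
        norm_num

lemma card_le_mul_card_centralizerIn_pow_three (hsym : ∀ h ∈ H, h⁻¹ ∈ H) (hone : 1 ∈ H)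
    (hgen : Subgroup.closure (H : Set SL(2, F)) = ⊤) {α : ℝ} (hα1 : 1 ≤ α)
    (hα : ((H ^ 3).card : ℝ) ≤ α * H.card) {g : SL(2, F)} (hg : g ∈ H ^ 5)
    (ht : IsRegularTrace g.1.trace) :
    (H.card : ℝ) ≤ 2 ^ 13 * α ^ 42 * ((centralizerIn (H ^ 2) g).card : ℝ) ^ 3 := by
  have hn : (0 : ℝ) < H.card := by exact_mod_cast Finset.card_pos.2 ⟨1, hone⟩
  have horbit : (H.card : ℝ) ≤ (centralizerIn (H ^ 2) g).card *
      ((H ^ 7).filter fun x ↦ x.1.trace = g.1.trace).card := by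
    exact_mod_cast card_le_card_centralizerIn_mul hsym hg
  refine le_of_mul_le_mul_right ?_ (pow_pos hn 2)
  calc (H.card : ℝ) * H.card ^ 2 = H.card ^ 3 := by ring
    _ ≤ ((centralizerIn (H ^ 2) g).card *
        ((H ^ 7).filter fun x ↦ x.1.trace = g.1.trace).card : ℝ) ^ 3 := by gcongr
    _ ≤ ((centralizerIn (H ^ 2) g).card : ℝ) ^ 3 * (2 ^ 13 * α ^ 42 * (H.card : ℝ) ^ 2) := by
        rw [mul_pow]
        gcongr
        exact card_filter_trace_eq_pow_seven_pow_three_le hsym hone hgen hα1 hα ht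
    _ = _ := by ring

lemma card_centralizerIn_le_six {A : Finset SL(2, F)} {g : SL(2, F)} (hg : g.1.trace ^ 2 ≠ 4)
    (hA : ∀ y ∈ centralizerIn A g, ¬ IsRegularTrace y.1.trace) :
    (centralizerIn A g).card ≤ 6 := by
  have hmaps : ∀ y ∈ centralizerIn A g, y.1.trace ∈ ({0, 2, -2} : Finset F) := fun y hy ↦ by
    have hy0 : y.1.trace * ((y.1.trace - 2) * (y.1.trace + 2)) = 0 := by
      linear_combination pow_three_eq_of_not_isRegularTrace (hA y hy)
    simpa only [mul_eq_zero, sub_eq_zero, add_eq_zero_iff_eq_neg, Finset.mem_insert,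
      Finset.mem_singleton] using hy0
  refine (Finset.card_le_mul_card_image_of_maps_to hmaps 2 fun t _ ↦ ?_).trans
    (Nat.mul_le_mul_left 2 Finset.card_le_three)
  exact card_filter_commute_trace_eq_le A (notMem_center_of_trace_sq_ne hg) (.inl hg)

lemma exists_mem_centralizerIn_isRegularTrace (hsym : ∀ h ∈ H, h⁻¹ ∈ H) (hone : 1 ∈ H)
    (hgen : Subgroup.closure (H : Set SL(2, F)) = ⊤) {α : ℝ} (hα1 : 1 ≤ α)
    (hα : ((H ^ 3).card : ℝ) ≤ α * H.card) (hbig : 2 ^ 13 * α ^ 42 * 6 ^ 3 < (H.card : ℝ))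
    {g : SL(2, F)} (hg : g ∈ H ^ 5) (ht : IsRegularTrace g.1.trace) :
    ∃ y ∈ centralizerIn (H ^ 2) g, IsRegularTrace y.1.trace := by
  by_contra! hcon
  have hle : ((centralizerIn (H ^ 2) g).card : ℝ) ≤ 6 := by
    exact_mod_cast card_centralizerIn_le_six ht.2 hcon
  refine hbig.not_ge
    ((card_le_mul_card_centralizerIn_pow_three hsym hone hgen hα1 hα hg ht).trans ?_)
  gcongr

lemma exists_mem_centralizerIn_conj_isRegularTrace (hsym : ∀ h ∈ H, h⁻¹ ∈ H) (hone : 1 ∈ H)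
    (hgen : Subgroup.closure (H : Set SL(2, F)) = ⊤) {α : ℝ} (hα1 : 1 ≤ α)
    (hα : ((H ^ 3).card : ℝ) ≤ α * H.card) (hbig : 2 ^ 13 * α ^ 42 * 6 ^ 3 < (H.card : ℝ))
    {g : SL(2, F)} (hg : g ∈ H ^ 5) (ht : IsRegularTrace g.1.trace) (x : SL(2, F)) :
    ∃ y ∈ centralizerIn (H ^ 2) (x * g * x⁻¹), IsRegularTrace y.1.trace := by
  have hstep (h : SL(2, F)) (hh : h ∈ H) (x : SL(2, F))
      (hx : ∃ y ∈ centralizerIn (H ^ 2) (x * g * x⁻¹), IsRegularTrace y.1.trace) :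
      ∃ y ∈ centralizerIn (H ^ 2) (h * x * g * (h * x)⁻¹), IsRegularTrace y.1.trace := by
    obtain ⟨y, hy, hyt⟩ := hx
    obtain ⟨hyH, hyc⟩ := mem_centralizerIn.1 hy
    have hconj : h * y * h⁻¹ ∈ H ^ 5 := by
      refine Finset.pow_subset_pow_right hone (by norm_num : 4 ≤ 5) ?_
      rw [pow_succ, pow_succ']
      exact Finset.mul_mem_mul (Finset.mul_mem_mul hh hyH) (hsym h hh)
    rw [← trace_conj h y] at hyt
    obtain ⟨z, hz, hzt⟩ :=
      exists_mem_centralizerIn_isRegularTrace hsym hone hgen hα1 hα hbig hconj hyt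
    obtain ⟨hzH, hzc⟩ := mem_centralizerIn.1 hz
    have hgc : Commute (h * x * g * (h * x)⁻¹) (h * y * h⁻¹) := by
      have := hyc.symm.conj h
      rwa [← mul_assoc, ← mul_assoc, mul_assoc _ x⁻¹, ← _root_.mul_inv_rev] at this
    exact ⟨z, mem_centralizerIn.2
      ⟨hzH, commute_of_commute (notMem_center_of_trace_sq_ne hyt.2) hzc hgc⟩, hzt⟩
  have hx : x ∈ Subgroup.closure (H : Set SL(2, F)) := hgen ▸ Subgroup.mem_top x
  induction hx using Subgroup.closure_induction_left with
  | one =>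
    rw [one_mul, inv_one, mul_one]
    exact exists_mem_centralizerIn_isRegularTrace hsym hone hgen hα1 hα hbig hg ht
  | mul_left h hh x _ ih => exact hstep h hh x ih
  | inv_mul_cancel h hh x _ ih => exact hstep h⁻¹ (hsym h hh) x ih

lemma card_le_mul_card_centralizerIn_conj_pow_three (hsym : ∀ h ∈ H, h⁻¹ ∈ H) (hone : 1 ∈ H)
    (hgen : Subgroup.closure (H : Set SL(2, F)) = ⊤) {α : ℝ} (hα1 : 1 ≤ α)
    (hα : ((H ^ 3).card : ℝ) ≤ α * H.card) (hbig : 2 ^ 13 * α ^ 42 * 6 ^ 3 < (H.card : ℝ))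
    {g : SL(2, F)} (hg : g ∈ H ^ 5) (ht : IsRegularTrace g.1.trace) (x : SL(2, F)) :
    (H.card : ℝ) ≤ 2 ^ 13 * α ^ 42 * ((centralizerIn (H ^ 2) (x * g * x⁻¹)).card : ℝ) ^ 3 := by
  obtain ⟨y, hy, hyt⟩ :=
    exists_mem_centralizerIn_conj_isRegularTrace hsym hone hgen hα1 hα hbig hg ht x
  obtain ⟨hyH, hyc⟩ := mem_centralizerIn.1 hy
  refine (card_le_mul_card_centralizerIn_pow_three hsym hone hgen hα1 hα
    (Finset.pow_subset_pow_right hone (by norm_num) hyH) hyt).trans ?_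
  gcongr
  intro z hz
  obtain ⟨hzH, hzc⟩ := mem_centralizerIn.1 hz
  exact mem_centralizerIn.2
    ⟨hzH, commute_of_commute (notMem_center_of_trace_sq_ne hyt.2) hzc hyc.symm⟩

lemma card_centralizerIn_le_two_add [DecidablePred (· ∈ Subgroup.center SL(2, F))]
    (A : Finset SL(2, F)) (g : SL(2, F)) :
    (centralizerIn A g).card ≤
      2 + (A.filter fun y ↦ y ∉ Subgroup.center SL(2, F) ∧ y * g = g * y).card := by
  rw [← Finset.card_filter_add_card_filter_not (s := centralizerIn A g)
    (· ∈ Subgroup.center SL(2, F))]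
  refine Nat.add_le_add (card_filter_mem_center_le _) (Finset.card_le_card fun y hy ↦ ?_)
  obtain ⟨hyA, hyc⟩ := Finset.mem_filter.1 hy
  exact Finset.mem_filter.2 ⟨(Finset.mem_filter.1 hyA).1, hyc, (Finset.mem_filter.1 hyA).2⟩

variable [Fintype F]

/-- Each noncentral element lies in the centralizers of few conjugates of `g`. -/
lemma card_mul_le_of_forall_le_card_centralizerIn {A : Finset SL(2, F)} {g : SL(2, F)} {b : ℕ}
    (hg : g.1.trace ^ 2 ≠ 4) (hb : ∀ x, b ≤ (centralizerIn A (x * g * x⁻¹)).card) :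
    Fintype.card SL(2, F) * b ≤
      2 * Fintype.card SL(2, F) + 4 * Fintype.card F * A.card := by
  classical
  have hsum : ∑ x, (A.filter fun y ↦
      y ∉ Subgroup.center SL(2, F) ∧ y * (x * g * x⁻¹) = x * g * x⁻¹ * y).card ≤
        4 * Fintype.card F * A.card := by
    simp only [Finset.card_filter]
    rw [Finset.sum_comm, mul_comm, ← smul_eq_mul]
    refine Finset.sum_le_card_nsmul _ _ _ fun y _ ↦ ?_
    by_cases hy : y ∈ Subgroup.center SL(2, F)
    · simp [hy]
    · simpa [hy] using card_filter_commute_conj_le hg hy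
  calc Fintype.card SL(2, F) * b = ∑ _x : SL(2, F), b := by
        rw [Finset.sum_const, Finset.card_univ, smul_eq_mul]
    _ ≤ ∑ x, (2 + _) :=
        Finset.sum_le_sum fun x _ ↦ (hb x).trans (card_centralizerIn_le_two_add A (x * g * x⁻¹))
    _ ≤ 2 * Fintype.card SL(2, F) + 4 * Fintype.card F * A.card := by
        rw [Finset.sum_add_distrib, Finset.sum_const, Finset.card_univ, smul_eq_mul, mul_comm]
        exact Nat.add_le_add_left hsum _

lemma exists_card_le_mul_pow_three_and_card_mul_le (h3 : (3 : F) ≠ 0)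
    (hsym : ∀ h ∈ H, h⁻¹ ∈ H) (hone : 1 ∈ H)
    (hgen : Subgroup.closure (H : Set SL(2, F)) = ⊤) {α : ℝ} (hα1 : 1 ≤ α)
    (hα : ((H ^ 3).card : ℝ) ≤ α * H.card) (hbig : 2 ^ 13 * α ^ 42 * 6 ^ 3 < (H.card : ℝ)) :
    ∃ b : ℕ, (H.card : ℝ) ≤ 2 ^ 13 * α ^ 42 * (b : ℝ) ^ 3 ∧
      Fintype.card SL(2, F) * b ≤
        2 * Fintype.card SL(2, F) + 4 * Fintype.card F * (H ^ 2).card := by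
  obtain ⟨g, hg, ht⟩ := exists_mem_pow_five_isRegularTrace h3 hsym hone hgen
  obtain ⟨x, -, hmin⟩ := Finset.exists_min_image Finset.univ
    (fun x ↦ (centralizerIn (H ^ 2) (x * g * x⁻¹)).card) Finset.univ_nonempty
  exact ⟨_, card_le_mul_card_centralizerIn_conj_pow_three hsym hone hgen hα1 hα hbig hg ht x,
    card_mul_le_of_forall_le_card_centralizerIn ht.2 fun y ↦ hmin y (Finset.mem_univ y)⟩

end TorusGrowth

end SL2

/-! ### Quasirandomness -/

universe u

/-- A finite group is `d`-quasirandom in the sense of Gowers if all its nontrivial complex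
representations have dimension at least `d`. The representation spaces range over the universe of
the group, which is where its regular representation lives. -/
def IsQuasirandom (Γ : Type u) [Group Γ] (d : ℝ) : Prop :=
  ∀ (V : Type u) [AddCommGroup V] [Module ℂ V] [FiniteDimensional ℂ V] (ρ : Γ →* Module.End ℂ V),
    ρ ≠ 1 → d ≤ Module.finrank ℂ V

section Weights

variable {F V : Type*} [Field F] [AddCommGroup V] [Module ℂ V]

lemma exists_weight_vector [Finite F] {ψ : AddChar F ℂ} (hψ : ψ.IsPrimitive)
    {E : Multiplicative F →* Module.End ℂ V} (hE : E ≠ 1) :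
    ∃ j ≠ 0, ∃ w ≠ 0, ∀ s, E (.ofAdd s) w = ψ (j * s) • w := by
  classical
  cases nonempty_fintype F
  by_contra! hcon
  refine hE (MonoidHom.ext fun s ↦ LinearMap.ext fun v ↦ ?_)
  let w (j : F) : V := ∑ k, ψ (-(j * k)) • E (.ofAdd k) v
  have hw (j s : F) : E (.ofAdd s) (w j) = ψ (j * s) • w j := by
    simp only [w, map_sum, map_smul, Finset.smul_sum]
    rw [← Equiv.sum_comp (Equiv.addLeft s) fun k ↦ ψ (j * s) • ψ (-(j * k)) • E (.ofAdd k) v]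
    refine Finset.sum_congr rfl fun k _ ↦ ?_
    rw [smul_smul, ← AddChar.map_add_eq_mul, ← Module.End.mul_apply, ← map_mul, ← ofAdd_add,
      Equiv.coe_addLeft, mul_add, neg_add, add_neg_cancel_left]
  have hw0 (j : F) (hj : j ≠ 0) : w j = 0 := by
    by_contra hne
    obtain ⟨s, hs⟩ := hcon j hj (w j) hne
    exact hs (hw j s)
  have hinversion : w 0 = (Fintype.card F : ℂ) • v := by
    calc w 0 = ∑ j, w j := (Fintype.sum_eq_single 0 hw0).symm
      _ = ∑ k, (∑ j, ψ (j * -k)) • E (.ofAdd k) v := by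
          simp only [w, Finset.sum_smul, mul_neg]
          exact Finset.sum_comm
      _ = ∑ k, (if k = 0 then (Fintype.card F : ℂ) else 0) • E (.ofAdd k) v := by
          simp only [AddChar.sum_mulShift _ hψ, neg_eq_zero, Nat.cast_ite, Nat.cast_zero]
      _ = (Fintype.card F : ℂ) • v := by
          simp [ite_smul]
  have hinvariant := hw 0 (Multiplicative.toAdd s)
  rw [hinversion, zero_mul, AddChar.map_zero_eq_one, one_smul, map_smul, ofAdd_toAdd] at hinvariant
  exact smul_right_injective V (Nat.cast_ne_zero.2 Fintype.card_ne_zero) hinvariant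

lemma card_le_finrank_of_weight_vectors [FiniteDimensional ℂ V] {ψ : AddChar F ℂ}
    (hψ : ψ.IsPrimitive) {E : Multiplicative F →* Module.End ℂ V} {S : Finset F}
    (hS : ∀ j ∈ S, ∃ w ≠ 0, ∀ s, E (.ofAdd s) w = ψ (j * s) • w) :
    S.card ≤ Module.finrank ℂ V := by
  have hindep : iSupIndep fun χ : Multiplicative F → ℂ ↦ ⨅ s, (E s).maxGenEigenspace (χ s) :=
    Module.End.independent_iInf_maxGenEigenspace_of_forall_mapsTo E fun s t φ ↦
      Module.End.mapsTo_maxGenEigenspace_of_comm ((Commute.all t s).map E) φ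
  have hinj : Function.Injective fun (j : S) (s : Multiplicative F) ↦ ψ (j * s.toAdd) :=
    fun i j hij ↦ Subtype.ext (AddChar.to_mulShift_inj_of_isPrimitive hψ
      (DFunLike.ext _ _ fun s ↦ congrFun hij (.ofAdd s)))
  choose! w hw0 hw using hS
  have hli : LinearIndependent ℂ fun j : S ↦ w j := by
    refine (hindep.comp hinj).linearIndependent _ (fun j ↦ ?_) fun j ↦ hw0 j j.2
    refine Submodule.mem_iInf _ |>.2 fun s ↦ ?_
    exact Module.End.mem_maxGenEigenspace _ _ _ |>.2
      ⟨1, by rw [pow_one, LinearMap.sub_apply]; exact sub_eq_zero.2 (hw j j.2 s.toAdd)⟩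
  simpa using hli.fintype_card_le_finrank

lemma card_sub_one_le_two_mul_card_image_mul_sq [Fintype F] [DecidableEq F] {j : F} (hj : j ≠ 0) :
    Fintype.card F - 1 ≤ 2 * (Finset.univ.image fun a : Fˣ ↦ j * (a : F) ^ 2).card := by
  rw [← Fintype.card_units, ← Finset.card_univ]
  refine Finset.card_le_mul_card_image _ 2 fun b hb ↦ ?_
  obtain ⟨a, -, rfl⟩ := Finset.mem_image.1 hb
  refine (Finset.card_le_card (t := {a, -a}) fun c hc ↦ ?_).trans Finset.card_le_two
  have hac : (c : F) ^ 2 = a ^ 2 := mul_left_cancel₀ hj (Finset.mem_filter.1 hc).2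
  rw [Finset.mem_insert, Finset.mem_singleton]
  exact (sq_eq_sq_iff_eq_or_eq_neg.1 hac).imp Units.ext Units.ext

end Weights

namespace SL2

open Matrix MatrixGroups

section Representation

variable {F : Type u} [Field F]

/-- The upper unitriangular subgroup of `SL(2, F)`, parametrized by the additive group of `F`. -/
def upperUnipotent : Multiplicative F →* SL(2, F) where
  toFun s := .transvection (zero_ne_one' (Fin 2)) s.toAdd
  map_one' := Matrix.SpecialLinearGroup.transvection_coeff_zero _
  map_mul' _ _ := Matrix.SpecialLinearGroup.transvection_add _ _ _

lemma isConj_transvection_one_zero (s : F) :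
    IsConj (upperUnipotent (.ofAdd (-s)))
      (Matrix.SpecialLinearGroup.transvection (zero_ne_one' (Fin 2)).symm s) := by
  have hdet : !![(0 : F), -1; 1, 0].det = 1 := by simp
  refine isConj_iff.2 ⟨⟨!![0, -1; 1, 0], hdet⟩, mul_inv_eq_iff_eq_mul.2 (Subtype.ext ?_)⟩
  change !![0, -1; 1, 0] * (Matrix.SpecialLinearGroup.transvection (zero_ne_one' (Fin 2)) (-s)).1 =
    (Matrix.SpecialLinearGroup.transvection (zero_ne_one' (Fin 2)).symm s).1 * !![0, -1; 1, 0]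
  rw [coe_transvection_zero_one, coe_transvection_one_zero]
  simp

lemma eq_one_of_comp_upperUnipotent_eq_one {M : Type*} [Monoid M] {ρ : SL(2, F) →* M}
    (h : ρ.comp upperUnipotent = 1) : ρ = 1 := by
  have hu (s : F) : ρ (upperUnipotent (.ofAdd s)) = 1 := DFunLike.congr_fun h _
  refine MonoidHom.ext fun x ↦ SL2.transvection_induction (fun x ↦ ρ x = 1) (fun i j hij s ↦ ?_)
    (fun x y hx hy ↦ by rw [map_mul, hx, hy, one_mul]) x
  match i, j with
  | 0, 0 | 1, 1 => exact absurd rfl hij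
  | 0, 1 => exact hu s
  | 1, 0 =>
    have := ρ.map_isConj (isConj_transvection_one_zero s)
    rwa [hu, isConj_one_right] at this

lemma upperUnipotent_mul_diag2 {a : F} (ha : a ≠ 0) (s : F) :
    upperUnipotent (.ofAdd s) * .diag2 a ha =
      .diag2 a ha * upperUnipotent (.ofAdd (a⁻¹ ^ 2 * s)) := by
  refine Subtype.ext ?_
  rw [Matrix.SpecialLinearGroup.coe_mul, Matrix.SpecialLinearGroup.coe_mul,
    Matrix.SpecialLinearGroup.diag2_coe']
  simp [upperUnipotent, coe_transvection_zero_one]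
  field_simp

/-- Conjugation by diagonal matrices scales the nonzero weights of the unipotent subgroup by
squares. -/
theorem isQuasirandom [Fintype F] : IsQuasirandom SL(2, F) ((Fintype.card F - 1) / 2) := by
  classical
  intro V _ _ _ ρ hρ
  have hψ := AddChar.FiniteField.primitiveChar_to_Complex_isPrimitive F
  obtain ⟨j, hj, w, hw0, hw⟩ :=
    exists_weight_vector hψ fun h ↦ hρ (eq_one_of_comp_upperUnipotent_eq_one h)
  have hweight (a : Fˣ) : ρ (.diag2 (a : F)⁻¹ (inv_ne_zero a.ne_zero)) w ≠ 0 ∧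
      ∀ s, ρ.comp upperUnipotent (.ofAdd s) (ρ (.diag2 (a : F)⁻¹ (inv_ne_zero a.ne_zero)) w) =
        AddChar.FiniteField.primitiveChar_to_Complex F (j * a ^ 2 * s) •
          ρ (.diag2 (a : F)⁻¹ (inv_ne_zero a.ne_zero)) w := by
    refine ⟨fun h ↦ hw0 ?_, fun s ↦ ?_⟩
    · rw [← Module.End.one_apply (R := ℂ) w, ← map_one ρ, ← inv_mul_cancel
        (Matrix.SpecialLinearGroup.diag2 (a : F)⁻¹ (inv_ne_zero a.ne_zero)), map_mul,
        Module.End.mul_apply, h, map_zero]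
    · rw [MonoidHom.comp_apply, ← Module.End.mul_apply, ← map_mul, upperUnipotent_mul_diag2,
        inv_inv, map_mul, Module.End.mul_apply, ← MonoidHom.comp_apply, hw, map_smul, mul_assoc]
  have hle := (card_sub_one_le_two_mul_card_image_mul_sq hj).trans <| Nat.mul_le_mul_left 2 <|
    card_le_finrank_of_weight_vectors (E := ρ.comp upperUnipotent) hψ fun i hi ↦ by
      obtain ⟨a, -, rfl⟩ := Finset.mem_image.1 hi
      exact ⟨_, hweight a⟩
  rw [tsub_le_iff_right] at hle
  rw [div_le_iff₀ two_pos, sub_le_iff_le_add, mul_comm]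
  exact_mod_cast hle

end Representation

end SL2

section LargeEigenspaces

variable {E : Type*} [NormedAddCommGroup E] [InnerProductSpace ℂ E] [FiniteDimensional ℂ E]

lemma mul_eigenvalue_le_sum_of_le_finrank_eigenspace {S : Module.End ℂ E}
    (hS : LinearMap.IsPositive S) {d : ℝ}
    (hd : ∀ μ : ℂ, μ ≠ 0 → S.HasEigenvalue μ → d ≤ Module.finrank ℂ (S.eigenspace μ))
    (i : Fin (Module.finrank ℂ E)) :
    d * hS.isSymmetric.eigenvalues rfl i ≤ ∑ j, hS.isSymmetric.eigenvalues rfl j := by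
  set ev := hS.isSymmetric.eigenvalues rfl
  have hev : ∀ j, 0 ≤ ev j := hS.nonneg_eigenvalues rfl
  obtain h0 | h0 := eq_or_ne (ev i) 0
  · rw [h0, mul_zero]
    exact Finset.sum_nonneg fun j _ ↦ hev j
  have hdim := hd (ev i) (by exact_mod_cast h0) (hS.isSymmetric.hasEigenvalue_eigenvalues rfl i)
  rw [← hS.isSymmetric.card_filter_eigenvalues_eq rfl] at hdim
  calc d * ev i ≤ _ := mul_le_mul_of_nonneg_right hdim (hev i)
    _ = ∑ j with (ev j : ℂ) = ev i, ev j := by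
      rw [← nsmul_eq_mul, ← Finset.sum_const]
      refine Finset.sum_congr rfl fun j hj ↦ ?_
      exact (Complex.ofReal_injective (Finset.mem_filter.1 hj).2).symm
    _ ≤ ∑ j, ev j := Finset.sum_le_univ_sum_of_nonneg hev

lemma mul_re_inner_le_re_trace_mul_of_le_finrank_eigenspace {S : Module.End ℂ E}
    (hS : LinearMap.IsPositive S) {d : ℝ}
    (hd : ∀ μ : ℂ, μ ≠ 0 → S.HasEigenvalue μ → d ≤ Module.finrank ℂ (S.eigenspace μ)) (f : E) :
    d * (inner ℂ f (S f)).re ≤ (LinearMap.trace ℂ E S).re * ‖f‖ ^ 2 := by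
  set ev := hS.isSymmetric.eigenvalues rfl
  set e := hS.isSymmetric.eigenvectorBasis rfl
  have hinner : (inner ℂ f (S f)).re = ∑ i, ev i * ‖inner ℂ (e i) f‖ ^ 2 := by
    rw [← e.sum_inner_mul_inner, Complex.re_sum]
    refine Finset.sum_congr rfl fun i _ ↦ ?_
    have heigen : S (e i) = (ev i : ℂ) • e i := hS.isSymmetric.apply_eigenvectorBasis rfl i
    rw [← hS.isSymmetric, heigen, inner_smul_left,
      mul_left_comm, Complex.conj_ofReal, Complex.re_ofReal_mul, ← inner_conj_symm f,
      Complex.conj_mul', ← Complex.ofReal_pow, Complex.ofReal_re]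
  have htrace : (LinearMap.trace ℂ E S).re = ∑ i, ev i :=
    hS.isSymmetric.re_trace_eq_sum_eigenvalues rfl
  rw [hinner, htrace, ← e.sum_sq_norm_inner_right f, Finset.mul_sum, Finset.mul_sum]
  refine Finset.sum_le_sum fun i _ ↦ ?_
  rw [← mul_assoc]
  gcongr
  exact mul_eigenvalue_le_sum_of_le_finrank_eigenspace hS hd i

lemma mul_sq_norm_apply_le_of_le_finrank_eigenspace {T : Module.End ℂ E} {d : ℝ}
    (hd : ∀ μ : ℂ, μ ≠ 0 → Module.End.HasEigenvalue (LinearMap.adjoint T * T) μ →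
      d ≤ Module.finrank ℂ (Module.End.eigenspace (LinearMap.adjoint T * T) μ))
    {ι : Type*} [Fintype ι] (δ : OrthonormalBasis ι ℂ E) (f : E) :
    d * ‖T f‖ ^ 2 ≤ (∑ x, ‖T (δ x)‖ ^ 2) * ‖f‖ ^ 2 := by
  have hinner (v : E) : inner ℂ v ((LinearMap.adjoint T * T) v) = (‖T v‖ : ℂ) ^ 2 := by
    rw [Module.End.mul_apply, LinearMap.adjoint_inner_right, inner_self_eq_norm_sq_to_K]
    rfl
  have h : d * (inner ℂ f ((LinearMap.adjoint T * T) f)).re ≤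
      (LinearMap.trace ℂ E (LinearMap.adjoint T * T)).re * ‖f‖ ^ 2 :=
    mul_re_inner_le_re_trace_mul_of_le_finrank_eigenspace
      (LinearMap.isPositive_adjoint_comp_self T) hd f
  simp only [LinearMap.trace_eq_sum_inner _ δ, hinner] at h
  exact_mod_cast h

end LargeEigenspaces

section RightRegularRepresentation

variable {Γ : Type*} [Group Γ] [Fintype Γ]

/-- The right regular representation `(g • f) x = f (x * g)` of a finite group `Γ`, on the space of
complex functions with its `ℓ²` norm. -/
noncomputable def rightRegular (Γ : Type*) [Group Γ] [Fintype Γ] :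
    Γ →* Module.End ℂ (EuclideanSpace ℂ Γ) where
  toFun g :=
    { toFun f := WithLp.toLp 2 fun x ↦ f (x * g)
      map_add' _ _ := rfl
      map_smul' _ _ := rfl }
  map_one' := by ext f x; simp
  map_mul' g g' := by ext f x; exact congrArg f (mul_assoc x g g').symm

lemma rightRegular_apply (g : Γ) (f : EuclideanSpace ℂ Γ) (x : Γ) :
    rightRegular Γ g f x = f (x * g) := rfl

end RightRegularRepresentation

section IndicatorVector

variable {Γ : Type*} [Fintype Γ] [DecidableEq Γ]

/-- The indicator function of a finite set as a vector of `ℓ²`. -/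
noncomputable def indicatorVector (B : Finset Γ) : EuclideanSpace ℂ Γ :=
  WithLp.toLp 2 fun x ↦ if x ∈ B then 1 else 0

lemma sq_norm_indicatorVector (B : Finset Γ) : ‖indicatorVector B‖ ^ 2 = B.card := by
  have hentry (x : Γ) : ‖indicatorVector B x‖ ^ 2 = if x ∈ B then (1 : ℝ) else 0 := by
    rw [indicatorVector, apply_ite (fun z : ℂ ↦ ‖z‖ ^ 2)]
    simp
  simp [EuclideanSpace.norm_sq_eq, hentry]

end IndicatorVector

section BalancedConvolution

variable {Γ : Type*} [Group Γ] [Fintype Γ] [DecidableEq Γ]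

/-- The kernel of convolution by the balanced indicator function `1_H - |H| / |Γ|` of `H`. -/
noncomputable def balancedKernel (H : Finset Γ) : Matrix Γ Γ ℝ :=
  .of fun x y ↦ (if x * y⁻¹ ∈ H then 1 else 0) - (H.card : ℝ) / Fintype.card Γ

/-- Convolution by the balanced indicator function `1_H - |H| / |Γ|` of `H`: it kills the constants
and commutes with right translations. -/
noncomputable def balancedConvolution (H : Finset Γ) : Module.End ℂ (EuclideanSpace ℂ Γ) :=
  Matrix.toEuclideanLin ((balancedKernel H).map Complex.ofReal)

lemma balancedConvolution_apply (H : Finset Γ) (f : EuclideanSpace ℂ Γ) (x : Γ) :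
    balancedConvolution H f x = ∑ y, (balancedKernel H x y : ℂ) * f y := by
  simp [balancedConvolution, Matrix.toLpLin_apply, Matrix.mulVec, dotProduct]

lemma balancedConvolution_adjoint (H : Finset Γ) :
    LinearMap.adjoint (balancedConvolution H) = balancedConvolution H⁻¹ := by
  rw [balancedConvolution, ← Matrix.toEuclideanLin_conjTranspose_eq_adjoint, balancedConvolution]
  congr 1
  ext x y
  simp [balancedKernel]

lemma commute_balancedConvolution_rightRegular (H : Finset Γ) (g : Γ) :
    Commute (balancedConvolution H) (rightRegular Γ g) := by
  ext f x
  rw [Module.End.mul_apply, Module.End.mul_apply, rightRegular_apply, balancedConvolution_apply,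
    balancedConvolution_apply,
    ← Equiv.sum_comp (Equiv.mulRight g) fun y ↦ (balancedKernel H (x * g) y : ℂ) * f y]
  refine Finset.sum_congr rfl fun y _ ↦ ?_
  simp [rightRegular_apply, balancedKernel, mul_assoc]

lemma sum_ite_mul_inv_mem_right (H : Finset Γ) (x : Γ) :
    ∑ y, (if x * y⁻¹ ∈ H then (1 : ℝ) else 0) = H.card := by
  rw [← Equiv.sum_comp ((Equiv.inv Γ).trans (Equiv.mulRight x))]
  simp

lemma sum_ite_mul_inv_mem_left (H : Finset Γ) (y : Γ) :
    ∑ x, (if x * y⁻¹ ∈ H then (1 : ℝ) else 0) = H.card := by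
  rw [← Equiv.sum_comp (Equiv.mulRight y)]
  simp

lemma sum_balancedKernel (H : Finset Γ) (x : Γ) : ∑ y, balancedKernel H x y = 0 := by
  have hΓ : (Fintype.card Γ : ℝ) ≠ 0 := Nat.cast_ne_zero.2 Fintype.card_ne_zero
  simp only [balancedKernel, Matrix.of_apply, Finset.sum_sub_distrib, sum_ite_mul_inv_mem_right,
    Finset.sum_const, Finset.card_univ, nsmul_eq_mul]
  rw [mul_div_cancel₀ _ hΓ, sub_self]

lemma sum_balancedKernel_sq_le (H : Finset Γ) (y : Γ) :
    ∑ x, balancedKernel H x y ^ 2 ≤ H.card := by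
  have hΓ : (Fintype.card Γ : ℝ) ≠ 0 := Nat.cast_ne_zero.2 Fintype.card_ne_zero
  set c : ℝ := H.card / Fintype.card Γ with hc
  have hsq (x : Γ) : balancedKernel H x y ^ 2 =
      (if x * y⁻¹ ∈ H then 1 else 0) * (1 - 2 * c) + c ^ 2 := by
    rw [balancedKernel, Matrix.of_apply]
    split_ifs <;> ring
  have hsum : ∑ x, balancedKernel H x y ^ 2 = H.card - H.card * c := by
    simp only [hsq, Finset.sum_add_distrib, ← Finset.sum_mul, sum_ite_mul_inv_mem_left,
      Finset.sum_const, Finset.card_univ, nsmul_eq_mul]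
    rw [hc]
    field_simp
    ring
  have : 0 ≤ H.card * c := by positivity
  linarith

lemma sum_sq_norm_balancedConvolution_basisFun_le (H : Finset Γ) :
    ∑ y, ‖balancedConvolution H (EuclideanSpace.basisFun Γ ℂ y)‖ ^ 2 ≤
      Fintype.card Γ * H.card := by
  have hcol (y : Γ) : ‖balancedConvolution H (EuclideanSpace.basisFun Γ ℂ y)‖ ^ 2 =
      ∑ x, balancedKernel H x y ^ 2 := by
    rw [EuclideanSpace.norm_sq_eq]
    refine Finset.sum_congr rfl fun x _ ↦ ?_
    rw [balancedConvolution_apply]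
    simp
  simp only [hcol]
  calc _ ≤ ∑ _y : Γ, (H.card : ℝ) := Finset.sum_le_sum fun y _ ↦ sum_balancedKernel_sq_le H y
    _ = _ := by rw [Finset.sum_const, Finset.card_univ, nsmul_eq_mul]

lemma balancedConvolution_indicatorVector_apply {H B : Finset Γ} {x : Γ}
    (hx : ∀ y ∈ B, x * y⁻¹ ∉ H) :
    balancedConvolution H (indicatorVector B) x =
      (-(H.card * B.card / Fintype.card Γ : ℝ) : ℝ) := by
  have hentry (y : Γ) : (balancedKernel H x y : ℂ) * indicatorVector B y =
      ((if y ∈ B then -(H.card / Fintype.card Γ : ℝ) else 0 : ℝ) : ℂ) := by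
    by_cases hy : y ∈ B
    · simp [indicatorVector, balancedKernel, hy, hx y hy]
    · simp [indicatorVector, hy]
  simp only [balancedConvolution_apply, hentry, ← Complex.ofReal_sum, ← Finset.sum_filter,
    Finset.filter_univ_mem, Finset.sum_const, nsmul_eq_mul]
  congr 1
  ring

lemma card_mul_sq_le_sq_norm_balancedConvolution {A H B : Finset Γ} {g : Γ} (hg : g ∉ A * H * B) :
    A.card * (H.card * B.card / Fintype.card Γ : ℝ) ^ 2 ≤
      ‖balancedConvolution H (indicatorVector B)‖ ^ 2 := by
  have hvalue (a : Γ) (ha : a ∈ A) : balancedConvolution H (indicatorVector B) (a⁻¹ * g) =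
      (-(H.card * B.card / Fintype.card Γ : ℝ) : ℝ) := by
    refine balancedConvolution_indicatorVector_apply fun y hy hmem ↦ hg ?_
    have hfactor : g = a * (a⁻¹ * g * y⁻¹) * y := by group
    rw [hfactor]
    exact Finset.mul_mem_mul (Finset.mul_mem_mul ha hmem) hy
  have hinj : Function.Injective fun a : Γ ↦ a⁻¹ * g :=
    (mul_left_injective g).comp inv_injective
  calc _ = ∑ a ∈ A, ‖balancedConvolution H (indicatorVector B) (a⁻¹ * g)‖ ^ 2 := by
        rw [Finset.sum_congr rfl fun a ha ↦ by
          rw [hvalue a ha, Complex.norm_real, Real.norm_eq_abs, sq_abs, neg_sq]]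
        rw [Finset.sum_const, nsmul_eq_mul]
    _ = ∑ x ∈ A.map ⟨_, hinj⟩, ‖balancedConvolution H (indicatorVector B) x‖ ^ 2 := by
        rw [Finset.sum_map]
        rfl
    _ ≤ _ := by
        rw [EuclideanSpace.norm_sq_eq]
        exact Finset.sum_le_univ_sum_of_nonneg fun x ↦ sq_nonneg _

end BalancedConvolution

section IsQuasirandom

variable {Γ : Type u} [Group Γ] [Fintype Γ] {d : ℝ}

lemma IsQuasirandom.le_finrank_eigenspace (hΓ : IsQuasirandom Γ d)
    {S : Module.End ℂ (EuclideanSpace ℂ Γ)} (hS : ∀ g, Commute S (rightRegular Γ g))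
    (hconst : ∀ f : EuclideanSpace ℂ Γ, (∀ x, f x = f 1) → S f = 0)
    {μ : ℂ} (hμ : μ ≠ 0) (hev : S.HasEigenvalue μ) :
    d ≤ Module.finrank ℂ (S.eigenspace μ) := by
  have hinv (g : Γ) : Set.MapsTo (rightRegular Γ g) (S.eigenspace μ) (S.eigenspace μ) :=
    Module.End.mapsTo_genEigenspace_of_comm (hS g) μ 1
  let ρ : Γ →* Module.End ℂ (S.eigenspace μ) :=
    { toFun g := (rightRegular Γ g).restrict (hinv g)
      map_one' := by ext f : 2; simp
      map_mul' g g' := by ext f : 2; exact LinearMap.congr_fun (map_mul (rightRegular Γ) g g') f.1 }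
  refine hΓ _ ρ fun hρ ↦ ?_
  obtain ⟨f, hf, hf0⟩ := hev.exists_hasEigenvector
  have hfconst (x : Γ) : f x = f 1 := by
    have hρf : ρ x ⟨f, hf⟩ = ⟨f, hf⟩ := by rw [hρ]; rfl
    calc f x = rightRegular Γ x f 1 := by rw [rightRegular_apply, one_mul]
      _ = f 1 := congrArg (fun v : S.eigenspace μ ↦ v.1 1) hρf
  rw [Module.End.mem_eigenspace_iff, hconst f hfconst] at hf
  exact smul_ne_zero hμ hf0 hf.symm

variable [DecidableEq Γ]

lemma IsQuasirandom.mul_sq_norm_balancedConvolution_le (hΓ : IsQuasirandom Γ d) (H : Finset Γ)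
    (f : EuclideanSpace ℂ Γ) :
    d * ‖balancedConvolution H f‖ ^ 2 ≤ Fintype.card Γ * H.card * ‖f‖ ^ 2 := by
  refine (mul_sq_norm_apply_le_of_le_finrank_eigenspace (fun μ hμ hev ↦ ?_)
    (EuclideanSpace.basisFun Γ ℂ) f).trans ?_
  · refine hΓ.le_finrank_eigenspace (fun g ↦ ?_) (fun f hf ↦ ?_) hμ hev
    · rw [balancedConvolution_adjoint]
      exact (commute_balancedConvolution_rightRegular _ g).mul_left
        (commute_balancedConvolution_rightRegular _ g)
    · have h0 : balancedConvolution H f = 0 := by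
        ext x
        simp only [balancedConvolution_apply, hf, ← Finset.sum_mul, ← Complex.ofReal_sum,
          sum_balancedKernel, Complex.ofReal_zero, zero_mul, PiLp.zero_apply]
      rw [Module.End.mul_apply, h0, map_zero]
  · gcongr
    exact sum_sq_norm_balancedConvolution_basisFun_le H

theorem IsQuasirandom.mul_card_mul_card_mul_card_le (hΓ : IsQuasirandom Γ d)
    {A H B : Finset Γ} {g : Γ} (hg : g ∉ A * H * B) :
    d * (A.card * H.card * B.card) ≤ (Fintype.card Γ : ℝ) ^ 3 := by
  set N : ℝ := (Fintype.card Γ : ℝ)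
  have hN0 : 0 < N := Nat.cast_pos.2 Fintype.card_pos
  set m : ℝ := H.card * B.card with hm
  obtain hm0 | hm0 : m = 0 ∨ 0 < m := (by positivity : 0 ≤ m).eq_or_lt'
  · rw [mul_assoc, ← hm, hm0, mul_zero, mul_zero]
    positivity
  obtain hd0 | hd0 := le_total d 0
  · exact (mul_nonpos_of_nonpos_of_nonneg hd0 (by positivity)).trans (by positivity)
  have hmass : d * (A.card * (m / N) ^ 2) ≤ N * m := by
    calc d * (A.card * (m / N) ^ 2) ≤ d * ‖balancedConvolution H (indicatorVector B)‖ ^ 2 :=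
          mul_le_mul_of_nonneg_left (card_mul_sq_le_sq_norm_balancedConvolution hg) hd0
      _ ≤ N * H.card * ‖indicatorVector B‖ ^ 2 := hΓ.mul_sq_norm_balancedConvolution_le H _
      _ = N * m := by rw [sq_norm_indicatorVector, hm, mul_assoc]
  refine le_of_mul_le_mul_right ?_ (by positivity : 0 < m / N ^ 2)
  calc d * (A.card * H.card * B.card) * (m / N ^ 2) = d * (A.card * (m / N) ^ 2) := by
        rw [hm]; ring
    _ ≤ N * m := hmass
    _ = N ^ 3 * (m / N ^ 2) := by field_simp

end IsQuasirandom

/-! ### Growth in `SL(2, F)` -/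

theorem card_specialLinearGroup_mul_card_units {n R : Type*} [Fintype n] [DecidableEq n]
    [Nonempty n] [CommRing R] :
    Nat.card (Matrix.SpecialLinearGroup n R) * Nat.card Rˣ =
      Nat.card (Matrix.GeneralLinearGroup n R) := by
  let det : Matrix.GeneralLinearGroup n R →* Rˣ := Matrix.GeneralLinearGroup.det
  have hker : Set.range (Matrix.SpecialLinearGroup.toGL (n := n) (R := R)) = det.ker :=
    Matrix.SpecialLinearGroup.range_toGL
  have hindex : det.ker.index = Nat.card Rˣ := by
    rw [Subgroup.index_ker, MonoidHom.range_eq_top.2 Matrix.GeneralLinearGroup.det_surjective,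
      Subgroup.card_top]
  rw [← det.ker.card_mul_index, hindex]
  congr 1
  exact Nat.card_congr ((Equiv.ofInjective _ Matrix.SpecialLinearGroup.toGL_injective).trans
    (Equiv.setCongr hker))

lemma pow_le_pow_of_le_div_pow {n N k l : ℕ} (hn : 0 < n) (hlk : l ≤ k + 1)
    (h : (n : ℝ) ≤ (N / n : ℝ) ^ k) : n ^ l ≤ N ^ k := by
  rw [div_pow, le_div_iff₀ (pow_pos (Nat.cast_pos.2 hn) k), ← pow_succ'] at h
  exact (Nat.pow_le_pow_right hn hlk).trans (by exact_mod_cast h)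

lemma sq_mul_le_of_mul_le {G q b h : ℝ} (hq : 0 < q) (hG : q ^ 3 ≤ 2 * G) (hb : 4 ≤ b)
    (hbound : G * b ≤ 2 * G + 4 * q * h) : q ^ 2 * b ≤ 16 * h := by
  have hG0 : 0 < G := by linarith [pow_pos hq 3]
  have habsorb : 4 * G ≤ G * b := by nlinarith
  refine le_of_mul_le_mul_left ?_ hq
  calc q * (q ^ 2 * b) = q ^ 3 * b := by ring
    _ ≤ 2 * G * b := by gcongr
    _ ≤ q * (16 * h) := by linarith

lemma le_pow_of_torus_bound_of_mixing_bound {n q b α : ℝ} (hn : 0 < n) (hq : 0 < q) (hα : 2 ≤ α)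
    (hb : 0 ≤ b) (hcover : n ≤ 2 ^ 13 * α ^ 42 * b ^ 3) (htorus : q ^ 2 * b ≤ 16 * (α * n))
    (hmixing : n ^ 3 ≤ 4 * q ^ 8) : n ≤ α ^ 286 := by
  have hq6 : q ^ 6 ≤ 2 ^ 25 * α ^ 45 * n ^ 2 := by
    refine le_of_mul_le_mul_left ?_ hn
    calc n * q ^ 6 ≤ (2 ^ 13 * α ^ 42 * b ^ 3) * q ^ 6 := by gcongr
      _ = 2 ^ 13 * α ^ 42 * (q ^ 2 * b) ^ 3 := by ring
      _ ≤ 2 ^ 13 * α ^ 42 * (16 * (α * n)) ^ 3 := by gcongr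
      _ = n * (2 ^ 25 * α ^ 45 * n ^ 2) := by ring
  have hq2 : q ^ 2 ≤ α ^ 214 := by
    refine le_of_mul_le_mul_left ?_ (pow_pos hq 16)
    calc q ^ 16 * q ^ 2 = (q ^ 6) ^ 3 := by ring
      _ ≤ (2 ^ 25 * α ^ 45 * n ^ 2) ^ 3 := by gcongr
      _ = 2 ^ 75 * α ^ 135 * (n ^ 3) ^ 2 := by ring
      _ ≤ 2 ^ 75 * α ^ 135 * (4 * q ^ 8) ^ 2 := by gcongr
      _ = q ^ 16 * (2 ^ 79 * α ^ 135) := by ring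
      _ ≤ q ^ 16 * (α ^ 79 * α ^ 135) := by gcongr
      _ = q ^ 16 * α ^ 214 := by ring
  refine le_of_pow_le_pow_left₀ three_ne_zero (by positivity) ?_
  calc n ^ 3 ≤ 4 * q ^ 8 := hmixing
    _ = 2 ^ 2 * (q ^ 2) ^ 4 := by ring
    _ ≤ α ^ 2 * (α ^ 214) ^ 4 := by gcongr
    _ = (α ^ 286) ^ 3 := by ring

namespace SL2

open Matrix MatrixGroups

section Card

variable {F : Type*} [Field F] [Fintype F] [DecidableEq F]

theorem card_eq : Fintype.card SL(2, F) = Fintype.card F * (Fintype.card F ^ 2 - 1) := by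
  set q := Fintype.card F
  have hq : 1 < q := Fintype.one_lt_card
  have hGL := card_specialLinearGroup_mul_card_units (n := Fin 2) (R := F)
  rw [Matrix.card_GL_field, Fin.prod_univ_two, Nat.card_units] at hGL
  simp only [Nat.card_eq_fintype_card, Fin.val_zero, Fin.val_one, pow_zero, pow_one] at hGL
  refine Nat.eq_of_mul_eq_mul_right (Nat.sub_pos_of_lt hq) (hGL.trans ?_)
  calc (q ^ 2 - 1) * (q ^ 2 - q) = (q ^ 2 - 1) * (q * (q - 1)) := by
        rw [Nat.mul_sub_one, sq]
    _ = q * (q ^ 2 - 1) * (q - 1) := by ring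

lemma card_le_card_pow_three : Fintype.card SL(2, F) ≤ Fintype.card F ^ 3 := by
  rw [card_eq, pow_succ' _ 2]
  exact Nat.mul_le_mul_left _ (Nat.sub_le _ _)

lemma card_pow_three_le_two_mul_card : Fintype.card F ^ 3 ≤ 2 * Fintype.card SL(2, F) := by
  have hq : 2 ^ 2 ≤ Fintype.card F ^ 2 := Nat.pow_le_pow_left Fintype.one_lt_card 2
  rw [card_eq, pow_succ' _ 2, mul_left_comm]
  exact Nat.mul_le_mul_left _ (by omega)

end Card

section Growth

variable {F : Type*} [Field F] [DecidableEq F] {H : Finset SL(2, F)}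

lemma card_pow_three_le_of_pow_three_ne_univ [Fintype F]
    (hne : (↑(H ^ 3) : Set SL(2, F)) ≠ Set.univ) :
    (H.card : ℝ) ^ 3 ≤ 4 * (Fintype.card F : ℝ) ^ 8 := by
  obtain ⟨g, hg⟩ := (Set.ne_univ_iff_exists_notMem _).1 hne
  have hq : (2 : ℝ) ≤ Fintype.card F := Nat.cast_le.2 Fintype.one_lt_card
  have hG : (Fintype.card SL(2, F) : ℝ) ≤ (Fintype.card F : ℝ) ^ 3 := by
    exact_mod_cast card_le_card_pow_three (F := F)
  set q : ℝ := (Fintype.card F : ℝ)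
  have hmixing := (isQuasirandom (F := F)).mul_card_mul_card_mul_card_le (A := H) (H := H) (B := H)
    (g := g) (by rwa [← Finset.mem_coe, ← pow_three'])
  refine le_of_mul_le_mul_left ?_ (by positivity : 0 < q)
  calc q * (H.card : ℝ) ^ 3 ≤ 4 * ((q - 1) / 2 * (H.card * H.card * H.card)) := by
        nlinarith [pow_nonneg (Nat.cast_nonneg (α := ℝ) H.card) 3]
    _ ≤ 4 * (q ^ 3) ^ 3 := by gcongr; exact hmixing.trans (by gcongr)
    _ = q * (4 * q ^ 8) := by ring

variable (hsym : ∀ h ∈ H, h⁻¹ ∈ H) (hone : 1 ∈ H) (hgen : Subgroup.closure (H : Set SL(2, F)) = ⊤)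

include hsym hone hgen in
theorem card_le_pow_of_card_pow_three_le [Finite F] (h3 : (3 : F) ≠ 0)
    (hne : (↑(H ^ 3) : Set SL(2, F)) ≠ Set.univ) {α : ℝ} (hα2 : 2 ≤ α)
    (hα : ((H ^ 3).card : ℝ) ≤ α * H.card) : (H.card : ℝ) ≤ α ^ 286 := by
  cases nonempty_fintype F
  have hα1 : 1 ≤ α := by linarith
  obtain hsmall | hbig := le_or_gt (H.card : ℝ) (2 ^ 13 * α ^ 42 * 6 ^ 3)
  · calc (H.card : ℝ) ≤ 2 ^ 13 * α ^ 42 * 6 ^ 3 := hsmall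
      _ ≤ 2 ^ 13 * α ^ 42 * 2 ^ 8 := by gcongr; norm_num
      _ ≤ α ^ 13 * α ^ 42 * α ^ 8 := by gcongr
      _ = α ^ 63 := by ring
      _ ≤ α ^ 286 := pow_le_pow_right₀ hα1 (by norm_num)
  obtain ⟨b, hcover, htorus⟩ :=
    exists_card_le_mul_pow_three_and_card_mul_le h3 hsym hone hgen hα1 hα hbig
  have hb : 6 < (b : ℝ) := by
    refine lt_of_pow_lt_pow_left₀ 3 (Nat.cast_nonneg b) ?_
    exact lt_of_mul_lt_mul_left (hbig.trans_le hcover) (by positivity)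
  have hq : 0 < (Fintype.card F : ℝ) := Nat.cast_pos.2 Fintype.card_pos
  have hH2 : ((H ^ 2).card : ℝ) ≤ α * H.card :=
    (Nat.cast_le.2 (Finset.card_le_card (Finset.pow_subset_pow_right hone (by norm_num)))).trans hα
  refine le_pow_of_torus_bound_of_mixing_bound (Nat.cast_pos.2 (Finset.card_pos.2 ⟨1, hone⟩)) hq hα2
    (by positivity) hcover ?_ (card_pow_three_le_of_pow_three_ne_univ hne)
  have hG : (Fintype.card F : ℝ) ^ 3 ≤ 2 * Fintype.card SL(2, F) := by
    exact_mod_cast card_pow_three_le_two_mul_card (F := F)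
  calc (Fintype.card F : ℝ) ^ 2 * b ≤ 16 * (H ^ 2).card :=
        sq_mul_le_of_mul_le hq hG (by linarith) (by exact_mod_cast htorus)
    _ ≤ 16 * (α * H.card) := by gcongr

end Growth

end SL2

lemma zmod_three_ne_zero_or_card_le_three (n : ℕ) [NeZero n] :
    (3 : ZMod n) ≠ 0 ∨ Fintype.card (ZMod n) ≤ 3 := by
  refine or_iff_not_imp_left.2 fun h ↦ ?_
  rw [ZMod.card]
  exact Nat.le_of_dvd three_pos ((ZMod.natCast_eq_zero_iff 3 n).1 (not_not.1 h))

theorem stmt_0_general {F : Type*} [Field F] [Fintype F] [DecidableEq F]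
    (hF : (3 : F) ≠ 0 ∨ Fintype.card F ≤ 3) {k l : ℕ} (hk : 286 ≤ k) (hlk : l ≤ k + 1)
    {H : Finset (Matrix.SpecialLinearGroup (Fin 2) F)}
    (hsym : ∀ h ∈ H, h⁻¹ ∈ H) (hone : 1 ∈ H)
    (hgen : Subgroup.closure (H : Set (Matrix.SpecialLinearGroup (Fin 2) F)) = ⊤) :
    (↑(H ^ 3) : Set (Matrix.SpecialLinearGroup (Fin 2) F)) = Set.univ ∨
      H.card ^ l ≤ (H ^ 3).card ^ k := by
  refine or_iff_not_imp_left.2 fun hne ↦ ?_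
  have hn : 0 < H.card := Finset.card_pos.2 ⟨1, hone⟩
  have hn' : (0 : ℝ) < H.card := Nat.cast_pos.2 hn
  have hratio : (2 : ℝ) ≤ (H ^ 3).card / H.card := by
    rw [le_div_iff₀ hn']
    exact_mod_cast two_mul_card_le_card_pow_three hsym hone hgen hne
  have hpow : (H.card : ℝ) ≤ ((H ^ 3).card / H.card) ^ 286 := by
    obtain h3 | hF3 := hF
    · exact SL2.card_le_pow_of_card_pow_three_le hsym hone hgen h3 hne hratio
        (div_mul_cancel₀ _ hn'.ne').ge
    · have hsmall : H.card ≤ 2 ^ 5 :=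
        calc H.card ≤ Fintype.card F ^ 3 := H.card_le_univ.trans SL2.card_le_card_pow_three
          _ ≤ 3 ^ 3 := Nat.pow_le_pow_left hF3 3
          _ ≤ 2 ^ 5 := by norm_num
      calc (H.card : ℝ) ≤ 2 ^ 5 := by exact_mod_cast hsmall
        _ ≤ ((H ^ 3).card / H.card) ^ 5 := by gcongr
        _ ≤ _ := pow_le_pow_right₀ (one_le_two.trans hratio) (by norm_num)
  exact pow_le_pow_of_le_div_pow hn hlk
    (hpow.trans (pow_le_pow_right₀ (one_le_two.trans hratio) hk))

/-- **Explicit growth theorem for `SL₂(𝔽_p)` (Helfgott/Kowalski).**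
If `H` is a symmetric generating subset of `SL₂(𝔽_p)` containing `1`, then either
`H·H·H = SL₂(𝔽_p)` or `|H·H·H|^3024 ≥ |H|^3025`. -/
theorem stmt_0 (p : ℕ) (hp : p.Prime)
    (H : Finset (Matrix.SpecialLinearGroup (Fin 2) (ZMod p)))
    (hsym : ∀ h ∈ H, h⁻¹ ∈ H)
    (hone : (1 : Matrix.SpecialLinearGroup (Fin 2) (ZMod p)) ∈ H)
    (hgen : Subgroup.closure (H : Set (Matrix.SpecialLinearGroup (Fin 2) (ZMod p))) = ⊤) :
    (↑(H ^ 3) : Set (Matrix.SpecialLinearGroup (Fin 2) (ZMod p))) = Set.univ ∨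
      H.card ^ 3025 ≤ (H ^ 3 : Finset (Matrix.SpecialLinearGroup (Fin 2) (ZMod p))).card ^ 3024 := by
  have : Fact p.Prime := ⟨hp⟩
  apply stmt_0_general (zmod_three_ne_zero_or_card_le_three p) _ _ hsym hone hgen <;> norm_num
end

section
/- Let p be a prime number and let S be a symmetric generating set of SL₂(𝔽_p). Then there exists a natural number n with (n : ℝ) ≤ 3·(log |SL₂(𝔽_p)|)^3323 such that (S ∪ {1})^(n) = SL₂(𝔽_p); in other words the diameter of the Cayley graph of SL₂(𝔽_p) with respect to S is at most 3·(log |SL₂(𝔽_p)|)^3323. -/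
open Pointwise

/-!
Call `v ∈ SL₂(F)` generic if `tr v ≠ 0` and `(tr v)² ≠ 4`. Its centralizer is a torus: it is
commutative, and each trace is taken at most twice on it.

For a symmetric generating set `A`, at most about `|A ^ r| ^ (2/3)` elements of `A ^ m` have a given
nonzero trace `t` with `t² ≠ 4` (a Larsen–Pink inequality). Hence, by orbit–stabilizer, `A ^ 2` has
at least about `|A| / |A ^ r| ^ (2/3)` elements in the centralizer of any generic `v ∈ A ^ 4`; such
`v` exist because the products of three elements of `A` span the matrices. If `A` does not expand,
there are generic elements among those in the torus. Pivoting, i.e. conjugating them by `A` and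
recapturing the new torus inside `A ^ 2`, then shows that every conjugate of one torus has that
many elements in `A ^ 2`. A generic element lies in the tori of only `O(|F|)` of the conjugates
`g v g⁻¹`, so double counting bounds `|A ^ 2|` below in terms of `|G|`.

Up to constants the outcome is that either `|A ^ r| ≥ |A| ^ (3/2)` or
`|G| / |A ^ r| ≤ (|G| / |A|) ^ (3/5)`. Either way the defect `log |G| - log |A|` loses a constant
factor relative to `log |A|`, so it is bounded after `O(log log |G|)` rounds of `A ↦ A ^ r`.
-/

namespace BabaiSL2

open Matrix Finset
open scoped MatrixGroups

/-! ### Symmetric generating sets -/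

section Group

variable {G : Type*} [Group G] [DecidableEq G]

/-- The growing sets of the argument: finite subsets of a group that contain the identity, are
closed under inversion and generate the whole group. -/
structure IsSymmGenerating (A : Finset G) : Prop where
  one_mem : 1 ∈ A
  inv_eq : A⁻¹ = A
  closure_eq_top : Subgroup.closure (A : Set G) = ⊤

lemma isSymmGenerating_union_one {S : Finset G} (hsymm : ∀ s ∈ S, s⁻¹ ∈ S)
    (hgen : Subgroup.closure (S : Set G) = ⊤) : IsSymmGenerating (S ∪ {1}) where
  one_mem := by simp
  inv_eq := by
    ext x
    have hx : x⁻¹ ∈ S ↔ x ∈ S := ⟨fun h ↦ inv_inv x ▸ hsymm _ h, hsymm x⟩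
    simp [mem_inv', hx]
  closure_eq_top := top_unique <| hgen.ge.trans <| Subgroup.closure_mono <| by simp

namespace IsSymmGenerating

variable {A : Finset G}

lemma pow (hA : IsSymmGenerating A) {n : ℕ} (hn : n ≠ 0) : IsSymmGenerating (A ^ n) where
  one_mem := one_mem_pow hA.one_mem
  inv_eq := by rw [← inv_pow, hA.inv_eq]
  closure_eq_top := by
    rw [coe_pow, Subgroup.closure_pow hA.one_mem hn, hA.closure_eq_top]

lemma inv_mem (hA : IsSymmGenerating A) {x : G} (hx : x ∈ A) : x⁻¹ ∈ A := by
  rwa [← mem_inv', hA.inv_eq]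

lemma pow_subset_pow (hA : IsSymmGenerating A) {m n : ℕ} (hmn : m ≤ n) : A ^ m ⊆ A ^ n :=
  pow_subset_pow_right hA.one_mem hmn

lemma card_pow_mono (hA : IsSymmGenerating A) : Monotone fun n ↦ #(A ^ n) :=
  Finset.Nonempty.card_pow_mono ⟨1, hA.one_mem⟩

lemma induction_mul_left (hA : IsSymmGenerating A) {P : G → Prop} (one : P 1)
    (mul_left : ∀ a ∈ A, ∀ x, P x → P (a * x)) (x : G) : P x := by
  have hx : x ∈ Subgroup.closure (A : Set G) := hA.closure_eq_top ▸ Subgroup.mem_top x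
  induction hx using Subgroup.closure_induction_left with
  | one => exact one
  | mul_left a ha y _ ih => exact mul_left a ha y ih
  | inv_mul_cancel a ha y _ ih => exact mul_left _ (hA.inv_mem ha) y ih

variable [Fintype G]

lemma pow_eq_univ_of_le (hA : IsSymmGenerating A) {m n : ℕ} (hm : A ^ m = univ) (hmn : m ≤ n) :
    A ^ n = univ :=
  univ_subset_iff.1 <| hm ▸ hA.pow_subset_pow hmn

lemma pow_eq_univ_of_pow_succ_subset (hA : IsSymmGenerating A) {n : ℕ}
    (h : A ^ (n + 1) ⊆ A ^ n) : A ^ n = univ :=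
  eq_univ_of_forall <| hA.induction_mul_left (one_mem_pow hA.one_mem) fun _ ha _ hx ↦
    h <| pow_succ' A n ▸ mul_mem_mul ha hx

-- An element `x` of `A ^ (n + 2)` outside `A ^ (n + 1)` has its translate `x * A` disjoint from
-- `A ^ n`.
lemma card_pow_add_card_le (hA : IsSymmGenerating A) {n : ℕ} (h : A ^ (n + 1) ≠ univ) :
    #(A ^ n) + #A ≤ #(A ^ (n + 3)) := by
  obtain ⟨x, hx, hx'⟩ : ∃ x ∈ A ^ (n + 2), x ∉ A ^ (n + 1) :=
    not_subset.1 fun hsub ↦ h (hA.pow_eq_univ_of_pow_succ_subset hsub)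
  have hdisj : Disjoint (A ^ n) ({x} * A) := by
    refine disjoint_left.2 fun y hy hy' ↦ hx' ?_
    obtain ⟨a, ha, rfl⟩ : ∃ a ∈ A, x * a = y := by simpa [mem_mul] using hy'
    simpa [pow_succ] using mul_mem_mul hy (hA.inv_mem ha)
  have hsub : {x} * A ⊆ A ^ (n + 3) :=
    pow_succ A (n + 2) ▸ mul_subset_mul_right (singleton_subset_iff.2 hx)
  calc #(A ^ n) + #A = #(A ^ n ∪ {x} * A) := by
        rw [card_union_of_disjoint hdisj, card_singleton_mul]
    _ ≤ #(A ^ (n + 3)) := card_le_card <| union_subset (hA.pow_subset_pow (by omega)) hsub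

lemma pow_eq_univ_or_mul_card_le (hA : IsSymmGenerating A) (j : ℕ) :
    A ^ (3 * j + 1) = univ ∨ (j + 1) * #A ≤ #(A ^ (3 * j + 1)) := by
  refine or_iff_not_imp_left.2 fun h ↦ ?_
  induction j with
  | zero => simp
  | succ j ih =>
    have hne {m : ℕ} (hm : m ≤ 3 * (j + 1) + 1) : A ^ m ≠ univ :=
      fun hu ↦ h (hA.pow_eq_univ_of_le hu hm)
    calc (j + 1 + 1) * #A = (j + 1) * #A + #A := by ring
      _ ≤ #(A ^ (3 * j + 1)) + #A := by gcongr; exact ih (hne (by omega))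
      _ ≤ #(A ^ (3 * (j + 1) + 1)) := hA.card_pow_add_card_le (hne (by omega))

end IsSymmGenerating

open scoped Classical in
lemma card_filter_conj_eq_le (X : Finset G) (x y : G) :
    #{g ∈ X | g * x * g⁻¹ = y} ≤ #{h ∈ X⁻¹ * X | Commute h x} := by
  obtain hempty | ⟨g₀, hg₀⟩ := ({g ∈ X | g * x * g⁻¹ = y} : Finset G).eq_empty_or_nonempty
  · simp [hempty]
  obtain ⟨hg₀X, hg₀y⟩ := mem_filter.1 hg₀
  refine card_le_card_of_injOn (g₀⁻¹ * ·) (fun g hg ↦ ?_) (mul_right_injective _).injOn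
  obtain ⟨hgX, hgy⟩ := mem_filter.1 hg
  refine mem_filter.2 ⟨mul_mem_mul (inv_mem_inv hg₀X) hgX, ?_⟩
  calc g₀⁻¹ * g * x = g₀⁻¹ * (g * x * g⁻¹) * g := by group
    _ = g₀⁻¹ * (g₀ * x * g₀⁻¹) * g := by rw [hgy, hg₀y]
    _ = x * (g₀⁻¹ * g) := by group

end Group

/-! ### From a growth dichotomy to the diameter -/

section Diameter

-- Either `l` grows by the factor `5 / 4`, or the defect `L - l` shrinks by it.
lemma defect_le_or_mul_defect_le_of_growth_dichotomy {l : ℕ → ℝ} {c L : ℝ} (hmono : Monotone l)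
    (hL : ∀ k, l k ≤ L) (hc : 0 ≤ c) (h0 : 2 * c ≤ l 0)
    (hstep : ∀ k, 3 * l k ≤ c + 2 * l (k + 1) ∨ 2 * L + 3 * l k ≤ c + 5 * l (k + 1)) (k : ℕ) :
    L - l k ≤ c ∨ (5 / 4) ^ k * (L - l k) * l 0 ≤ l k * L := by
  have hl (k) : 2 * c ≤ l k := h0.trans (hmono k.zero_le)
  have hL0 : 0 ≤ L := by linarith [hl 0, hL 0]
  induction k with
  | zero => right; nlinarith [hl 0]
  | succ k ih =>
    have hle : l k ≤ l (k + 1) := hmono k.le_succ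
    refine or_iff_not_imp_left.2 fun hdefect ↦ ?_
    have ih := ih.resolve_left fun h ↦ hdefect (by linarith)
    have hpos : 0 ≤ (5 / 4 : ℝ) ^ k * l 0 :=
      mul_nonneg (by positivity) (by linarith [hl 0])
    rcases hstep k with hgrow | hshrink
    · calc (5 / 4) ^ (k + 1) * (L - l (k + 1)) * l 0
          = 5 / 4 * ((5 / 4) ^ k * l 0 * (L - l (k + 1))) := by ring
        _ ≤ 5 / 4 * ((5 / 4) ^ k * l 0 * (L - l k)) := by gcongr
        _ ≤ 5 / 4 * (l k * L) := by linarith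
        _ = 5 / 4 * l k * L := by ring
        _ ≤ l (k + 1) * L := by gcongr; linarith [hl k]
    · calc (5 / 4) ^ (k + 1) * (L - l (k + 1)) * l 0
          = (5 / 4) ^ k * l 0 * (5 / 4 * (L - l (k + 1))) := by ring
        _ ≤ (5 / 4) ^ k * l 0 * (L - l k) := by gcongr; linarith
        _ ≤ l k * L := by linarith
        _ ≤ l (k + 1) * L := by gcongr

lemma defect_le_of_growth_dichotomy {l : ℕ → ℝ} {c L : ℝ} (hmono : Monotone l)
    (hL : ∀ k, l k ≤ L) (hc : 1 ≤ c) (h0 : 2 * c ≤ l 0)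
    (hstep : ∀ k, 3 * l k ≤ c + 2 * l (k + 1) ∨ 2 * L + 3 * l k ≤ c + 5 * l (k + 1))
    {k : ℕ} (hk : L ^ 2 ≤ (5 / 4) ^ k) : L - l k ≤ c := by
  refine (defect_le_or_mul_defect_le_of_growth_dichotomy hmono hL (by linarith) h0 hstep k).elim
    id fun hdefect ↦ ?_
  have hL1 : 1 ≤ L := by linarith [hL 0]
  have hδ : 0 ≤ L - l k := sub_nonneg.2 (hL k)
  have hle : L ^ 2 * (L - l k) ≤ L ^ 2 * 1 :=
    calc L ^ 2 * (L - l k) ≤ (5 / 4) ^ k * (L - l k) := by gcongr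
      _ ≤ (5 / 4) ^ k * (L - l k) * l 0 := le_mul_of_one_le_right (by positivity) (by linarith)
      _ ≤ l k * L := hdefect
      _ ≤ L * L := by gcongr; exact hL k
      _ = L ^ 2 * 1 := by ring
  exact (le_of_mul_le_mul_left hle (by positivity)).trans hc

variable {G : Type*} [Group G] [Fintype G] [DecidableEq G]

/-- The growth dichotomy with loss `K` in `r` steps: a large symmetric generating set `A` either
expands, `|A ^ r| ≥ K ^ (-1/2) * |A| ^ (3/2)`, or shrinks its defect,
`|G| / |A ^ r| ≤ K ^ (1/5) * (|G| / |A|) ^ (3/5)`. -/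
def HasGrowthDichotomy (G : Type*) [Group G] [Fintype G] [DecidableEq G] (K r : ℕ) : Prop :=
  ∀ A : Finset G, IsSymmGenerating A → K ^ 2 ≤ #A →
    #A ^ 3 ≤ K * #(A ^ r) ^ 2 ∨ Fintype.card G ^ 2 * #A ^ 3 ≤ K * #(A ^ r) ^ 5

namespace HasGrowthDichotomy

variable {A : Finset G} {K r : ℕ}

lemma log_dichotomy (h : HasGrowthDichotomy G K r) (hK : K ≠ 0) (hA : IsSymmGenerating A)
    (hcard : K ^ 2 ≤ #A) :
    3 * Real.log #A ≤ Real.log K + 2 * Real.log #(A ^ r) ∨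
      2 * Real.log (Fintype.card G) + 3 * Real.log #A ≤ Real.log K + 5 * Real.log #(A ^ r) := by
  have hA0 : (#A : ℝ) ≠ 0 := by exact_mod_cast (card_pos.2 ⟨1, hA.one_mem⟩).ne'
  have hAr0 : (#(A ^ r) : ℝ) ≠ 0 := by
    exact_mod_cast (card_pos.2 ⟨1, one_mem_pow hA.one_mem⟩).ne'
  have hG0 : (Fintype.card G : ℝ) ≠ 0 := by exact_mod_cast Fintype.card_ne_zero
  have hK0 : (K : ℝ) ≠ 0 := by exact_mod_cast hK
  refine (h A hA hcard).imp (fun hle ↦ ?_) fun hle ↦ ?_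
  · have := Real.log_le_log (by positivity)
      (show (#A : ℝ) ^ 3 ≤ K * #(A ^ r) ^ 2 by exact_mod_cast hle)
    simpa [Real.log_mul, *] using this
  · have := Real.log_le_log (by positivity)
      (show (Fintype.card G : ℝ) ^ 2 * #A ^ 3 ≤ K * #(A ^ r) ^ 5 by exact_mod_cast hle)
    simpa [Real.log_mul, *] using this

lemma card_le_mul_card_pow (h : HasGrowthDichotomy G K r) (hr : r ≠ 0) (hK : 3 ≤ K)
    (hA : IsSymmGenerating A) (hcard : K ^ 2 ≤ #A) {k : ℕ}
    (hk : Real.log (Fintype.card G) ^ 2 ≤ (5 / 4) ^ k) :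
    Fintype.card G ≤ K * #(A ^ r ^ k) := by
  set L := Real.log (Fintype.card G)
  set c := Real.log K
  set l : ℕ → ℝ := fun j ↦ Real.log #(A ^ r ^ j) with hl
  have hpos (n : ℕ) : 0 < #(A ^ n) := card_pos.2 ⟨1, one_mem_pow hA.one_mem⟩
  have hmono : Monotone l := fun i j hij ↦ Real.log_le_log (by exact_mod_cast hpos _) <| by
    exact_mod_cast hA.card_pow_mono (Nat.pow_le_pow_right (Nat.pos_of_ne_zero hr) hij)
  have hlL (j : ℕ) : l j ≤ L := Real.log_le_log (by exact_mod_cast hpos _) <| by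
    exact_mod_cast card_le_univ _
  have hc : 1 ≤ c := by
    rw [Real.le_log_iff_exp_le (by positivity)]
    exact Real.exp_one_lt_three.le.trans (by exact_mod_cast hK)
  have h0 : 2 * c ≤ l 0 := by
    have := Real.log_le_log (by positivity) (show (K : ℝ) ^ 2 ≤ #A by exact_mod_cast hcard)
    simpa [hl] using this
  have hstep (j : ℕ) : 3 * l j ≤ c + 2 * l (j + 1) ∨ 2 * L + 3 * l j ≤ c + 5 * l (j + 1) := by
    have hcard_j : K ^ 2 ≤ #(A ^ r ^ j) :=
      hcard.trans <| by simpa using hA.card_pow_mono (Nat.one_le_pow j r (Nat.pos_of_ne_zero hr))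
    simpa only [hl, pow_succ, pow_mul] using
      h.log_dichotomy (by omega) (hA.pow (pow_ne_zero j hr)) hcard_j
  have hdefect : L - l k ≤ c := defect_le_of_growth_dichotomy hmono hlL hc h0 hstep hk
  have hle : Real.log (Fintype.card G) ≤ Real.log (K * #(A ^ r ^ k)) := by
    rw [Real.log_mul (by positivity) (by exact_mod_cast (hpos _).ne')]
    linarith
  have := (Real.log_le_log_iff (by exact_mod_cast Fintype.card_pos)
    (by have := hpos (r ^ k); positivity)).1 hle
  exact_mod_cast this

lemma pow_eq_univ (h : HasGrowthDichotomy G K r) (hr : r ≠ 0) (hK : 3 ≤ K)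
    (hA : IsSymmGenerating A) {k : ℕ} (hk : Real.log (Fintype.card G) ^ 2 ≤ (5 / 4) ^ k) :
    A ^ ((3 * K ^ 2 + 1) * r ^ k * (3 * K + 1)) = univ := by
  rcases hA.pow_eq_univ_or_mul_card_le (K ^ 2) with huniv | hcard
  · refine hA.pow_eq_univ_of_le huniv ?_
    rw [mul_assoc]
    exact Nat.le_mul_of_pos_right _ (by positivity)
  have hB : IsSymmGenerating (A ^ (3 * K ^ 2 + 1)) := hA.pow (by omega)
  have hA0 : 1 ≤ #A := card_pos.2 ⟨1, hA.one_mem⟩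
  have hG := h.card_le_mul_card_pow hr hK hB (by nlinarith) hk
  have hC := hB.pow (pow_ne_zero k hr)
  rw [pow_mul, pow_mul]
  refine (hC.pow_eq_univ_or_mul_card_le K).resolve_right fun hgrow ↦ ?_
  have := card_pos.2 ⟨1, hC.one_mem⟩
  have := card_le_univ (((A ^ (3 * K ^ 2 + 1)) ^ r ^ k) ^ (3 * K + 1))
  linarith

end HasGrowthDichotomy

end Diameter

/-! ### Matrices, eigenvectors and generation -/

section Irreducible

lemma mulVec_ext_of_linearIndependent {n F : Type*} [Fintype n] [Field F]
    {a b : Matrix n n F} {v : n → n → F} (hv : LinearIndependent F v)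
    (h : ∀ i, a *ᵥ v i = b *ᵥ v i) : a = b := by
  classical
  have hunit : IsUnit (of v)ᵀ := linearIndependent_cols_iff_isUnit.1 hv
  refine hunit.mul_left_injective ?_
  ext i j
  exact congrFun (h j) i

lemma adjoin_range_specialLinearGroup_eq_top {n F : Type*} [Fintype n] [DecidableEq n]
    [Nontrivial n] [CommRing F] :
    Algebra.adjoin F (Set.range ((↑) : SpecialLinearGroup n F → Matrix n n F)) = ⊤ := by
  set R := Algebra.adjoin F (Set.range ((↑) : SpecialLinearGroup n F → Matrix n n F))
  have off_diag {i j : n} (hij : i ≠ j) (c : F) : single i j c ∈ R := by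
    have := R.sub_mem (Algebra.subset_adjoin ⟨SpecialLinearGroup.transvection hij c, rfl⟩) R.one_mem
    simpa [SpecialLinearGroup.transvection_coe] using this
  refine Algebra.eq_top_iff.2 fun m ↦ ?_
  rw [matrix_eq_sum_single m]
  refine R.sum_mem fun i _ ↦ R.sum_mem fun j _ ↦ ?_
  rcases ne_or_eq i j with hij | rfl
  · exact off_diag hij _
  · obtain ⟨k, hk⟩ := exists_ne i
    simpa using R.mul_mem (off_diag hk.symm (m i i)) (off_diag hk 1)

lemma IsSymmGenerating.adjoin_eq_top {n F : Type*} [Fintype n] [DecidableEq n] [Nontrivial n]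
    [CommRing F] [DecidableEq F] {A : Finset (SpecialLinearGroup n F)} (hA : IsSymmGenerating A) :
    Algebra.adjoin F (SpecialLinearGroup.coeMonoidHom '' (A : Set (SpecialLinearGroup n F))) =
      ⊤ := by
  set R := Algebra.adjoin F (SpecialLinearGroup.coeMonoidHom '' (A : Set (SpecialLinearGroup n F)))
  rw [← top_le_iff, ← adjoin_range_specialLinearGroup_eq_top, Algebra.adjoin_le_iff]
  rintro _ ⟨x, rfl⟩
  exact hA.induction_mul_left (P := fun x ↦ (x : Matrix n n F) ∈ R) R.one_mem
    (fun a ha x hx ↦ R.mul_mem (Algebra.subset_adjoin ⟨a, ha, rfl⟩) hx) x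

variable {n F : Type*} [Fintype n] [DecidableEq n] [Field F]

lemma exists_eq_smul_of_mem_adjoin {S : Set (Matrix n n F)} {v : n → F}
    (hS : ∀ a ∈ S, ∃ μ : F, a *ᵥ v = μ • v) {a : Matrix n n F} (ha : a ∈ Algebra.adjoin F S) :
    ∃ μ : F, a *ᵥ v = μ • v := by
  induction ha using Algebra.adjoin_induction with
  | mem a ha => exact hS a ha
  | algebraMap r => exact ⟨r, by simp [Algebra.algebraMap_eq_smul_one, smul_mulVec]⟩
  | add a b _ _ iha ihb =>
    obtain ⟨⟨μ, hμ⟩, ⟨ν, hν⟩⟩ := And.intro iha ihb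
    exact ⟨μ + ν, by rw [add_mulVec, hμ, hν, add_smul]⟩
  | mul a b _ _ iha ihb =>
    obtain ⟨⟨μ, hμ⟩, ⟨ν, hν⟩⟩ := And.intro iha ihb
    exact ⟨ν * μ, by rw [← mulVec_mulVec, hν, mulVec_smul, hμ, smul_smul]⟩

lemma IsSymmGenerating.exists_linearIndependent_smul [Nontrivial n] [DecidableEq F]
    {A : Finset (SpecialLinearGroup n F)} (hA : IsSymmGenerating A) {v : n → F} (hv : v ≠ 0) :
    ∃ g ∈ A, LinearIndependent F ![v, g • v] := by
  by_contra! hdep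
  have hS : ∀ a ∈ SpecialLinearGroup.coeMonoidHom '' (A : Set (SpecialLinearGroup n F)),
      ∃ μ : F, a *ᵥ v = μ • v := by
    rintro _ ⟨x, hx, rfl⟩
    have := hdep x hx
    rw [LinearIndependent.pair_iff' hv] at this
    push Not at this
    exact this.imp fun μ hμ ↦ hμ.symm
  obtain ⟨i, hi⟩ : ∃ i, v i ≠ 0 := Function.ne_iff.1 hv
  obtain ⟨j, hij⟩ := exists_ne i
  obtain ⟨μ, hμ⟩ := exists_eq_smul_of_mem_adjoin hS (a := single j i 1)
    (hA.adjoin_eq_top ▸ Algebra.mem_top)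
  have hμ0 : μ = 0 := by simpa [single_mulVec_eq, hij, hij.symm, hi] using congrFun hμ i
  simpa [single_mulVec_eq, hμ0, hi] using congrFun hμ j

end Irreducible

section Eigenvector

variable {F : Type*} [Field F]

open scoped Classical in
-- If `A ^ m` has elements `y₁`, `y₂` with `y • v = μ • v` and `g ∈ A` moves the line of `v`, then
-- `y₁ * g * y₂` determines the images of `v` and `g • v` under `y₁`, hence `y₁` and `y₂`.
lemma IsSymmGenerating.card_eigenvector_sq_le [DecidableEq F] {A : Finset SL(2, F)}
    (hA : IsSymmGenerating A) (m : ℕ) {v : Fin 2 → F} (hv : v ≠ 0) (μ : F) :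
    #{x ∈ A ^ m | x • v = μ • v} ^ 2 ≤ #(A ^ (2 * m + 1)) := by
  obtain ⟨g, hg, hindep⟩ := hA.exists_linearIndependent_smul hv
  set Y : Finset SL(2, F) := {x ∈ A ^ m | x • v = μ • v}
  have hY {y} (hy : y ∈ Y) : y ∈ A ^ m ∧ y • v = μ • v := mem_filter.1 hy
  rw [sq, ← card_product]
  refine card_le_card_of_injOn (fun y ↦ y.1 * g * y.2) (fun y hy ↦ ?_) fun y hy z hz hyz ↦ ?_
  · have hy' := mem_product.1 (mem_coe.1 hy)
    rw [show 2 * m + 1 = m + 1 + m by ring, pow_add, pow_succ]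
    exact mul_mem_mul (mul_mem_mul (hY hy'.1).1 hg) (hY hy'.2).1
  · have hy' := mem_product.1 (mem_coe.1 hy)
    have hz' := mem_product.1 (mem_coe.1 hz)
    have hμ : μ ≠ 0 := by
      rintro rfl
      have : y.1 • v = 0 := by simpa using (hY hy'.1).2
      exact hv ((smul_eq_zero_iff_eq y.1).1 this)
    have hgv : y.1 • g • v = z.1 • g • v := by
      have := congrArg (· • v) hyz
      simp only [mul_smul, (hY hy'.2).2, (hY hz'.2).2, smul_comm _ μ v] at this
      exact smul_right_injective _ hμ this
    have heq : y.1 = z.1 := Subtype.ext <| mulVec_ext_of_linearIndependent hindep <|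
      Fin.forall_fin_two.2 ⟨(hY hy'.1).2.trans (hY hz'.1).2.symm, hgv⟩
    refine Prod.ext heq (mul_left_cancel (a := z.1 * g) ?_)
    simpa only [heq] using hyz

/-- Two elements of `SL(2, F)` share an eigenvector when they have a common eigenline over `F`,
that is, lie in a common Borel subgroup. -/
def SharesEigenvector (a b : SL(2, F)) : Prop :=
  ∃ v : Fin 2 → F, v ≠ 0 ∧ (∃ μ : F, a • v = μ • v) ∧ ∃ ν : F, b • v = ν • v

lemma isRoot_charpoly_of_mulVec_eq_smul {n : Type*} [Fintype n] [DecidableEq n]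
    {a : Matrix n n F} {v : n → F} {μ : F} (hv : v ≠ 0) (h : a *ᵥ v = μ • v) :
    a.charpoly.IsRoot μ := by
  rw [Polynomial.IsRoot, eval_charpoly]
  exact exists_mulVec_eq_zero_iff.1 ⟨v, hv, by simp [sub_mulVec, h]⟩

lemma not_linearIndependent_of_smul_eq_smul {a : SL(2, F)} {u v : Fin 2 → F} {μ : F}
    (ha : a.1.trace ^ 2 ≠ 4) (hu : a • u = μ • u) (hv : a • v = μ • v) :
    ¬ LinearIndependent F ![u, v] := by
  intro hindep
  have hscalar : a.1 = μ • 1 := mulVec_ext_of_linearIndependent hindep <| by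
    simpa only [Fin.forall_fin_two, smul_mulVec, one_mulVec] using ⟨hu, hv⟩
  have hdet : μ ^ 2 = 1 := by simpa [hscalar] using a.2
  refine ha ?_
  rw [hscalar, trace_smul, trace_one, Fintype.card_fin, smul_eq_mul, mul_pow, hdet]
  norm_num

open scoped Classical in
lemma card_sharesEigenvector_le [DecidableEq F] {X : Finset SL(2, F)} {a : SL(2, F)} {β : ℕ}
    (ha : a.1.trace ^ 2 ≠ 4) (hX : ∀ x ∈ X, x.1.trace = a.1.trace)
    (hβ : ∀ v : Fin 2 → F, v ≠ 0 → ∀ μ : F, #{x ∈ X | x • v = μ • v} ≤ β) :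
    #{b ∈ X | SharesEigenvector a b} ≤ 4 * β := by
  set R := a.1.charpoly.roots.toFinset
  have hR : #R ≤ 2 := a.1.charpoly.roots.toFinset_card_le.trans <|
    (Polynomial.card_roots' _).trans_eq <| by simp [charpoly_natDegree_eq_dim]
  have mem_R {x : SL(2, F)} (hx : x.1.trace = a.1.trace) {v : Fin 2 → F} (hv : v ≠ 0) {μ : F}
      (h : x • v = μ • v) : μ ∈ R := by
    have hchar : x.1.charpoly = a.1.charpoly := by simp [charpoly_fin_two, hx]
    simpa [R, (charpoly_monic a.1).ne_zero, hchar] using isRoot_charpoly_of_mulVec_eq_smul hv h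
  have hpair (μ ν : F) :
      #{b ∈ X | ∃ v : Fin 2 → F, v ≠ 0 ∧ a • v = μ • v ∧ b • v = ν • v} ≤ β := by
    by_cases hμ : ∃ v : Fin 2 → F, v ≠ 0 ∧ a • v = μ • v
    · obtain ⟨v, hv, hav⟩ := hμ
      refine (card_le_card ?_).trans (hβ v hv ν)
      refine monotone_filter_right X fun b _ ↦ ?_
      rintro ⟨w, hw, haw, hbw⟩
      have := not_linearIndependent_of_smul_eq_smul ha haw hav
      rw [LinearIndependent.pair_iff' hw] at this
      push Not at this
      obtain ⟨c, rfl⟩ := this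
      rw [smul_comm, hbw, smul_comm]
    · rw [filter_false_of_mem fun b _ ⟨v, hv, hav, _⟩ ↦ hμ ⟨v, hv, hav⟩]
      simp
  have hcover : {b ∈ X | SharesEigenvector a b} ⊆ (R ×ˢ R).biUnion fun p ↦
      {b ∈ X | ∃ v : Fin 2 → F, v ≠ 0 ∧ a • v = p.1 • v ∧ b • v = p.2 • v} := by
    intro b hb
    obtain ⟨hbX, v, hv, ⟨μ, hμ⟩, ν, hν⟩ := mem_filter.1 hb
    exact mem_biUnion.2 ⟨(μ, ν), mem_product.2 ⟨mem_R rfl hv hμ, mem_R (hX b hbX) hv hν⟩,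
      mem_filter.2 ⟨hbX, v, hv, hμ, hν⟩⟩
  calc #{b ∈ X | SharesEigenvector a b} ≤ #(R ×ˢ R) * β :=
        (card_le_card hcover).trans <| card_biUnion_le_card_mul _ _ _ fun p _ ↦ hpair p.1 p.2
    _ ≤ 4 * β := by rw [card_product]; gcongr; nlinarith

end Eigenvector

/-! ### Elements fixing three traces -/

section TraceFibre

variable {F : Type*} [Field F]

lemma coe_add_coe_inv (x : SL(2, F)) : x.1 + x⁻¹.1 = x.1.trace • 1 := by
  rw [Matrix.SpecialLinearGroup.coe_inv, adjugate_fin_two]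
  ext i j
  fin_cases i <;> fin_cases j <;> simp [trace_fin_two, add_comm]

lemma trace_mul_mul_self_left (g x : SL(2, F)) :
    (g * (g * x)).1.trace = g.1.trace * (g * x).1.trace - x.1.trace := by
  have : (g * (g * x)).1 + x.1 = g.1.trace • (g * x).1 := by
    calc (g * (g * x)).1 + x.1 = (g * (g * x)).1 + (g⁻¹ * (g * x)).1 := by rw [inv_mul_cancel_left]
      _ = (g.1 + g⁻¹.1) * (g * x).1 := (add_mul _ _ _).symm
      _ = g.1.trace • (g * x).1 := by rw [coe_add_coe_inv, smul_mul_assoc, one_mul]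
  have htr := congrArg trace this
  rw [trace_add, trace_smul, smul_eq_mul] at htr
  exact eq_sub_of_add_eq htr

lemma det_smul_one_add_smul_fin_two (r s : F) (m : Matrix (Fin 2) (Fin 2) F) :
    (r • 1 + s • m).det = r ^ 2 + r * s * m.trace + s ^ 2 * m.det := by
  simp [det_fin_two, trace_fin_two]
  ring

lemma det_coe_sub_one (g : SL(2, F)) : (g.1 - 1).det = 2 - g.1.trace := by
  have hg : g.1 - 1 = (-1 : F) • 1 + (1 : F) • g.1 := by module
  rw [hg, det_smul_one_add_smul_fin_two, g.2]
  ring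

lemma eq_one_or_eq_or_trace_eq_two {g h : SL(2, F)} {s : F}
    (hs : h.1 - 1 = s • (g.1 - 1)) : h = 1 ∨ h = g ∨ g.1.trace = 2 := by
  have hh : h.1 = (1 : F) • 1 + s • (g.1 - 1) := by rw [← hs, one_smul, add_sub_cancel]
  have hprod : s * ((1 - s) * (g.1.trace - 2)) = 0 := by
    have hdet := congrArg det hh
    rw [h.2, det_smul_one_add_smul_fin_two, det_coe_sub_one, trace_sub, trace_one, Fintype.card_fin]
      at hdet
    linear_combination -hdet
  rcases mul_eq_zero.1 hprod with rfl | hprod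
  · exact .inl <| Subtype.ext <| by simpa using hh
  rcases mul_eq_zero.1 hprod with hs1 | htr
  · obtain rfl : s = 1 := (sub_eq_zero.1 hs1).symm
    exact .inr <| .inl <| Subtype.ext <| by simpa using hh
  · exact .inr <| .inr <| sub_eq_zero.1 htr

lemma exists_eq_smul_of_mul_eq_mul {u v : Fin 2 → F} (hv : v ≠ 0) (h : u 0 * v 1 = u 1 * v 0) :
    ∃ c : F, u = c • v := by
  rcases eq_or_ne (v 0) 0 with h0 | h0
  · have h1 : v 1 ≠ 0 := fun h1 ↦ hv <| funext <| Fin.forall_fin_two.2 ⟨h0, h1⟩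
    refine ⟨u 1 / v 1, funext <| Fin.forall_fin_two.2 ⟨?_, ?_⟩⟩ <;> simp_all
  · refine ⟨u 0 / v 0, funext <| Fin.forall_fin_two.2 ⟨?_, ?_⟩⟩
    · simp [h0]
    · simp only [Pi.smul_apply, smul_eq_mul]; field_simp; linear_combination -h

-- Up to a scalar `n` is the map `w ↦ (v ∧ w) v`, so `tr (n * a)` is a multiple of `v ∧ a v`.
lemma exists_mulVec_eq_smul_of_trace_mul_eq_zero {n : Matrix (Fin 2) (Fin 2) F} (hn : n ≠ 0)
    (htr : n.trace = 0) {v : Fin 2 → F} (hv : v ≠ 0) (hnv : n *ᵥ v = 0)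
    {a : Matrix (Fin 2) (Fin 2) F} (ha : (n * a).trace = 0) : ∃ c : F, a *ᵥ v = c • v := by
  refine exists_eq_smul_of_mul_eq_mul hv ?_
  have h0 := congrFun hnv 0
  have h1 := congrFun hnv 1
  simp only [trace_fin_two, Matrix.mul_apply, Fin.sum_univ_two, mulVec, dotProduct,
    Pi.zero_apply] at htr ha h0 h1 ⊢
  by_contra hne
  set w := (a 0 0 * v 0 + a 0 1 * v 1) * v 1 - (a 1 0 * v 0 + a 1 1 * v 1) * v 0 with hw
  have hw0 : w ≠ 0 := sub_ne_zero.2 hne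
  have h00 : w * n 0 0 = 0 := by
    linear_combination v 0 * v 1 * ha - a 0 1 * v 1 * h1 - a 1 0 * v 0 * h0
      + (a 0 1 * v 1 ^ 2 - v 0 * v 1 * a 1 1) * htr
  have h01 : w * n 0 1 = 0 := by
    linear_combination -v 0 ^ 2 * ha + a 0 1 * v 0 * h1
      + (a 0 0 * v 0 + a 0 1 * v 1 - a 1 1 * v 0) * h0
      + (v 0 ^ 2 * a 1 1 - a 0 1 * v 0 * v 1) * htr
  have h10 : w * n 1 0 = 0 := by
    linear_combination v 1 ^ 2 * ha + (a 0 0 * v 1 - a 1 0 * v 0 - a 1 1 * v 1) * h1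
      - a 1 0 * v 1 * h0 - ((a 0 0 * v 1 - a 1 0 * v 0 - a 1 1 * v 1) * v 1 + v 1 ^ 2 * a 1 1) * htr
  have h11 : n 1 1 = - n 0 0 := by linear_combination htr
  refine hn ?_
  ext i j
  fin_cases i <;> fin_cases j <;> simp_all

lemma exists_eigenvector_of_trace_eq_two {g : SL(2, F)} (hg : g ≠ 1) (htr : g.1.trace = 2) :
    ∃ v : Fin 2 → F, v ≠ 0 ∧
      ∀ a : SL(2, F), (g * a).1.trace = a.1.trace → ∃ c : F, a • v = c • v := by
  have hdet : (g.1 - 1).det = 0 := by rw [det_coe_sub_one, htr, sub_self]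
  obtain ⟨v, hv, hgv⟩ := exists_mulVec_eq_zero_iff.2 hdet
  refine ⟨v, hv, fun a ha ↦ exists_mulVec_eq_smul_of_trace_mul_eq_zero
    (n := g.1 - 1) ?_ ?_ hv hgv ?_⟩
  · exact fun h ↦ hg <| Subtype.ext <| sub_eq_zero.1 h
  · rw [trace_sub, htr, trace_one, Fintype.card_fin]
    norm_num
  · rw [sub_mul, one_mul, trace_sub, sub_eq_zero]
    exact ha

lemma mem_span_range_of_trace_mul_eq_zero {n ι κ : Type*} [Fintype n] [Fintype ι] [Fintype κ]
    {u : ι → Matrix n n F} {m : κ → Matrix n n F} (hu : LinearIndependent F u)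
    (hm : LinearIndependent F m)
    (hcard : Fintype.card ι + Fintype.card κ = Fintype.card n * Fintype.card n)
    (hum : ∀ i j, (u i * m j).trace = 0) {c : Matrix n n F} (hc : ∀ i, (u i * c).trace = 0) :
    c ∈ Submodule.span F (Set.range m) := by
  classical
  let B : LinearMap.BilinForm F (Matrix n n F) :=
    (LinearMap.mul F (Matrix n n F)).compr₂ (traceLinearMap n F F)
  have hB : B.Nondegenerate :=
    ⟨fun x hx ↦ ext_iff_trace_mul_right.2 fun y ↦ by simpa [B] using hx y,
      fun y hy ↦ ext_iff_trace_mul_left.2 fun x ↦ by simpa [B] using hy x⟩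
  set W := Submodule.span F (Set.range u)
  have mem_orthogonal {x : Matrix n n F} (hx : ∀ i, (u i * x).trace = 0) :
      x ∈ B.orthogonal W := by
    have hW : W ≤ LinearMap.ker (B.flip x) :=
      Submodule.span_le.2 <| Set.range_subset_iff.2 hx
    exact LinearMap.BilinForm.mem_orthogonal_iff.2 fun _ hy ↦ hW hy
  have hle : Submodule.span F (Set.range m) ≤ B.orthogonal W :=
    Submodule.span_le.2 <| Set.range_subset_iff.2 fun j ↦ mem_orthogonal fun i ↦ hum i j
  refine Submodule.eq_of_le_of_finrank_eq hle ?_ ▸ mem_orthogonal hc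
  rw [LinearMap.BilinForm.finrank_orthogonal hB, finrank_span_eq_card hu, finrank_span_eq_card hm,
    Module.finrank_matrix, Module.finrank_self, mul_one]
  omega

lemma sharesEigenvector_of_trace_mul_inv_eq_two {a b : SL(2, F)} (hab : a ≠ b)
    (htr : b.1.trace = a.1.trace) (h : (a * b⁻¹).1.trace = 2) : SharesEigenvector a b := by
  obtain ⟨v, hv, heigen⟩ :=
    exists_eigenvector_of_trace_eq_two (g := a * b⁻¹) (by rwa [Ne, mul_inv_eq_one]) h
  refine ⟨v, hv, heigen a ?_, heigen b ?_⟩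
  · have := trace_mul_mul_self_left (a * b⁻¹) b
    rw [inv_mul_cancel_right, h, htr] at this
    rw [this]
    ring
  · rw [inv_mul_cancel_right, htr]

lemma linearIndependent_pair_of_trace_eq {n : Type*} [Fintype n] {a b : Matrix n n F}
    (ha : a.trace ≠ 0) (hb : b.trace = a.trace) (hab : a ≠ b) : LinearIndependent F ![a, b] := by
  refine (LinearIndependent.pair_iff' fun h0 ↦ ha <| by rw [h0, trace_zero]).2 fun s hs ↦ ?_
  have hs1 : s = 1 := by simpa [ha, hb] using congrArg trace hs
  exact hab <| by rw [← hs, hs1, one_smul]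

lemma exists_mul_inv_sub_one_eq_smul {a b c : SL(2, F)} (ha : a.1.trace ≠ 0)
    (hb : b.1.trace = a.1.trace) (hc : c.1.trace = a.1.trace)
    (hspan : c.1 ∈ Submodule.span F (Set.range ![a.1, b.1])) :
    ∃ s : F, (c * b⁻¹).1 - 1 = s • ((a * b⁻¹).1 - 1) := by
  rw [range_cons, range_cons, range_empty, Set.union_empty, ← Set.insert_eq,
    Submodule.mem_span_pair] at hspan
  obtain ⟨s, r, hsr⟩ := hspan
  have hsum : s + r = 1 := by
    have := congrArg trace hsr
    rw [trace_add, trace_smul, trace_smul, hb, hc, ← add_smul, smul_eq_mul] at this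
    exact mul_right_cancel₀ ha (by rw [this, one_mul])
  obtain rfl : r = 1 - s := eq_sub_of_add_eq' hsum
  have hb1 : b.1 * b⁻¹.1 = 1 := congrArg Subtype.val (mul_inv_cancel b)
  refine ⟨s, ?_⟩
  rw [Matrix.SpecialLinearGroup.coe_mul, Matrix.SpecialLinearGroup.coe_mul, ← hsr, add_mul,
    smul_mul_assoc, smul_mul_assoc, hb1]
  module

-- If `g - 1` and `h - 1` were independent, their orthogonal complement for the trace form would be
-- the plane spanned by `a` and `b`, and `c` would lie on the line through `a` and `b`.
lemma eq_one_or_eq_one_or_eq_of_trace_mul_eq {a b c g h : SL(2, F)} (ha : a.1.trace ≠ 0)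
    (hb : b.1.trace = a.1.trace) (hc : c.1.trace = a.1.trace) (hab : a ≠ b) (hac : a ≠ c)
    (hbc : b ≠ c) (hshare : ¬ SharesEigenvector a b)
    (hg : ∀ x ∈ ({a, b, c} : Set SL(2, F)), (g * x).1.trace = x.1.trace)
    (hh : ∀ x ∈ ({a, b, c} : Set SL(2, F)), (h * x).1.trace = x.1.trace) :
    g = 1 ∨ h = 1 ∨ g = h := by
  by_contra! ⟨hg1, hh1, hgh⟩
  have trace_g : g.1.trace ≠ 2 := fun htr ↦ by
    obtain ⟨v, hv, heigen⟩ := exists_eigenvector_of_trace_eq_two hg1 htr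
    exact hshare ⟨v, hv, heigen a (hg a (by simp)), heigen b (hg b (by simp))⟩
  have hgh_indep : LinearIndependent F ![g.1 - 1, h.1 - 1] := by
    refine (LinearIndependent.pair_iff' fun h0 ↦ hg1 <| Subtype.ext <| sub_eq_zero.1 h0).2
      fun s hs ↦ ?_
    rcases eq_one_or_eq_or_trace_eq_two hs.symm with h1 | h1 | h1
    exacts [hh1 h1, hgh h1.symm, trace_g h1]
  have horth {x : SL(2, F)} (hx : x ∈ ({a, b, c} : Set SL(2, F))) (i : Fin 2) :
      (![g.1 - 1, h.1 - 1] i * x.1).trace = 0 := by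
    revert i
    simp only [Fin.forall_fin_two, cons_val_zero, cons_val_one, sub_mul, one_mul, trace_sub,
      sub_eq_zero]
    exact ⟨hg x hx, hh x hx⟩
  have hspan : c.1 ∈ Submodule.span F (Set.range ![a.1, b.1]) :=
    mem_span_range_of_trace_mul_eq_zero hgh_indep
      (linearIndependent_pair_of_trace_eq ha hb fun h ↦ hab (Subtype.ext h)) (by simp)
      (fun i ↦ Fin.forall_fin_two.2 ⟨horth (by simp) i, horth (by simp) i⟩) (horth (by simp))
  obtain ⟨s, hs⟩ := exists_mul_inv_sub_one_eq_smul ha hb hc hspan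
  rcases eq_one_or_eq_or_trace_eq_two hs with h1 | h1 | h1
  · exact hbc (mul_inv_eq_one.1 h1).symm
  · exact hac (mul_right_cancel h1).symm
  · exact hshare (sharesEigenvector_of_trace_mul_inv_eq_two hab hb h1)

end TraceFibre

/-! ### Conjugacy classes in powers of a generating set -/

section LarsenPink

variable {F : Type*} [Field F] [DecidableEq F] {X : Finset SL(2, F)} {t : F}

open scoped Classical in
lemma card_general_triples_le (ht0 : t ≠ 0) (hX : ∀ x ∈ X, x.1.trace = t) :
    #{q ∈ (X ×ˢ X) ×ˢ X | q.1.1 ≠ q.1.2 ∧ q.1.1 ≠ q.2 ∧ q.1.2 ≠ q.2 ∧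
      ¬ SharesEigenvector q.1.1 q.1.2} ≤ 2 * #(X⁻¹ * X) ^ 2 := by
  rw [sq, ← card_product]
  refine card_le_mul_card_image_of_maps_to
    (f := fun q ↦ (q.1.1⁻¹ * q.1.2, q.1.1⁻¹ * q.2)) (fun q hq ↦ ?_) 2 fun y _ ↦ ?_
  · simp only [mem_filter, mem_product] at hq
    exact mem_product.2 ⟨mul_mem_mul (inv_mem_inv hq.1.1.1) hq.1.1.2,
      mul_mem_mul (inv_mem_inv hq.1.1.1) hq.1.2⟩
  by_contra! hcard
  obtain ⟨⟨⟨a, b⟩, c⟩, hq, ⟨⟨a₁, b₁⟩, c₁⟩, hq₁, ⟨⟨a₂, b₂⟩, c₂⟩, hq₂, hne₁, hne₂, hne₁₂⟩ :=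
    two_lt_card.1 hcard
  simp only [mem_filter, mem_product] at hq hq₁ hq₂
  obtain ⟨⟨⟨⟨ha, hb⟩, hc⟩, hab, hac, hbc, hshare⟩, rfl⟩ := hq
  have translate {a' b' c' : SL(2, F)} (ha' : a' ∈ X) (hb' : b' ∈ X) (hc' : c' ∈ X)
      (h : (a'⁻¹ * b', a'⁻¹ * c') = (a⁻¹ * b, a⁻¹ * c)) :
      ∃ g, ((a', b'), c') = ((g * a, g * b), g * c) ∧
        ∀ x ∈ ({a, b, c} : Set SL(2, F)), (g * x).1.trace = x.1.trace := by
    obtain ⟨hab', hac'⟩ := Prod.mk.inj h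
    have hga : a' * a⁻¹ * a = a' := inv_mul_cancel_right a' a
    have hgb : a' * a⁻¹ * b = b' := by rw [mul_assoc, ← hab', mul_inv_cancel_left]
    have hgc : a' * a⁻¹ * c = c' := by rw [mul_assoc, ← hac', mul_inv_cancel_left]
    refine ⟨a' * a⁻¹, by rw [hga, hgb, hgc], ?_⟩
    rintro x (rfl | rfl | rfl)
    exacts [by rw [hga, hX _ ha', hX _ ha], by rw [hgb, hX _ hb', hX _ hb],
      by rw [hgc, hX _ hc', hX _ hc]]
  obtain ⟨g, hg, hgtr⟩ := translate hq₁.1.1.1.1 hq₁.1.1.1.2 hq₁.1.1.2 hq₁.2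
  obtain ⟨h, hh, hhtr⟩ := translate hq₂.1.1.1.1 hq₂.1.1.1.2 hq₂.1.1.2 hq₂.2
  rcases eq_one_or_eq_one_or_eq_of_trace_mul_eq (by rwa [hX a ha]) (by rw [hX b hb, hX a ha])
    (by rw [hX c hc, hX a ha]) hab hac hbc hshare hgtr hhtr with rfl | rfl | rfl
  · simp [hg] at hne₁
  · simp [hh] at hne₂
  · exact hne₁₂ (hg.trans hh.symm)

open scoped Classical in
lemma card_pow_three_le {β : ℕ} (ht0 : t ≠ 0) (ht4 : t ^ 2 ≠ 4) (hX : ∀ x ∈ X, x.1.trace = t)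
    (hβ : ∀ v : Fin 2 → F, v ≠ 0 → ∀ μ : F, #{x ∈ X | x • v = μ • v} ≤ β) :
    #X ^ 3 ≤ 2 * #(X⁻¹ * X) ^ 2 + (4 * β + 3) * #X ^ 2 := by
  set general := {q ∈ (X ×ˢ X) ×ˢ X | q.1.1 ≠ q.1.2 ∧ q.1.1 ≠ q.2 ∧ q.1.2 ≠ q.2 ∧
      ¬ SharesEigenvector q.1.1 q.1.2}
  set special := {p ∈ X ×ˢ X | p.1 = p.2 ∨ SharesEigenvector p.1 p.2}
  have hspecial : #special ≤ (4 * β + 1) * #X := by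
    refine card_le_mul_card_image_of_maps_to (f := Prod.fst)
      (fun p hp ↦ (mem_product.1 (mem_filter.1 hp).1).1) _ fun a ha ↦ ?_
    have hsub : {p ∈ special | p.1 = a} ⊆ {a} ×ˢ ({b ∈ X | SharesEigenvector a b} ∪ {a}) := by
      intro p hp
      simp only [special, mem_filter, mem_product] at hp
      obtain ⟨⟨⟨-, hp2⟩, hp⟩, rfl⟩ := hp
      rcases hp with hp | hp <;> simp [Prod.ext_iff, hp2, hp]
    refine (card_le_card hsub).trans ?_
    rw [card_product, card_singleton, one_mul]
    refine (card_union_le _ _).trans (add_le_add_left ?_ _)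
    exact card_sharesEigenvector_le (by rwa [hX a ha]) (fun x hx ↦ by rw [hX x hx, hX a ha]) hβ
  have hcover : (X ×ˢ X) ×ˢ X ⊆ general ∪ ((X ×ˢ X).image (fun p ↦ (p, p.1)) ∪
      (X ×ˢ X).image (fun p ↦ (p, p.2)) ∪ special ×ˢ X) := by
    rintro ⟨⟨a, b⟩, c⟩ hq
    simp only [mem_product, general, special, mem_union, mem_filter, mem_image, Prod.exists,
      Prod.mk.injEq] at hq ⊢
    grind
  calc #X ^ 3 = #((X ×ˢ X) ×ˢ X) := by rw [card_product, card_product]; ring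
    _ ≤ #general + (#(X ×ˢ X) + #(X ×ˢ X) + #special * #X) := by
      refine (card_le_card hcover).trans <| (card_union_le _ _).trans ?_
      refine Nat.add_le_add_left ((card_union_le _ _).trans ?_) _
      refine Nat.add_le_add ((card_union_le _ _).trans ?_) (card_product _ _).le
      exact Nat.add_le_add card_image_le card_image_le
    _ ≤ 2 * #(X⁻¹ * X) ^ 2 + (#X * #X + #X * #X + (4 * β + 1) * #X * #X) := by
      rw [card_product]
      gcongr
      exact card_general_triples_le ht0 hX
    _ = 2 * #(X⁻¹ * X) ^ 2 + (4 * β + 3) * #X ^ 2 := by ring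

theorem IsSymmGenerating.card_trace_eq_pow_three_le {A : Finset SL(2, F)}
    (hA : IsSymmGenerating A) (m : ℕ) (ht0 : t ≠ 0) (ht4 : t ^ 2 ≠ 4) :
    #{x ∈ A ^ m | x.1.trace = t} ^ 3 ≤ 2 ^ 12 * #(A ^ (2 * m + 1)) ^ 2 := by
  set X := {x ∈ A ^ m | x.1.trace = t}
  set N := #(A ^ (2 * m + 1))
  set β := Nat.sqrt N
  have hN : 1 ≤ N := card_pos.2 ⟨1, one_mem_pow hA.one_mem⟩
  have hβN : β ^ 2 ≤ N := Nat.sqrt_le' N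
  have hβ1 : 1 ≤ β := Nat.le_sqrt'.2 (by simpa using hN)
  have hXA : X⁻¹ * X ⊆ A ^ (2 * m + 1) := by
    refine Subset.trans (mul_subset_mul (inv_subset_inv (filter_subset _ _)) (filter_subset _ _)) ?_
    rw [← inv_pow, hA.inv_eq, ← pow_add]
    exact hA.pow_subset_pow (by omega)
  have heigen (v : Fin 2 → F) (hv : v ≠ 0) (μ : F) : #{x ∈ X | x • v = μ • v} ≤ β := by
    refine Nat.le_sqrt'.2 (le_trans ?_ (hA.card_eigenvector_sq_le m hv μ))
    gcongr
    exact filter_subset _ _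
  have hcount : #X ^ 3 ≤ 2 * N ^ 2 + (4 * β + 3) * #X ^ 2 :=
    (card_pow_three_le ht0 ht4 (fun x hx ↦ (mem_filter.1 hx).2) heigen).trans <| by
      gcongr
      exact card_le_card hXA
  rcases le_total (14 * β) #X with hlarge | hsmall
  · have : 2 * ((4 * β + 3) * #X ^ 2) ≤ #X ^ 3 := by
      calc 2 * ((4 * β + 3) * #X ^ 2) = (8 * β + 6) * #X ^ 2 := by ring
        _ ≤ #X * #X ^ 2 := by gcongr; omega
        _ = #X ^ 3 := by ring
    omega
  · calc #X ^ 3 ≤ (14 * β) ^ 3 := by gcongr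
      _ = 2744 * β ^ 3 * 1 := by ring
      _ ≤ 2 ^ 12 * β ^ 3 * β := by gcongr; norm_num
      _ = 2 ^ 12 * (β ^ 2) ^ 2 := by ring
      _ ≤ 2 ^ 12 * N ^ 2 := by gcongr

end LarsenPink

/-! ### Centralizers of generic elements -/

section Centralizer

variable {F : Type*} [Field F] {v : SL(2, F)}

lemma exists_linearIndependent_mulVec (hv : v.1.trace ^ 2 ≠ 4) :
    ∃ u : Fin 2 → F, LinearIndependent F ![u, v.1 *ᵥ u] := by
  by_contra! hdep
  obtain ⟨μ, hμ⟩ := (toLin' v.1).exists_eq_smul_id_of_forall_notLinearIndependent hdep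
  have hsmul (u : Fin 2 → F) : v • u = μ • u := congrArg (· u) hμ
  exact not_linearIndependent_of_smul_eq_smul hv (hsmul (Pi.single 0 1)) (hsmul (Pi.single 1 1)) <|
    LinearIndependent.pair_iff.2 fun s t hst ↦
      ⟨by simpa using congrFun hst 0, by simpa using congrFun hst 1⟩

lemma exists_eq_smul_one_add_smul_of_commute (hv : v.1.trace ^ 2 ≠ 4)
    {a : Matrix (Fin 2) (Fin 2) F} (ha : Commute a v.1) : ∃ r s : F, a = r • 1 + s • v.1 := by
  obtain ⟨u, hu⟩ := exists_linearIndependent_mulVec hv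
  obtain ⟨r, s, hrs⟩ : ∃ r s : F, r • u + s • v.1 *ᵥ u = a *ᵥ u := by
    have htop := hu.span_eq_top_of_card_eq_finrank' (by simp)
    have hmem : a *ᵥ u ∈ Submodule.span F (Set.range ![u, v.1 *ᵥ u]) := htop ▸ Submodule.mem_top
    rwa [range_cons, range_cons, range_empty, Set.union_empty, ← Set.insert_eq,
      Submodule.mem_span_pair] at hmem
  have hu0 : a *ᵥ u = (r • 1 + s • v.1) *ᵥ u := by
    rw [← hrs, add_mulVec, smul_mulVec, smul_mulVec, one_mulVec]
  refine ⟨r, s, mulVec_ext_of_linearIndependent hu <| Fin.forall_fin_two.2 ⟨hu0, ?_⟩⟩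
  have hcomm : Commute (r • 1 + s • v.1) v.1 :=
    ((Commute.one_left _).smul_left r).add_left ((Commute.refl _).smul_left s)
  simp only [cons_val_one, cons_val_zero, mulVec_mulVec, ha.eq, hcomm.eq]
  rw [← mulVec_mulVec, ← mulVec_mulVec, hu0]

lemma commute_coe {x y : SL(2, F)} (h : Commute x y) : Commute x.1 y.1 := congrArg Subtype.val h

lemma commute_of_commute_of_commute (hv : v.1.trace ^ 2 ≠ 4) {x y : SL(2, F)} (hx : Commute x v)
    (hy : Commute y v) : Commute x y := by
  obtain ⟨r, s, hrs⟩ := exists_eq_smul_one_add_smul_of_commute hv (commute_coe hy)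
  refine Subtype.ext (?_ : Commute x.1 y.1)
  rw [hrs]
  exact ((Commute.one_right _).smul_right r).add_right ((commute_coe hx).smul_right s)

lemma eq_zero_of_commute_of_trace_eq_zero (hv : v.1.trace ^ 2 ≠ 4)
    {a : Matrix (Fin 2) (Fin 2) F} (ha : Commute a v.1) (htr : a.trace = 0) (hdet : a.det = 0) :
    a = 0 := by
  obtain ⟨r, s, rfl⟩ := exists_eq_smul_one_add_smul_of_commute hv ha
  have htr' : r * 2 + s * v.1.trace = 0 := by simpa using htr
  rw [det_smul_one_add_smul_fin_two, v.2] at hdet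
  have hs : s = 0 := by
    have : s ^ 2 * (v.1.trace ^ 2 - 4) = 0 := by
      linear_combination -4 * hdet + (2 * r + s * v.1.trace) * htr'
    simpa [sub_eq_zero, hv] using this
  have hr : r = 0 := by simpa [hs] using hdet
  rw [hr, hs, zero_smul, zero_smul, add_zero]

-- `(y - z) * (y - z⁻¹) = 0`, and the centralizer of `v` has no nonzero nilpotents.
lemma eq_or_eq_inv_of_commute (hv : v.1.trace ^ 2 ≠ 4) {y z : SL(2, F)} (hy : Commute y v)
    (hz : Commute z v) (htr : y.1.trace = z.1.trace) : y = z ∨ y = z⁻¹ := by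
  have hprod : (y.1 - z.1) * (y.1 - z⁻¹.1) = 0 := by
    have hyz : z.1 * y.1 = y.1 * z.1 :=
      (commute_coe (commute_of_commute_of_commute hv hz hy)).eq
    have hyy : y.1 * y⁻¹.1 = 1 := congrArg Subtype.val (mul_inv_cancel y)
    have hzz : z.1 * z⁻¹.1 = 1 := congrArg Subtype.val (mul_inv_cancel z)
    calc (y.1 - z.1) * (y.1 - z⁻¹.1) = y.1 * y.1 + z.1 * z⁻¹.1 - y.1 * (z.1 + z⁻¹.1) := by
          rw [sub_mul, mul_sub, mul_sub, mul_add, hyz]; abel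
      _ = y.1 * y.1 + y.1 * y⁻¹.1 - y.1 * (y.1 + y⁻¹.1) := by
          rw [coe_add_coe_inv, coe_add_coe_inv, htr, hyy, hzz]
      _ = 0 := by rw [mul_add, sub_self]
  have eq_of_det {w : SL(2, F)} (hw : Commute w v) (hwtr : w.1.trace = y.1.trace)
      (hdet : (y.1 - w.1).det = 0) : y = w :=
    Subtype.ext <| sub_eq_zero.1 <| eq_zero_of_commute_of_trace_eq_zero hv
      ((commute_coe hy).sub_left (commute_coe hw)) (by rw [trace_sub, hwtr, sub_self]) hdet
  have hinv : z⁻¹.1.trace = y.1.trace := by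
    rw [htr, Matrix.SpecialLinearGroup.coe_inv, adjugate_fin_two, trace_fin_two, trace_fin_two]
    exact add_comm _ _
  refine (mul_eq_zero.1 ?_).imp (eq_of_det hz htr.symm) (eq_of_det hz.inv_left hinv)
  rw [← det_mul, hprod, det_zero]

open scoped Classical in
lemma card_commute_trace_eq_le [DecidableEq F] (hv : v.1.trace ^ 2 ≠ 4) (X : Finset SL(2, F))
    (s : F) :
    #{y ∈ X | Commute y v ∧ y.1.trace = s} ≤ 2 := by
  obtain hempty | ⟨z, hz⟩ :=
    ({y ∈ X | Commute y v ∧ y.1.trace = s} : Finset SL(2, F)).eq_empty_or_nonempty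
  · simp [hempty]
  obtain ⟨-, hzv, rfl⟩ := mem_filter.1 hz
  refine (card_le_card fun y hy ↦ ?_).trans (card_le_two (a := z) (b := z⁻¹))
  obtain ⟨-, hyv, htr⟩ := mem_filter.1 hy
  simpa using eq_or_eq_inv_of_commute hv hyv hzv htr

open scoped Classical in
lemma card_commute_le [Fintype F] (hv : v.1.trace ^ 2 ≠ 4) (X : Finset SL(2, F)) :
    #{y ∈ X | Commute y v} ≤ 2 * Fintype.card F := by
  refine card_le_mul_card_image_of_maps_to (f := fun y ↦ y.1.trace) (t := univ)
    (fun _ _ ↦ mem_univ _) 2 fun s _ ↦ ?_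
  rw [filter_filter]
  exact card_commute_trace_eq_le hv X s

lemma trace_coe_conj (g x : SL(2, F)) : (g * x * g⁻¹).1.trace = x.1.trace := by
  rw [Matrix.SpecialLinearGroup.coe_mul, trace_mul_comm, ← Matrix.SpecialLinearGroup.coe_mul,
    inv_mul_cancel_left]

open scoped Classical in
lemma card_commute_conj_le [Fintype F] (hv : v.1.trace ^ 2 ≠ 4) {x : SL(2, F)}
    (hx : x.1.trace ^ 2 ≠ 4) (X : Finset SL(2, F)) :
    #{g ∈ X | Commute (g * v * g⁻¹) x} ≤ 4 * Fintype.card F := by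
  set Y : Finset SL(2, F) := {y | Commute y x ∧ y.1.trace = v.1.trace}
  calc #{g ∈ X | Commute (g * v * g⁻¹) x} ≤ 2 * Fintype.card F * #Y := by
        refine card_le_mul_card_image_of_maps_to (f := fun g ↦ g * v * g⁻¹) (fun g hg ↦ ?_) _
          fun y _ ↦ ?_
        · exact mem_filter.2 ⟨mem_univ _, (mem_filter.1 hg).2, trace_coe_conj g v⟩
        · exact (card_filter_conj_eq_le _ v y).trans (card_commute_le hv _)
    _ ≤ 2 * Fintype.card F * 2 := by gcongr; exact card_commute_trace_eq_le hx univ _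
    _ = 4 * Fintype.card F := by ring

/-- A generic element: semisimple and regular, with nonzero trace. The trace condition is what the
bound on conjugacy classes requires. -/
def IsGeneric (x : SL(2, F)) : Prop := x.1.trace ≠ 0 ∧ x.1.trace ^ 2 ≠ 4

lemma trace_mem_of_not_isGeneric [DecidableEq F] {x : SL(2, F)} (hx : ¬ IsGeneric x) :
    x.1.trace ∈ ({0, 2, -2} : Finset F) := by
  simp only [IsGeneric, not_and_or, not_not] at hx
  rw [show (4 : F) = 2 ^ 2 by norm_num, sq_eq_sq_iff_eq_or_eq_neg] at hx
  simpa using hx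

open scoped Classical in
lemma card_commute_le_card_isGeneric_add (hv : v.1.trace ^ 2 ≠ 4) (X : Finset SL(2, F)) :
    #{y ∈ X | Commute y v} ≤ #{y ∈ X | Commute y v ∧ IsGeneric y} + 6 := by
  have hbad : #{y ∈ X | Commute y v ∧ ¬ IsGeneric y} ≤ 2 * #({0, 2, -2} : Finset F) := by
    refine card_le_mul_card_image_of_maps_to (f := fun y ↦ y.1.trace)
      (fun y hy ↦ trace_mem_of_not_isGeneric (mem_filter.1 hy).2.2) 2 fun s _ ↦ ?_
    refine (card_le_card fun y hy ↦ ?_).trans (card_commute_trace_eq_le hv X s)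
    simp only [mem_filter] at hy ⊢
    exact ⟨hy.1.1, hy.1.2.1, hy.2⟩
  have hsplit := card_filter_add_card_filter_not (s := {y ∈ X | Commute y v}) IsGeneric
  rw [filter_filter, filter_filter] at hsplit
  have := card_le_three (a := (0 : F)) (b := 2) (c := -2)
  omega

open scoped Classical in
lemma IsSymmGenerating.card_pow_three_le_mul [DecidableEq F] {A : Finset SL(2, F)}
    (hA : IsSymmGenerating A) (hv : IsGeneric v) (hvA : v ∈ A ^ 4) :
    #A ^ 3 ≤ #{y ∈ A ^ 2 | Commute y v} ^ 3 * (2 ^ 12 * #(A ^ 13) ^ 2) := by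
  have hconj : #A ≤ #{y ∈ A ^ 2 | Commute y v} * #{x ∈ A ^ 6 | x.1.trace = v.1.trace} := by
    refine card_le_mul_card_image_of_maps_to (f := fun g ↦ g * v * g⁻¹) (fun g hg ↦ ?_) _
      fun y _ ↦ ?_
    · refine mem_filter.2 ⟨?_, trace_coe_conj g v⟩
      rw [show 6 = 1 + 4 + 1 from rfl, pow_succ, pow_add, pow_one]
      exact mul_mem_mul (mul_mem_mul hg hvA) (hA.inv_mem hg)
    · simpa only [hA.inv_eq, ← sq] using card_filter_conj_eq_le A v y
  calc #A ^ 3 ≤ (#{y ∈ A ^ 2 | Commute y v} * #{x ∈ A ^ 6 | x.1.trace = v.1.trace}) ^ 3 := by gcongr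
    _ ≤ #{y ∈ A ^ 2 | Commute y v} ^ 3 * (2 ^ 12 * #(A ^ 13) ^ 2) := by
      rw [mul_pow]
      gcongr
      exact hA.card_trace_eq_pow_three_le 6 hv.1 hv.2

lemma card_pow_three_le_card_specialLinearGroup [Fintype F] [DecidableEq F] :
    Fintype.card F ^ 3 ≤ 2 * Fintype.card SL(2, F) := by
  let f : Fˣ × F × F → SL(2, F) := fun p ↦
    ⟨!![(p.1 : F), p.2.1; p.2.2, (1 + p.2.1 * p.2.2) * (p.1⁻¹ : Fˣ)], by
      rw [det_fin_two_of, mul_left_comm, Units.mul_inv]; ring⟩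
  have hf : Function.Injective f := by
    rintro ⟨a, b, c⟩ ⟨a', b', c'⟩ h
    have entry (i j : Fin 2) := congrFun₂ (congrArg Subtype.val h) i j
    exact Prod.ext (Units.ext (entry 0 0)) (Prod.ext (entry 0 1) (entry 1 0))
  have hcard := Fintype.card_le_of_injective f hf
  rw [Fintype.card_prod, Fintype.card_prod, Fintype.card_units] at hcard
  have hF : 1 < Fintype.card F := Fintype.one_lt_card
  calc Fintype.card F ^ 3 = Fintype.card F * (Fintype.card F * Fintype.card F) := by ring
    _ ≤ 2 * (Fintype.card F - 1) * (Fintype.card F * Fintype.card F) := by gcongr; omega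
    _ ≤ 2 * Fintype.card SL(2, F) := by rw [mul_assoc]; gcongr

end Centralizer

/-! ### Escape from the non-generic elements -/

section Escape

section AlgebraPowers

variable {K R : Type*} [Field K] [Ring R] [Algebra K R] {W : Submodule K R}

lemma pow_eq_top_of_pow_succ_eq_pow (hone : 1 ≤ W) (hadjoin : Algebra.adjoin K (W : Set R) = ⊤)
    {m : ℕ} (hm : W ^ (m + 1) = W ^ m) : W ^ m = ⊤ := by
  refine Submodule.eq_top_iff'.2 fun x ↦ ?_
  have hx : x ∈ Algebra.adjoin K (W : Set R) := hadjoin ▸ Algebra.mem_top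
  suffices ∀ y ∈ W ^ m, y * x ∈ W ^ m by
    simpa using this 1 (Submodule.one_le.1 (one_le_pow_of_one_le' hone m))
  induction hx using Algebra.adjoin_induction with
  | mem w hw =>
    intro y hy
    rw [← hm, pow_succ]
    exact Submodule.mul_mem_mul hy hw
  | algebraMap r =>
    intro y hy
    rw [← Algebra.commutes, ← Algebra.smul_def]
    exact Submodule.smul_mem _ r hy
  | add a b _ _ ha hb => exact fun y hy ↦ mul_add y a b ▸ add_mem (ha y hy) (hb y hy)
  | mul a b _ _ ha hb => exact fun y hy ↦ mul_assoc y a b ▸ hb _ (ha y hy)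

lemma pow_eq_top_of_adjoin_eq_top [FiniteDimensional K R] (hone : 1 ≤ W)
    (hadjoin : Algebra.adjoin K (W : Set R) = ⊤) {n : ℕ} (hn : Module.finrank K R ≤ n + 1) :
    W ^ n = ⊤ := by
  nontriviality R
  have hrank (m : ℕ) : m + 1 ≤ Module.finrank K ↥(W ^ m) ∨ W ^ m = ⊤ := by
    induction m with
    | zero =>
      refine .inl <| Submodule.one_le_finrank_iff.2 <| (Submodule.ne_bot_iff _).2 ?_
      exact ⟨1, Submodule.one_le.1 (pow_zero W).ge, one_ne_zero⟩
    | succ m ih =>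
      rcases eq_or_ne (W ^ (m + 1)) (W ^ m) with heq | hne
      · exact .inr (heq ▸ pow_eq_top_of_pow_succ_eq_pow hone hadjoin heq)
      · have hlt : W ^ m < W ^ (m + 1) := (le_mul_of_one_le_right' hone).lt_of_ne hne.symm
        have hlt' := Submodule.finrank_lt_finrank_of_lt hlt
        exact .inl <| (ih.resolve_right hlt.ne_top).trans_lt hlt'
  exact (hrank n).elim (fun h ↦ Submodule.eq_top_of_finrank_eq <|
    (Submodule.finrank_le _).antisymm (hn.trans h)) id

end AlgebraPowers

lemma card_le_card_pow_of_trace_mul_mem {n F : Type*} [Fintype n] [Field F]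
    {s : Set (Matrix n n F)} (hs : Submodule.span F s = ⊤) {X : Finset (Matrix n n F)}
    {T : Finset F} (hT : ∀ a ∈ s, ∀ x ∈ X, (a * x).trace ∈ T) :
    #X ≤ #T ^ (Fintype.card n ^ 2) := by
  classical
  set b := Module.Basis.ofSpan hs.ge
  have hb (i) : b i ∈ s := Module.Basis.ofSpan_subset hs.ge (Set.mem_range_self i)
  have := Module.Finite.finite_basis b
  cases nonempty_fintype ((linearIndepOn_empty F id).extend (Set.empty_subset s))
  calc #X ≤ #(Fintype.piFinset fun _ ↦ T) := by
        refine card_le_card_of_injOn (fun x i ↦ (b i * x).trace)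
          (fun x hx ↦ Fintype.mem_piFinset.2 fun i ↦ hT _ (hb i) x hx) fun x _ y _ hxy ↦ ?_
        refine Matrix.ext_iff_trace_mul_left.2 fun a ↦ ?_
        have hfun : (traceLinearMap n F F).comp (LinearMap.mulRight F x) =
            (traceLinearMap n F F).comp (LinearMap.mulRight F y) := b.ext fun i ↦ congrFun hxy i
        exact congrArg (· a) hfun
    _ = #T ^ (Fintype.card n ^ 2) := by
      rw [Fintype.card_piFinset, prod_const, card_univ, ← Module.finrank_eq_card_basis b,
        Module.finrank_matrix, Module.finrank_self, mul_one, ← sq]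

lemma IsSymmGenerating.span_pow_eq_top {n F : Type*} [Fintype n] [DecidableEq n] [Nontrivial n]
    [Field F] [DecidableEq F] {A : Finset (SpecialLinearGroup n F)} (hA : IsSymmGenerating A)
    {k : ℕ} (hk : Fintype.card n ^ 2 ≤ k + 1) :
    Submodule.span F (SpecialLinearGroup.coeMonoidHom ''
      ((A ^ k : Finset (SpecialLinearGroup n F)) : Set (SpecialLinearGroup n F))) = ⊤ := by
  rw [coe_pow, Set.image_pow, ← Submodule.span_pow]
  refine pow_eq_top_of_adjoin_eq_top ?_ ?_ (by simpa [Module.finrank_matrix, ← sq] using hk)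
  · exact Submodule.one_le.2 <| Submodule.subset_span ⟨1, hA.one_mem, map_one _⟩
  · rw [Algebra.adjoin_span, hA.adjoin_eq_top]

theorem IsSymmGenerating.exists_isGeneric {F : Type*} [Field F] [DecidableEq F]
    {A : Finset SL(2, F)} (hA : IsSymmGenerating A) (hcard : 3 ^ 4 < #A) :
    ∃ v ∈ A ^ 4, IsGeneric v := by
  by_contra! hnot
  have hle : #(A.map ⟨_, SpecialLinearGroup.coeMonoidHom_injective⟩) ≤
      #({0, 2, -2} : Finset F) ^ (Fintype.card (Fin 2) ^ 2) := by
    refine card_le_card_pow_of_trace_mul_mem (hA.span_pow_eq_top (k := 3) (by simp)) ?_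
    simp only [Set.forall_mem_image, mem_map, Function.Embedding.coeFn_mk, forall_exists_index,
      and_imp, forall_apply_eq_imp_iff₂, ← map_mul]
    exact fun y hy x hx ↦ trace_mem_of_not_isGeneric (hnot _ (pow_succ A 3 ▸ mul_mem_mul hy hx))
  rw [card_map, Fintype.card_fin] at hle
  exact hcard.not_ge <| hle.trans <| Nat.pow_le_pow_left card_le_three 4

end Escape

/-! ### Growth -/

section Growth

variable {F : Type*} [Field F] [DecidableEq F] {A : Finset SL(2, F)} {v : SL(2, F)}

namespace IsSymmGenerating

open scoped Classical in
lemma card_commute_le_two_mul_card_isGeneric (hA : IsSymmGenerating A)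
    (hsmall : 2 ^ 23 * #(A ^ 13) ^ 2 < #A ^ 3) (hv : IsGeneric v) (hvA : v ∈ A ^ 4) :
    #{y ∈ A ^ 2 | Commute y v} ≤ 2 * #{y ∈ A ^ 2 | Commute y v ∧ IsGeneric y} := by
  have hlarge : 12 < #{y ∈ A ^ 2 | Commute y v} := by
    by_contra! hle
    refine hsmall.not_ge ?_
    calc #A ^ 3 ≤ 12 ^ 3 * (2 ^ 12 * #(A ^ 13) ^ 2) :=
          (hA.card_pow_three_le_mul hv hvA).trans (by gcongr)
      _ ≤ 2 ^ 23 * #(A ^ 13) ^ 2 := by rw [← mul_assoc]; gcongr; norm_num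
  have := card_commute_le_card_isGeneric_add hv.2 (A ^ 2)
  omega

lemma exists_isGeneric_commute (hA : IsSymmGenerating A)
    (hsmall : 2 ^ 23 * #(A ^ 13) ^ 2 < #A ^ 3) (hv : IsGeneric v) (hvA : v ∈ A ^ 4) :
    ∃ w ∈ A ^ 2, IsGeneric w ∧ Commute w v := by
  classical
  have hone : 0 < #{y ∈ A ^ 2 | Commute y v} :=
    card_pos.2 ⟨1, mem_filter.2 ⟨one_mem_pow hA.one_mem, Commute.one_left v⟩⟩
  have := hA.card_commute_le_two_mul_card_isGeneric hsmall hv hvA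
  obtain ⟨w, hw⟩ := card_pos.1 (show 0 < #{y ∈ A ^ 2 | Commute y v ∧ IsGeneric y} by omega)
  obtain ⟨hwA, hwv, hwg⟩ := mem_filter.1 hw
  exact ⟨w, hwA, hwg, hwv⟩

-- The pivoting argument: if `w ∈ A ^ 2` lies in the torus of `x * v * x⁻¹`, then the torus of
-- `a * w * a⁻¹ ∈ A ^ 4` is that of `(a * x) * v * (a * x)⁻¹`.
lemma exists_isGeneric_commute_conj (hA : IsSymmGenerating A)
    (hsmall : 2 ^ 23 * #(A ^ 13) ^ 2 < #A ^ 3) (hv : IsGeneric v) (hvA : v ∈ A ^ 4)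
    (g : SL(2, F)) : ∃ w ∈ A ^ 2, IsGeneric w ∧ Commute w (g * v * g⁻¹) := by
  induction g using hA.induction_mul_left with
  | one => simpa using hA.exists_isGeneric_commute hsmall hv hvA
  | mul_left a ha x ih =>
    obtain ⟨w, hwA, hw, hwx⟩ := ih
    have hwa : IsGeneric (a * w * a⁻¹) := by rwa [IsGeneric, trace_coe_conj]
    have hwaA : a * w * a⁻¹ ∈ A ^ 4 := by
      rw [show 4 = 1 + 2 + 1 from rfl, pow_succ, pow_add, pow_one]
      exact mul_mem_mul (mul_mem_mul ha hwA) (hA.inv_mem ha)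
    obtain ⟨u, huA, hu, huw⟩ := hA.exists_isGeneric_commute hsmall hwa hwaA
    refine ⟨u, huA, hu, commute_of_commute_of_commute hwa.2 huw ?_⟩
    rw [show a * x * v * (a * x)⁻¹ = a * (x * v * x⁻¹) * a⁻¹ by group]
    exact (Commute.conj_iff a).2 hwx.symm

open scoped Classical in
lemma card_pow_three_le_card_commute_conj (hA : IsSymmGenerating A)
    (hsmall : 2 ^ 23 * #(A ^ 13) ^ 2 < #A ^ 3) (hv : IsGeneric v) (hvA : v ∈ A ^ 4)
    (g : SL(2, F)) :
    #A ^ 3 ≤ (2 * #{y ∈ A ^ 2 | Commute y (g * v * g⁻¹) ∧ IsGeneric y}) ^ 3 *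
      (2 ^ 12 * #(A ^ 13) ^ 2) := by
  obtain ⟨w, hwA, hw, hwv⟩ := hA.exists_isGeneric_commute_conj hsmall hv hvA g
  have hwA' : w ∈ A ^ 4 := hA.pow_subset_pow (by norm_num) hwA
  refine (hA.card_pow_three_le_mul hw hwA').trans ?_
  gcongr
  refine (hA.card_commute_le_two_mul_card_isGeneric hsmall hw hwA').trans ?_
  gcongr with y
  exact fun hyw ↦ commute_of_commute_of_commute hw.2 hyw hwv.symm

end IsSymmGenerating

variable [Fintype F]

-- Count the pairs `(g, y)` with `y` generic in the torus of `g * v * g⁻¹`.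
open scoped Classical in
lemma card_mul_le_of_forall_le_card_commute_conj (hv : v.1.trace ^ 2 ≠ 4) (X : Finset SL(2, F))
    {M : ℕ} (hM : ∀ g, M ≤ #{y ∈ X | Commute y (g * v * g⁻¹) ∧ IsGeneric y}) :
    Fintype.card SL(2, F) * M ≤ #X * (4 * Fintype.card F) := by
  calc Fintype.card SL(2, F) * M
      ≤ ∑ g : SL(2, F), #{y ∈ X | Commute y (g * v * g⁻¹) ∧ IsGeneric y} :=
        card_nsmul_le_sum univ _ M fun g _ ↦ hM g
    _ = ∑ y ∈ X, #{g : SL(2, F) | Commute y (g * v * g⁻¹) ∧ IsGeneric y} :=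
        sum_card_bipartiteAbove_eq_sum_card_bipartiteBelow _
    _ ≤ #X * (4 * Fintype.card F) := by
      refine sum_le_card_nsmul X _ _ fun y _ ↦ ?_
      by_cases hy : IsGeneric y
      · simpa only [hy, and_true, Commute.symm_iff (a := y)] using card_commute_conj_le hv hy.2 univ
      · simp [hy]

open scoped Classical in
lemma card_sq_mul_pow_three_le (hv : v.1.trace ^ 2 ≠ 4) (X : Finset SL(2, F)) {M : ℕ}
    (hM : ∀ g, M ≤ #{y ∈ X | Commute y (g * v * g⁻¹) ∧ IsGeneric y}) :
    Fintype.card SL(2, F) ^ 2 * M ^ 3 ≤ 2 ^ 7 * #X ^ 3 := by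
  have hGM := card_mul_le_of_forall_le_card_commute_conj hv X hM
  set G := Fintype.card SL(2, F)
  refine Nat.le_of_mul_le_mul_left ?_ (Fintype.card_pos : 0 < G)
  calc G * (G ^ 2 * M ^ 3) = (G * M) ^ 3 := by ring
    _ ≤ (#X * (4 * Fintype.card F)) ^ 3 := by gcongr
    _ = 64 * #X ^ 3 * Fintype.card F ^ 3 := by ring
    _ ≤ 64 * #X ^ 3 * (2 * G) := by gcongr; exact card_pow_three_le_card_specialLinearGroup
    _ = G * (2 ^ 7 * #X ^ 3) := by ring

theorem hasGrowthDichotomy_specialLinearGroup : HasGrowthDichotomy SL(2, F) (2 ^ 23) 13 := by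
  classical
  intro A hA hcard
  refine (le_or_gt _ _).imp_right fun hsmall ↦ ?_
  obtain ⟨v, hvA, hv⟩ := hA.exists_isGeneric (lt_of_lt_of_le (by norm_num) hcard)
  obtain ⟨g, -, hg⟩ := exists_min_image univ
    (fun g ↦ #{y ∈ A ^ 2 | Commute y (g * v * g⁻¹) ∧ IsGeneric y}) univ_nonempty
  have hlower := hA.card_pow_three_le_card_commute_conj hsmall hv hvA g
  have hupper := card_sq_mul_pow_three_le hv.2 (A ^ 2) fun h ↦ hg h (mem_univ h)
  set M := #{y ∈ A ^ 2 | Commute y (g * v * g⁻¹) ∧ IsGeneric y}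
  calc Fintype.card SL(2, F) ^ 2 * #A ^ 3
      ≤ Fintype.card SL(2, F) ^ 2 * ((2 * M) ^ 3 * (2 ^ 12 * #(A ^ 13) ^ 2)) := by gcongr
    _ = 2 ^ 15 * #(A ^ 13) ^ 2 * (Fintype.card SL(2, F) ^ 2 * M ^ 3) := by ring
    _ ≤ 2 ^ 15 * #(A ^ 13) ^ 2 * (2 ^ 7 * #(A ^ 2) ^ 3) := Nat.mul_le_mul_left _ hupper
    _ ≤ 2 ^ 15 * #(A ^ 13) ^ 2 * (2 ^ 7 * #(A ^ 13) ^ 3) := by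
      gcongr 2 ^ 15 * #(A ^ 13) ^ 2 * (2 ^ 7 * ?_ ^ 3)
      exact hA.card_pow_mono (by norm_num)
    _ = 2 ^ 22 * #(A ^ 13) ^ 5 := by ring
    _ ≤ 2 ^ 23 * #(A ^ 13) ^ 5 := Nat.mul_le_mul_right _ (by norm_num)

end Growth

/-! ### Diameter bounds -/

section DiameterBound

lemma exists_sq_le_pow_and_pow_le {L : ℝ} (hL : 1 ≤ L) :
    ∃ k : ℕ, L ^ 2 ≤ (5 / 4) ^ k ∧ 13 ^ k ≤ 2 ^ 4 * L ^ 24 := by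
  obtain ⟨k, hk, hk'⟩ := exists_nat_pow_near (one_le_pow₀ hL : 1 ≤ L ^ 2)
    (by norm_num : (1 : ℝ) < 5 / 4)
  refine ⟨k + 1, hk'.le, ?_⟩
  calc (13 : ℝ) ^ (k + 1) = 13 * 13 ^ k := by ring
    _ ≤ 2 ^ 4 * ((5 / 4) ^ 12) ^ k := by gcongr <;> norm_num
    _ = 2 ^ 4 * ((5 / 4) ^ k) ^ 12 := by rw [pow_right_comm]
    _ ≤ 2 ^ 4 * (L ^ 2) ^ 12 := by gcongr
    _ = 2 ^ 4 * L ^ 24 := by ring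

lemma two_pow_mul_pow_le_three_mul_pow {L : ℝ} (hL : 5 / 4 ≤ L) :
    2 ^ 77 * L ^ 24 ≤ 3 * L ^ 3323 := by
  have h2 : 2 ≤ L ^ 4 := calc
    (2 : ℝ) ≤ (5 / 4) ^ 4 := by norm_num
    _ ≤ L ^ 4 := by gcongr
  calc 2 ^ 77 * L ^ 24 ≤ (L ^ 4) ^ 77 * L ^ 24 := by gcongr
    _ = L ^ 332 := by ring
    _ ≤ L ^ 3323 := pow_le_pow_right₀ (by linarith) (by norm_num)
    _ ≤ 3 * L ^ 3323 := le_mul_of_one_le_left (by positivity) (by norm_num)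

lemma five_fourths_le_log_card_specialLinearGroup {F : Type*} [Field F] [Fintype F]
    [DecidableEq F] : 5 / 4 ≤ Real.log (Fintype.card SL(2, F)) := by
  have hF : 2 ^ 3 ≤ Fintype.card F ^ 3 := Nat.pow_le_pow_left Fintype.one_lt_card 3
  have hG : 2 ^ 2 ≤ Fintype.card SL(2, F) := by
    have := card_pow_three_le_card_specialLinearGroup (F := F)
    omega
  calc (5 / 4 : ℝ) ≤ 2 * Real.log 2 := by linarith [Real.log_two_gt_d9]
    _ = Real.log (2 ^ 2) := by simp
    _ ≤ Real.log (Fintype.card SL(2, F)) := Real.log_le_log (by norm_num) (by exact_mod_cast hG)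

end DiameterBound

end BabaiSL2

open BabaiSL2 in
theorem stmt_1_general {F : Type*} [Field F] [Fintype F] [DecidableEq F]
    (S : Finset (Matrix.SpecialLinearGroup (Fin 2) F)) (hsym : ∀ s ∈ S, s⁻¹ ∈ S)
    (hgen : Subgroup.closure (S : Set (Matrix.SpecialLinearGroup (Fin 2) F)) = ⊤) :
    ∃ n : ℕ,
      (n : ℝ) ≤ 2 ^ 77 * Real.log (Fintype.card (Matrix.SpecialLinearGroup (Fin 2) F)) ^ 24 ∧
      (S ∪ {1}) ^ n = Finset.univ := by
  have hlog : 1 ≤ Real.log (Fintype.card (Matrix.SpecialLinearGroup (Fin 2) F)) :=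
    le_trans (by norm_num) five_fourths_le_log_card_specialLinearGroup
  obtain ⟨k, hk, hk13⟩ := exists_sq_le_pow_and_pow_le hlog
  refine ⟨_, ?_, hasGrowthDichotomy_specialLinearGroup.pow_eq_univ (by norm_num) (by norm_num)
    (isSymmGenerating_union_one hsym hgen) hk⟩
  push_cast
  linarith [pow_pos (by norm_num : (0 : ℝ) < 13) k]

/-- **Explicit Babai conjecture for `SL₂(𝔽_p)` (Corollary `cor-babai`).** For any prime `p` and
any symmetric generating set `S` of `SL₂(𝔽_p)`, the diameter of the Cayley graph
`C(SL₂(𝔽_p), S)` is at most `3·(log |SL₂(𝔽_p)|)^3323`: there is `n` with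
`(n : ℝ) ≤ 3·(log |SL₂(𝔽_p)|)^3323` and `(S ∪ {1})^(n) = SL₂(𝔽_p)`. -/
theorem stmt_1 (p : ℕ) [Fact p.Prime]
    (S : Finset (Matrix.SpecialLinearGroup (Fin 2) (ZMod p)))
    (hsym : ∀ s ∈ S, s⁻¹ ∈ S)
    (hgen : Subgroup.closure (S : Set (Matrix.SpecialLinearGroup (Fin 2) (ZMod p))) = ⊤) :
    ∃ n : ℕ,
      (n : ℝ) ≤ 3 * Real.log (Fintype.card (Matrix.SpecialLinearGroup (Fin 2) (ZMod p))) ^ 3323 ∧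
      ((S ∪ {1}) ^ n : Finset (Matrix.SpecialLinearGroup (Fin 2) (ZMod p))) = Finset.univ := by
  obtain ⟨n, hn, huniv⟩ := stmt_1_general S hsym hgen
  exact ⟨n, hn.trans (BabaiSL2.two_pow_mul_pow_le_three_mul_pow
    BabaiSL2.five_fourths_le_log_card_specialLinearGroup), huniv⟩
end
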